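/- arXiv:2212.01919 — 2 statements merged into one kernel-verified Lean document; each statement's English description precedes it below -/
import Mathlib

section
/- A germ of an analytic variety X ⊆ (ℂ^n,0) is quasihomogeneous in an appropriate coordinate system (i.e. there exist a holomorphic coordinate system and positive rational weights w ∈ ℚ_+^n such that the ideal I_X admits a system of generators each of which is quasihomogeneous with respect to w) if and only if there exists a logarithmic vector field δ ∈ Θ_X with δ(0) = 0 whose eigenvalues sp(δ) are all positive rational numbers. -/
open Filter Topology Polynomial

set_option maxHeartbeats 1000000
set_option synthInstance.maxHeartbeats 1000000

noncomputable section

/-- The algebra structure on germs of complex valued functions. -/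
instance Filter.Germ.instAlgebraComplex {α : Type*} (l : Filter α) :
    Algebra ℂ (Filter.Germ l ℂ) where
  algebraMap := (Filter.Germ.coeRingHom l).comp (algebraMap ℂ (α → ℂ))
  commutes' := fun c g => mul_comm _ _
  smul_def' := fun c g => Filter.Germ.inductionOn g fun f => rfl

/-- The local algebra `𝒪ₙ` of germs at `0 ∈ ℂⁿ` of holomorphic functions,
realized as the subalgebra of germs at `0` admitting an analytic representative. -/
def On (n : ℕ) : Subalgebra ℂ (Filter.Germ (𝓝 (0 : Fin n → ℂ)) ℂ) where
  carrier := {g | ∃ f : (Fin n → ℂ) → ℂ,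
    AnalyticAt ℂ f 0 ∧ (f : Filter.Germ (𝓝 (0 : Fin n → ℂ)) ℂ) = g}
  mul_mem' := by
    rintro a b ⟨f, hf, rfl⟩ ⟨g, hg, rfl⟩
    exact ⟨f * g, hf.mul hg, rfl⟩
  add_mem' := by
    rintro a b ⟨f, hf, rfl⟩ ⟨g, hg, rfl⟩
    exact ⟨f + g, hf.add hg, rfl⟩
  algebraMap_mem' := fun c => ⟨fun _ => c, analyticAt_const, rfl⟩

variable {n : ℕ}

/-- Existence of an analytic representative for an element of `𝒪ₙ`. -/
lemma On.exists_rep (g : On n) : ∃ f : (Fin n → ℂ) → ℂ,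
    AnalyticAt ℂ f 0 ∧ (f : Filter.Germ (𝓝 (0 : Fin n → ℂ)) ℂ) = (g : Filter.Germ _ ℂ) :=
  g.2

/-- A chosen analytic representative of a germ in `𝒪ₙ`. -/
def On.rep (g : On n) : (Fin n → ℂ) → ℂ := (On.exists_rep g).choose

lemma On.rep_analyticAt (g : On n) : AnalyticAt ℂ (On.rep g) 0 :=
  (On.exists_rep g).choose_spec.1

lemma On.rep_spec (g : On n) :
    (On.rep g : Filter.Germ (𝓝 (0 : Fin n → ℂ)) ℂ) = (g : Filter.Germ _ ℂ) :=
  (On.exists_rep g).choose_spec.2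

/-- Build an element of `𝒪ₙ` from an analytic function. -/
def mkOn {n : ℕ} (f : (Fin n → ℂ) → ℂ) (hf : AnalyticAt ℂ f 0) : On n :=
  ⟨(f : Filter.Germ (𝓝 (0 : Fin n → ℂ)) ℂ), ⟨f, hf, rfl⟩⟩

/-- The `i`-th partial derivative, as an operation on `𝒪ₙ`. -/
def pd (i : Fin n) (g : On n) : On n :=
  mkOn (fun x => fderiv ℂ (On.rep g) x (Pi.single i 1)) (by
    have h := ((ContinuousLinearMap.apply ℂ ℂ (Pi.single i 1)).analyticAt
      (fderiv ℂ (On.rep g) 0)).comp (On.rep_analyticAt g).fderiv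
    exact h)

/-- Restriction of germs at `0` to germs along a finer filter. -/
def restrictGerm {l : Filter (Fin n → ℂ)} (hl : l ≤ 𝓝 (0 : Fin n → ℂ)) :
    Filter.Germ (𝓝 (0 : Fin n → ℂ)) ℂ →+* Filter.Germ l ℂ where
  toFun g := g.compTendsto id (Filter.tendsto_id'.2 hl)
  map_one' := rfl
  map_mul' a b := Filter.Germ.inductionOn₂ a b fun f g => rfl
  map_zero' := rfl
  map_add' a b := Filter.Germ.inductionOn₂ a b fun f g => rfl

/-- Evaluation of germs restricted along `l ≤ 𝓝 0`, as a ring homomorphism on `𝒪ₙ`. -/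
def restrictOn (n : ℕ) {l : Filter (Fin n → ℂ)} (hl : l ≤ 𝓝 (0 : Fin n → ℂ)) :
    On n →+* Filter.Germ l ℂ :=
  (restrictGerm hl).comp (On n).val.toRingHom

/-- The ideal `I_X ⊆ 𝒪ₙ` of germs vanishing on a set `X` near `0`. -/
def IX (n : ℕ) (X : Set (Fin n → ℂ)) : Ideal (On n) :=
  RingHom.ker (restrictOn n (nhdsWithin_le_nhds (s := X)))

/-- The maximal ideal `𝔪 ⊂ 𝒪ₙ` of germs vanishing at the origin. -/
def mId (n : ℕ) : Ideal (On n) :=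
  RingHom.ker (restrictOn n (pure_le_nhds (0 : Fin n → ℂ)))

/-- `X` is the germ at `0` of an analytic variety: `0 ∈ X` and, near `0`, `X` coincides
with the common zero locus of finitely many holomorphic functions. -/
def IsAnalyticGermAt0 (n : ℕ) (X : Set (Fin n → ℂ)) : Prop :=
  (0 : Fin n → ℂ) ∈ X ∧
    ∃ (m : ℕ) (g : Fin m → (Fin n → ℂ) → ℂ),
      (∀ j, AnalyticAt ℂ (g j) 0) ∧
      ∀ᶠ x in 𝓝 (0 : Fin n → ℂ), (x ∈ X ↔ ∀ j, g j x = 0)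

/-- The action `δ(g) = Σ δᵢ ∂g/∂xᵢ` of a vector field `δ ∈ Θ ≅ 𝒪ₙⁿ` on `g ∈ 𝒪ₙ`. -/
def applyVF (δ : Fin n → On n) (g : On n) : On n := ∑ i, δ i * pd i g

lemma applyVF_add (a b : Fin n → On n) (g : On n) :
    applyVF (a + b) g = applyVF a g + applyVF b g := by
  simp [applyVF, add_mul, Finset.sum_add_distrib]

lemma applyVF_smul (c : On n) (a : Fin n → On n) (g : On n) :
    applyVF (c • a) g = c * applyVF a g := by
  simp [applyVF, Finset.mul_sum, smul_eq_mul, mul_assoc]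

/-- For fixed `f`, the map `δ ↦ δ(f)` as an `𝒪ₙ`-linear map `Θ → 𝒪ₙ`. -/
def gradMap (n : ℕ) (f : On n) : (Fin n → On n) →ₗ[On n] On n where
  toFun δ := applyVF δ f
  map_add' a b := applyVF_add a b f
  map_smul' c a := applyVF_smul c a f

/-- The module `Θ_X` of logarithmic vector fields of `X`, i.e. vector fields
preserving the ideal `I_X`. -/
def ThetaX (n : ℕ) (X : Set (Fin n → ℂ)) : Submodule (On n) (Fin n → On n) where
  carrier := {δ | ∀ g ∈ IX n X, applyVF δ g ∈ IX n X}
  add_mem' := by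
    intro a b ha hb g hg
    rw [applyVF_add]
    exact Ideal.add_mem _ (ha g hg) (hb g hg)
  zero_mem' := by
    intro g hg
    have h0 : applyVF (0 : Fin n → On n) g = 0 := by simp [applyVF]
    rw [h0]; exact Ideal.zero_mem _
  smul_mem' := by
    intro c a ha g hg
    rw [applyVF_smul]
    exact Ideal.mul_mem_left _ _ (ha g hg)

/-- The module `Θ_Y` of vector fields tangent to the hypersurface `Y = f⁻¹(0)`,
i.e. `δ(f) ∈ ⟨f⟩`. -/
def ThetaF (n : ℕ) (f : On n) : Submodule (On n) (Fin n → On n) :=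
  Submodule.comap (gradMap n f) (Ideal.span {f})

/-- The module `H_Y` of Hamiltonian vector fields of `f`, i.e. `δ(f) = 0`. -/
def HamF (n : ℕ) (f : On n) : Submodule (On n) (Fin n → On n) :=
  LinearMap.ker (gradMap n f)

/-- The Bruce–Roberts ideal `df(Θ_X) ⊆ 𝒪ₙ`. -/
def BRIdeal (n : ℕ) (X : Set (Fin n → ℂ)) (f : On n) : Ideal (On n) :=
  Submodule.map (gradMap n f) (ThetaX n X)

/-- The Jacobian ideal `J(f) = ⟨∂f/∂x₁, …, ∂f/∂xₙ⟩`. -/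
def Jac (n : ℕ) (f : On n) : Ideal (On n) :=
  Ideal.span (Set.range fun i => pd i f)

/-- The ideal `J(f,h)` generated by the `2×2` minors of the Jacobian matrix of `(f,h)`. -/
def Jmin (n : ℕ) (f h : On n) : Ideal (On n) :=
  Ideal.span (Set.range fun p : Fin n × Fin n => pd p.1 f * pd p.2 h - pd p.2 f * pd p.1 h)

/-- The Milnor number `μ(f)`. -/
def mu (n : ℕ) (f : On n) : ℕ := Module.finrank ℂ (On n ⧸ Jac n f)

/-- The Tjurina number `τ(f)`. -/
def tau (n : ℕ) (f : On n) : ℕ :=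
  Module.finrank ℂ (On n ⧸ (Jac n f + Ideal.span {f}))

/-- The Bruce–Roberts Milnor number `μ_X(f)`. -/
def muX (n : ℕ) (X : Set (Fin n → ℂ)) (f : On n) : ℕ :=
  Module.finrank ℂ (On n ⧸ BRIdeal n X f)

/-- The Bruce–Roberts Tjurina number `τ_X(f)`. -/
def tauX (n : ℕ) (X : Set (Fin n → ℂ)) (f : On n) : ℕ :=
  Module.finrank ℂ (On n ⧸ (BRIdeal n X f + Ideal.span {f}))

/-- The value at the origin of a germ in `𝒪ₙ`. -/
def ev0 (g : On n) : ℂ := On.rep g 0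

/-- The linear part `j¹δ` of a vector field `δ`, as the matrix `(∂δⱼ/∂xᵢ)(0)`. -/
def linPart (δ : Fin n → On n) : Matrix (Fin n) (Fin n) ℂ :=
  Matrix.of fun i j => ev0 (pd i (δ j))

/-- The eigenvalues (with multiplicities) of the linear part of `δ` are given by `w`. -/
def EigsEq (δ : Fin n → On n) (w : Fin n → ℚ) : Prop :=
  (linPart δ).charpoly = ∏ i, (Polynomial.X - Polynomial.C ((w i : ℂ)))

/-- The germ at `0` of the coordinate function `xᵢ`. -/
def coordG (i : Fin n) : On n :=
  mkOn (fun x : Fin n → ℂ => x i)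
    ((ContinuousLinearMap.proj (R := ℂ) (φ := fun _ : Fin n => ℂ) i).analyticAt _)

/-- `g` is quasihomogeneous of degree `d` with respect to the weights `w` (in the given
coordinates): the Euler identity `Σ wᵢ xᵢ ∂g/∂xᵢ = d g` holds. -/
def IsQH (n : ℕ) (w : Fin n → ℚ) (d : ℚ) (g : On n) : Prop :=
  ∑ i, (w i : ℂ) • (coordG i * pd i g) = (d : ℂ) • g

/-- A germ of a biholomorphic change of coordinates at `0 ∈ ℂⁿ`. -/
structure CoordChange (n : ℕ) where
  toFun : (Fin n → ℂ) → (Fin n → ℂ)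
  invFun : (Fin n → ℂ) → (Fin n → ℂ)
  analyticAt : AnalyticAt ℂ toFun 0
  inv_analyticAt : AnalyticAt ℂ invFun 0
  map_zero : toFun 0 = 0
  inv_map_zero : invFun 0 = 0
  left_inv : ∀ᶠ x in 𝓝 (0 : Fin n → ℂ), invFun (toFun x) = x
  right_inv : ∀ᶠ x in 𝓝 (0 : Fin n → ℂ), toFun (invFun x) = x

lemma CoordChange.tendsto (φ : CoordChange n) :
    Filter.Tendsto φ.toFun (𝓝 (0 : Fin n → ℂ)) (𝓝 (0 : Fin n → ℂ)) := by
  have h := φ.analyticAt.continuousAt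
  rwa [ContinuousAt, φ.map_zero] at h

/-- The pullback (composition) of a germ `g ∈ 𝒪ₙ` under a change of coordinates. -/
def pullback (φ : CoordChange n) (g : On n) : On n :=
  ⟨(g : Filter.Germ (𝓝 (0 : Fin n → ℂ)) ℂ).compTendsto φ.toFun φ.tendsto, by
    refine ⟨On.rep g ∘ φ.toFun, ?_, ?_⟩
    · have h := On.rep_analyticAt g
      rw [← φ.map_zero] at h
      exact h.comp φ.analyticAt
    · rw [← On.rep_spec g]
      exact (Filter.Germ.coe_compTendsto _ φ.tendsto).symm⟩

/-- Definition 1.1: the pair `(f, X)` is relatively quasihomogeneous with respect to the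
weights `w`: in suitable coordinates, `f` is quasihomogeneous of degree `1` and `I_X` admits
a system of quasihomogeneous generators of positive degrees, all with respect to `w`. -/
def RelQH (n : ℕ) (X : Set (Fin n → ℂ)) (f : On n) (w : Fin n → ℚ) : Prop :=
  ∃ φ : CoordChange n,
    IsQH n w 1 (pullback φ f) ∧
    ∃ (m : ℕ) (h : Fin m → On n) (d : Fin m → ℚ),
      Ideal.span (Set.range h) = IX n X ∧ (∀ j, 0 < d j) ∧
      ∀ j, IsQH n w (d j) (pullback φ (h j))

/-- The variety `X` is quasihomogeneous with respect to the weights `w`: in suitable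
coordinates, `I_X` admits a system of quasihomogeneous generators of positive degrees. -/
def VarQH (n : ℕ) (X : Set (Fin n → ℂ)) (w : Fin n → ℚ) : Prop :=
  ∃ φ : CoordChange n,
    ∃ (m : ℕ) (h : Fin m → On n) (d : Fin m → ℚ),
      Ideal.span (Set.range h) = IX n X ∧ (∀ j, 0 < d j) ∧
      ∀ j, IsQH n w (d j) (pullback φ (h j))

instance (f : On n) : HasQuotient (↥(ThetaF n f)) (Submodule ↥(On n) ↥(ThetaF n f)) :=
  Submodule.hasQuotient (R := ↥(On n)) (M := ↥(ThetaF n f))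

/-!
If `I_X` is generated by quasihomogeneous germs in suitable coordinates, the Euler field
`∑ wᵢ xᵢ ∂/∂xᵢ` of these coordinates multiplies each generator by its degree.

Conversely, let `δ ∈ Θ_X` vanish at `0` with positive rational eigenvalues. Passing to a triangular
linear part and weights `uᵢ` decreasing along the flag, `δ` becomes `∑ wᵢ xᵢ ∂/∂xᵢ` plus terms of
higher `u`-order. There are only finitely many resonances `⟨w, α⟩ = wⱼ`, and away from them
`|⟨w, α⟩ - wⱼ|` grows linearly in `|α|`, so the homological equation has no small divisors and is
solved by convergent series: `𝒪ₙ` has coordinates which are generalized eigenvectors of `δ`. In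
these coordinates the generalized eigenspaces of `δ` are spanned, up to arbitrarily high order, by
the monomials of a given `w`-degree. Since `I_X` is `δ`-invariant, and closed by Krull's
intersection theorem, it contains the quasihomogeneous components of its elements; these are
polynomials, and finitely many of them generate `I_X`.
-/

namespace QuasiHomogeneous

open MvPowerSeries
open scoped NNReal ENNReal

section MultiPow

variable {σ : Type*} [Fintype σ] {R : Type*} [CommSemiring R]

/-- The value `x^α` of the monomial with exponent `α` at the point `x`. -/
def multiPow (x : σ → R) (α : σ →₀ ℕ) : R := ∏ i, x i ^ α i

lemma multiPow_zero (x : σ → R) : multiPow x 0 = 1 := by simp [multiPow]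

lemma multiPow_add (x : σ → R) (α β : σ →₀ ℕ) :
    multiPow x (α + β) = multiPow x α * multiPow x β := by
  simp [multiPow, pow_add, Finset.prod_mul_distrib]

lemma multiPow_single (x : σ → R) (i : σ) (k : ℕ) :
    multiPow x (Finsupp.single i k) = x i ^ k := by
  classical
  rw [multiPow, Finset.prod_eq_single i] <;> simp +contextual [eq_comm]

lemma multiPow_pos {r : σ → ℝ≥0} (hr : ∀ i, 0 < r i) (α : σ →₀ ℕ) : 0 < multiPow r α :=
  Finset.prod_pos fun i _ => pow_pos (hr i) _

lemma multiPow_mono {r s : σ → ℝ≥0} (h : r ≤ s) (α : σ →₀ ℕ) : multiPow r α ≤ multiPow s α :=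
  Finset.prod_le_prod' fun i _ => pow_le_pow_left' (h i) _

end MultiPow

section PolyNorm

variable {σ : Type*} [Fintype σ]

/-- The `ℓ¹`-norm `∑ |F_α| r^α` of a power series on the closed polydisc of polyradius `r`, with
value `∞` where the series does not converge. -/
def polyNorm (r : σ → ℝ≥0) (F : MvPowerSeries σ ℂ) : ℝ≥0∞ :=
  ∑' α, ‖coeff α F‖ₑ * (multiPow r α : ℝ≥0)

variable {r : σ → ℝ≥0} {F G : MvPowerSeries σ ℂ}

lemma enorm_coeff_mul_le_polyNorm (r : σ → ℝ≥0) (F : MvPowerSeries σ ℂ) (α : σ →₀ ℕ) :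
    ‖coeff α F‖ₑ * (multiPow r α : ℝ≥0) ≤ polyNorm r F :=
  ENNReal.le_tsum (f := fun α => ‖coeff α F‖ₑ * (multiPow r α : ℝ≥0)) α

lemma polyNorm_eq_zero (hr : ∀ i, 0 < r i) : polyNorm r F = 0 ↔ F = 0 := by
  simp [polyNorm, MvPowerSeries.ext_iff, (multiPow_pos hr _).ne']

lemma polyNorm_zero (r : σ → ℝ≥0) : polyNorm r 0 = 0 := by simp [polyNorm]

lemma polyNorm_le_of_coeff_le (h : ∀ α, ‖coeff α F‖ ≤ ‖coeff α G‖) :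
    polyNorm r F ≤ polyNorm r G :=
  ENNReal.tsum_le_tsum fun α => mul_le_mul_left (enorm_le_iff_norm_le.2 (h α)) _

lemma polyNorm_mono {s : σ → ℝ≥0} (h : r ≤ s) (F : MvPowerSeries σ ℂ) :
    polyNorm r F ≤ polyNorm s F :=
  ENNReal.tsum_le_tsum fun α => mul_le_mul_right (ENNReal.coe_le_coe.2 (multiPow_mono h α)) _

lemma polyNorm_add_le (r : σ → ℝ≥0) (F G : MvPowerSeries σ ℂ) :
    polyNorm r (F + G) ≤ polyNorm r F + polyNorm r G := by
  rw [polyNorm, polyNorm, polyNorm, ← ENNReal.tsum_add]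
  refine ENNReal.tsum_le_tsum fun α => ?_
  rw [← add_mul, map_add]
  exact mul_le_mul_left (enorm_add_le _ _) _

lemma polyNorm_neg (r : σ → ℝ≥0) (F : MvPowerSeries σ ℂ) : polyNorm r (-F) = polyNorm r F := by
  simp [polyNorm]

lemma polyNorm_sum_le {ι : Type*} (r : σ → ℝ≥0) (s : Finset ι) (F : ι → MvPowerSeries σ ℂ) :
    polyNorm r (∑ j ∈ s, F j) ≤ ∑ j ∈ s, polyNorm r (F j) :=
  Finset.le_sum_of_subadditive _ (polyNorm_zero r).le (polyNorm_add_le r) _ _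

lemma polyNorm_monomial (r : σ → ℝ≥0) (α : σ →₀ ℕ) (c : ℂ) :
    polyNorm r (monomial α c) = ‖c‖ₑ * (multiPow r α : ℝ≥0) := by
  classical
  rw [polyNorm, tsum_eq_single α fun β hβ => by simp [MvPowerSeries.coeff_monomial, hβ]]
  simp

lemma polyNorm_mul_le (r : σ → ℝ≥0) (F G : MvPowerSeries σ ℂ) :
    polyNorm r (F * G) ≤ polyNorm r F * polyNorm r G := by
  classical
  let a (F : MvPowerSeries σ ℂ) (α : σ →₀ ℕ) : ℝ≥0∞ := ‖coeff α F‖ₑ * (multiPow r α : ℝ≥0)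
  calc polyNorm r (F * G)
      ≤ ∑' γ, ∑ p ∈ Finset.HasAntidiagonal.antidiagonal γ, a F p.1 * a G p.2 := by
        refine ENNReal.tsum_le_tsum fun γ => ?_
        rw [MvPowerSeries.coeff_mul]
        refine (mul_le_mul_left (enorm_sum_le _ _) _).trans_eq ?_
        rw [Finset.sum_mul]
        refine Finset.sum_congr rfl fun p hp => ?_
        rw [← Finset.HasAntidiagonal.mem_antidiagonal.1 hp, multiPow_add, enorm_mul,
          ENNReal.coe_mul]
        ring
    _ = ∑' q : (σ →₀ ℕ) × (σ →₀ ℕ), a F q.1 * a G q.2 := by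
        rw [← Finset.HasAntidiagonal.sigmaAntidiagonalEquivProd.tsum_eq,
          ENNReal.tsum_sigma']
        refine tsum_congr fun γ => ?_
        rw [tsum_fintype, ← Finset.sum_attach]
        rfl
    _ = polyNorm r F * polyNorm r G := by
        simp only [ENNReal.tsum_prod', ENNReal.tsum_mul_left, ENNReal.tsum_mul_right]
        rfl

/-- Euler's operator `∑ wᵢ xᵢ ∂ᵢ` multiplies the coefficient of `x^α` by `⟨w, α⟩`. -/
lemma sum_mul_polyNorm_pderiv (r w : σ → ℝ≥0) (F : MvPowerSeries σ ℂ) :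
    ∑ i, (w i : ℝ≥0∞) * r i * polyNorm r (pderiv ℂ i F) =
      ∑' α, (Finsupp.weight w α : ℝ≥0) * (‖coeff α F‖ₑ * (multiPow r α : ℝ≥0)) := by
  have shift (i : σ) : (w i : ℝ≥0∞) * r i * polyNorm r (pderiv ℂ i F) =
      ∑' α : σ →₀ ℕ, (α i : ℝ≥0∞) * w i * (‖coeff α F‖ₑ * (multiPow r α : ℝ≥0)) := by
    have inj : Function.Injective fun α : σ →₀ ℕ => α + Finsupp.single i 1 :=
      add_left_injective _
    rw [polyNorm, ← ENNReal.tsum_mul_left]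
    refine (tsum_congr fun α => ?_).trans (inj.tsum_eq fun α hα => ?_)
    · have h : ‖((α i : ℂ) + 1)‖ₑ = (α i : ℝ≥0∞) + 1 := by
        rw [← Nat.cast_succ, ← ofReal_norm, RCLike.norm_natCast, ENNReal.ofReal_natCast,
          Nat.cast_succ]
      rw [MvPowerSeries.coeff_pderiv, enorm_mul, h, multiPow_add, multiPow_single]
      simp only [Finsupp.coe_add, Pi.add_apply, Finsupp.single_eq_same, Nat.cast_add, Nat.cast_one,
        pow_one, ENNReal.coe_mul]
      ring
    · have hαi : α i ≠ 0 := fun h => hα (by simp [h])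
      exact ⟨α - Finsupp.single i 1, tsub_add_cancel_of_le (by
        simpa [Finsupp.single_le_iff, Nat.one_le_iff_ne_zero] using hαi)⟩
  simp_rw [shift]
  rw [← Summable.tsum_finsetSum fun _ _ => ENNReal.summable]
  refine tsum_congr fun α => ?_
  rw [← Finset.sum_mul, Finsupp.weight_eq_sum]
  simp

end PolyNorm

section Multiplier

variable {σ : Type*}

/-- The diagonal operator multiplying the coefficient of `x^α` by `m α`. -/
def multiplier (m : (σ →₀ ℕ) → ℂ) : MvPowerSeries σ ℂ →ₗ[ℂ] MvPowerSeries σ ℂ where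
  toFun F := fun α => m α * coeff α F
  map_add' _ _ := funext fun _ => mul_add _ _ _
  map_smul' _ _ := funext fun _ => mul_left_comm _ _ _

lemma coeff_multiplier (m : (σ →₀ ℕ) → ℂ) (F : MvPowerSeries σ ℂ) (α : σ →₀ ℕ) :
    coeff α (multiplier m F) = m α * coeff α F := rfl

open scoped Classical in
/-- The part of a power series supported on a set `s` of exponents. -/
def restrict (s : Set (σ →₀ ℕ)) : MvPowerSeries σ ℂ →ₗ[ℂ] MvPowerSeries σ ℂ :=
  multiplier (s.indicator 1)

open scoped Classical in
lemma coeff_restrict (s : Set (σ →₀ ℕ)) (F : MvPowerSeries σ ℂ) (α : σ →₀ ℕ) :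
    coeff α (restrict s F) = if α ∈ s then coeff α F else 0 := by
  simp [restrict, coeff_multiplier, Set.indicator_apply]

lemma polyNorm_restrict_le [Fintype σ] (r : σ → ℝ≥0) (s : Set (σ →₀ ℕ)) (F : MvPowerSeries σ ℂ) :
    polyNorm r (restrict s F) ≤ polyNorm r F :=
  polyNorm_le_of_coeff_le fun α => by
    classical
    rw [coeff_restrict]
    split_ifs <;> simp

end Multiplier

section WeightFiltration

variable {σ : Type*}

/-- The power series all of whose exponents have `u`-weight at least `c`. -/
def weightFiltration (u : σ → ℝ) (c : ℝ) : Submodule ℂ (MvPowerSeries σ ℂ) where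
  carrier := {F | ∀ α, coeff α F ≠ 0 → c ≤ Finsupp.weight u α}
  zero_mem' α h := absurd (map_zero _) h
  add_mem' {F G} hF hG α h := by
    by_contra hc
    refine h ?_
    rw [map_add, not_not.1 fun h => hc (hF α h), not_not.1 fun h => hc (hG α h), add_zero]
  smul_mem' c F hF α h := hF α fun h' => h (by simp [h'])

variable {u : σ → ℝ} {c d : ℝ} {F G : MvPowerSeries σ ℂ}

lemma weightFiltration_anti (u : σ → ℝ) : Antitone (weightFiltration u) :=
  fun _ _ h _ hF α hα => h.trans (hF α hα)

lemma mul_mem_weightFiltration (hF : F ∈ weightFiltration u c) (hG : G ∈ weightFiltration u d) :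
    F * G ∈ weightFiltration u (c + d) := by
  classical
  intro α hα
  rw [MvPowerSeries.coeff_mul] at hα
  obtain ⟨p, hp, hne⟩ := Finset.exists_ne_zero_of_sum_ne_zero hα
  rw [← Finset.HasAntidiagonal.mem_antidiagonal.1 hp, map_add]
  exact add_le_add (hF _ (left_ne_zero_of_mul hne)) (hG _ (right_ne_zero_of_mul hne))

lemma pderiv_mem_weightFiltration (i : σ) (hF : F ∈ weightFiltration u c) :
    pderiv ℂ i F ∈ weightFiltration u (c - u i) := by
  intro α hα
  rw [MvPowerSeries.coeff_pderiv] at hα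
  simpa [Finsupp.weight_single, sub_le_iff_le_add] using hF _ (left_ne_zero_of_mul hα)

lemma multiplier_mem_weightFiltration (m : (σ →₀ ℕ) → ℂ) (hF : F ∈ weightFiltration u c) :
    multiplier m F ∈ weightFiltration u c :=
  fun α hα => hF α (right_ne_zero_of_mul hα)

lemma X_mem_weightFiltration (u : σ → ℝ) (i : σ) : X i ∈ weightFiltration u (u i) := by
  classical
  intro α hα
  rw [MvPowerSeries.coeff_X] at hα
  simp [of_not_not fun h => hα (if_neg h), Finsupp.weight_single]

lemma weight_nonneg (hu : ∀ i, 0 < u i) (α : σ →₀ ℕ) : 0 ≤ Finsupp.weight u α :=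
  Finset.sum_nonneg fun i _ => nsmul_nonneg (hu i).le _

lemma weight_pos {M : Type*} [AddCommMonoid M] [PartialOrder M] [IsOrderedCancelAddMonoid M]
    {u : σ → M} (hu : ∀ i, 0 < u i) {α : σ →₀ ℕ} (hα : α ≠ 0) : 0 < Finsupp.weight u α :=
  Finset.sum_pos (fun i hi => nsmul_pos (hu i) (Finsupp.mem_support_iff.1 hi))
    (Finsupp.support_nonempty_iff.2 hα)

lemma mem_weightFiltration_zero (hu : ∀ i, 0 < u i) (F : MvPowerSeries σ ℂ) :
    F ∈ weightFiltration u 0 :=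
  fun α _ => weight_nonneg hu α

lemma mul_weight_le {v : σ → ℝ} {κ : ℝ} (h : ∀ i, κ * u i ≤ v i) (α : σ →₀ ℕ) :
    κ * Finsupp.weight u α ≤ Finsupp.weight v α := by
  simp only [Finsupp.weight_apply, Finsupp.sum, Finset.mul_sum]
  exact Finset.sum_le_sum fun i _ => by
    rw [mul_smul_comm]
    exact nsmul_le_nsmul_right (h i) _

variable [Finite σ]

lemma exists_pos_mul_le {v : σ → ℝ} (hv : ∀ i, 0 < v i) (u : σ → ℝ) :
    ∃ κ > 0, ∀ i, κ * u i ≤ v i := by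
  have h : ∀ᶠ κ in 𝓝[>] (0 : ℝ), ∀ i, κ * u i < v i :=
    eventually_all.2 fun i => (((continuous_mul_const (u i)).tendsto' 0 0 (zero_mul _)).mono_left
      nhdsWithin_le_nhds).eventually_lt_const (hv i)
  obtain ⟨κ, hκ, hpos⟩ := (h.and self_mem_nhdsWithin).exists
  exact ⟨κ, hpos, fun i => (hκ i).le⟩

lemma finite_setOf_weight_le (hu : ∀ i, 0 < u i) (c : ℝ) :
    {α : σ →₀ ℕ | Finsupp.weight u α ≤ c}.Finite := by
  obtain ⟨κ, hκ, h⟩ := exists_pos_mul_le hu 1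
  refine (Finsupp.finite_of_degree_le (σ := σ) ⌊c / κ⌋₊).subset fun α hα => Nat.le_floor ?_
  rw [le_div_iff₀' hκ, Finsupp.degree_eq_weight_one]
  refine le_trans ?_ ((mul_weight_le h α).trans hα)
  simp [Finsupp.weight_apply, Finsupp.sum]

/-- The weights of the exponents form a discrete set, so a strict bound can be improved. -/
lemma exists_gt_mem_weightFiltration (hu : ∀ i, 0 < u i)
    (hF : ∀ α, coeff α F ≠ 0 → c < Finsupp.weight u α) : ∃ d > c, F ∈ weightFiltration u d := by
  let S := {α : σ →₀ ℕ | coeff α F ≠ 0 ∧ Finsupp.weight u α ≤ c + 1}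
  have hS : S.Finite := (finite_setOf_weight_le hu (c + 1)).subset fun α h => h.2
  rcases S.eq_empty_or_nonempty with hS' | hS'
  · refine ⟨c + 1, by simp, fun α hα => ?_⟩
    by_contra! h
    exact (hS' ▸ ⟨hα, h.le⟩ : α ∈ (∅ : Set (σ →₀ ℕ)))
  · obtain ⟨β, hβ, hmin⟩ := hS.exists_minimalFor (Finsupp.weight u) S hS'
    refine ⟨Finsupp.weight u β, hF β hβ.1, fun α hα => ?_⟩
    by_contra! h
    exact h.not_ge (hmin ⟨hα, h.le.trans hβ.2⟩ h.le)

end WeightFiltration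

section Convergent

variable {σ : Type*} [Fintype σ]

/-- The algebra of power series that converge on some polydisc around `0`. -/
def convergent (σ : Type*) [Fintype σ] : Subalgebra ℂ (MvPowerSeries σ ℂ) where
  carrier := {F | ∃ r : σ → ℝ≥0, (∀ i, 0 < r i) ∧ polyNorm r F ≠ ∞}
  mul_mem' := by
    rintro F G ⟨r, hr, hF⟩ ⟨s, hs, hG⟩
    refine ⟨r ⊓ s, fun i => lt_min (hr i) (hs i), ne_top_of_le_ne_top ?_ (polyNorm_mul_le _ _ _)⟩
    exact ENNReal.mul_ne_top (ne_top_of_le_ne_top hF (polyNorm_mono inf_le_left _))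
      (ne_top_of_le_ne_top hG (polyNorm_mono inf_le_right _))
  add_mem' := by
    rintro F G ⟨r, hr, hF⟩ ⟨s, hs, hG⟩
    refine ⟨r ⊓ s, fun i => lt_min (hr i) (hs i), ne_top_of_le_ne_top ?_ (polyNorm_add_le _ _ _)⟩
    exact ENNReal.add_ne_top.2 ⟨ne_top_of_le_ne_top hF (polyNorm_mono inf_le_left _),
      ne_top_of_le_ne_top hG (polyNorm_mono inf_le_right _)⟩
  algebraMap_mem' c := ⟨1, by simp, by
    rw [MvPowerSeries.algebraMap_apply, ← MvPowerSeries.monomial_zero_eq_C_apply,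
      polyNorm_monomial]
    exact ENNReal.mul_ne_top enorm_ne_top ENNReal.coe_ne_top⟩

variable {F : MvPowerSeries σ ℂ}

lemma monomial_mem_convergent (α : σ →₀ ℕ) (c : ℂ) : monomial α c ∈ convergent σ :=
  ⟨1, by simp, by rw [polyNorm_monomial]; exact ENNReal.mul_ne_top enorm_ne_top ENNReal.coe_ne_top⟩

lemma X_mem_convergent (i : σ) : X i ∈ convergent σ := monomial_mem_convergent _ _

lemma restrict_mem_convergent (s : Set (σ →₀ ℕ)) (hF : F ∈ convergent σ) :
    restrict s F ∈ convergent σ :=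
  let ⟨r, hr, h⟩ := hF
  ⟨r, hr, ne_top_of_le_ne_top h (polyNorm_restrict_le r s F)⟩

lemma pderiv_mem_convergent (i : σ) (hF : F ∈ convergent σ) : pderiv ℂ i F ∈ convergent σ := by
  obtain ⟨r, hr, h⟩ := hF
  have hr' (j : σ) : 0 < r j / 2 := half_pos (hr j)
  refine ⟨fun j => r j / 2, hr', ?_⟩
  have hpow (α : σ →₀ ℕ) : multiPow (fun j => r j / 2) α * 2 ^ α.degree = multiPow r α := by
    simp_rw [multiPow, div_pow, Finset.prod_div_distrib]
    rw [Finset.prod_pow_eq_pow_sum, ← Finsupp.degree_eq_sum, div_mul_cancel₀ _ (by positivity)]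
  have hsum : ∑ j, ((1 : σ → ℝ≥0) j : ℝ≥0∞) * (r j / 2 : ℝ≥0) *
      polyNorm (fun j => r j / 2) (pderiv ℂ j F) ≤ polyNorm r F := by
    rw [sum_mul_polyNorm_pderiv]
    refine ENNReal.tsum_le_tsum fun α => ?_
    rw [mul_left_comm, ← ENNReal.coe_mul]
    refine mul_le_mul_right (ENNReal.coe_le_coe.2 ?_) _
    rw [← hpow, mul_comm, show Finsupp.weight (1 : σ → ℝ≥0) α = α.degree by
      simp [Finsupp.weight_apply, Finsupp.sum, Finsupp.degree_apply]]
    exact mul_le_mul_right (by exact_mod_cast Nat.lt_two_pow_self.le) _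
  have hi := ne_top_of_le_ne_top h ((Finset.single_le_sum (f := fun j =>
    ((1 : σ → ℝ≥0) j : ℝ≥0∞) * (r j / 2 : ℝ≥0) * polyNorm (fun j => r j / 2) (pderiv ℂ j F))
    (by simp) (Finset.mem_univ i)).trans hsum)
  contrapose! hi
  simp [hi, ENNReal.mul_top, (hr i).ne']

end Convergent

section SmallRadius

variable {σ : Type*} [Fintype σ] {u : σ → ℝ} {F : MvPowerSeries σ ℂ}

lemma multiPow_rpow (u : σ → ℝ) {t : ℝ≥0} (ht : 0 < t) (α : σ →₀ ℕ) :
    multiPow (fun i => t ^ u i) α = t ^ Finsupp.weight u α := by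
  apply NNReal.coe_injective
  rw [NNReal.coe_rpow, Finsupp.weight_eq_sum, Real.rpow_sum_of_pos (NNReal.coe_pos.2 ht),
    multiPow, NNReal.coe_prod]
  refine Finset.prod_congr rfl fun i _ => ?_
  rw [NNReal.coe_pow, NNReal.coe_rpow, nsmul_eq_mul, mul_comm, Real.rpow_mul t.coe_nonneg,
    Real.rpow_natCast]

lemma eventually_polyNorm_ne_top (hu : ∀ i, 0 < u i) (hF : F ∈ convergent σ) :
    ∀ᶠ t : ℝ≥0 in 𝓝[>] 0, polyNorm (fun i => t ^ u i) F ≠ ∞ := by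
  obtain ⟨r, hr, h⟩ := hF
  have hsmall (i : σ) : ∀ᶠ t : ℝ≥0 in 𝓝[>] 0, t ^ u i ≤ r i := by
    have := (NNReal.continuous_rpow_const (hu i).le).tendsto' 0 0 (NNReal.zero_rpow (hu i).ne')
    exact (this.mono_left nhdsWithin_le_nhds).eventually_le_const (hr i)
  filter_upwards [eventually_all.2 hsmall] with t ht
  exact ne_top_of_le_ne_top h (polyNorm_mono ht F)

lemma eventually_polyNorm_le (hu : ∀ i, 0 < u i) {c d : ℝ} (hcd : c < d)
    (hF : F ∈ convergent σ) (hFd : F ∈ weightFiltration u d) {η : ℝ≥0} (hη : 0 < η) :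
    ∀ᶠ t : ℝ≥0 in 𝓝[>] 0, polyNorm (fun i => t ^ u i) F ≤ η * (t ^ c : ℝ≥0) := by
  obtain ⟨s, hs, hspos : 0 < s⟩ :=
    ((eventually_polyNorm_ne_top hu hF).and self_mem_nhdsWithin).exists
  lift polyNorm (fun i => s ^ u i) F to ℝ≥0 using hs with M hM
  have hlim : Tendsto (fun t : ℝ≥0 => t ^ (d - c) * (s ^ d)⁻¹ * M) (𝓝[>] 0) (𝓝 0) := by
    have hcd' := sub_pos.2 hcd
    have h0 := (NNReal.continuous_rpow_const hcd'.le).tendsto' 0 0 (NNReal.zero_rpow hcd'.ne')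
    simpa using ((h0.mono_left nhdsWithin_le_nhds).mul_const (s ^ d)⁻¹).mul_const M
  filter_upwards [hlim.eventually_le_const hη, self_mem_nhdsWithin,
    (eventually_le_nhds hspos).filter_mono nhdsWithin_le_nhds] with t ht (htpos : 0 < t) hts
  have hpow (α : σ →₀ ℕ) (hα : d ≤ Finsupp.weight u α) :
      t ^ Finsupp.weight u α ≤ t ^ d * (s ^ d)⁻¹ * s ^ Finsupp.weight u α := by
    have h : (t / s) ^ Finsupp.weight u α ≤ (t / s) ^ d :=
      NNReal.rpow_le_rpow_of_exponent_ge (div_pos htpos hspos) (div_le_one_of_le₀ hts hspos.le) hα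
    rwa [NNReal.div_rpow, NNReal.div_rpow, div_le_iff₀ (NNReal.rpow_pos hspos),
      div_eq_mul_inv] at h
  calc polyNorm (fun i => t ^ u i) F
      ≤ ((t ^ d * (s ^ d)⁻¹ : ℝ≥0) : ℝ≥0∞) * polyNorm (fun i => s ^ u i) F := by
        rw [polyNorm, polyNorm, ← ENNReal.tsum_mul_left]
        refine ENNReal.tsum_le_tsum fun α => ?_
        rw [mul_left_comm, multiPow_rpow u htpos, multiPow_rpow u hspos, ← ENNReal.coe_mul]
        by_cases hα : coeff α F = 0
        · simp [hα]
        · exact mul_le_mul_right (ENNReal.coe_le_coe.2 (hpow α (hFd α hα))) _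
    _ = ((t ^ (d - c) * (s ^ d)⁻¹ * M) * t ^ c : ℝ≥0) := by
        have hd : t ^ d = t ^ (d - c) * t ^ c := by
          rw [← NNReal.rpow_add htpos.ne', sub_add_cancel]
        rw [← hM, ← ENNReal.coe_mul, hd]
        ring_nf
    _ ≤ η * (t ^ c : ℝ≥0) := by
        rw [ENNReal.coe_mul]
        exact mul_le_mul_left (ENNReal.coe_le_coe.2 ht) _

end SmallRadius

section Neumann

variable {σ : Type*} [Fintype σ] {r : σ → ℝ≥0}

lemma exists_polyNorm_sub_sum_le (hr : ∀ i, 0 < r i) {G : ℕ → MvPowerSeries σ ℂ}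
    (hG : ∑' k, polyNorm r (G k) ≠ ∞) :
    ∃ S, ∀ m, polyNorm r (S - ∑ k ∈ Finset.range m, G k) ≤ ∑' k, polyNorm r (G (k + m)) := by
  have hsum (α : σ →₀ ℕ) : Summable fun k => coeff α (G k) := by
    have hpos : ((multiPow r α : ℝ≥0) : ℝ≥0∞) ≠ 0 := by simp [(multiPow_pos hr α).ne']
    refine .of_enorm fun h => hG (top_unique ?_)
    calc ∞ = ∑' k, ‖coeff α (G k)‖ₑ * (multiPow r α : ℝ≥0) := by
          rw [ENNReal.tsum_mul_right, h, ENNReal.top_mul hpos]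
      _ ≤ ∑' k, polyNorm r (G k) :=
          ENNReal.tsum_le_tsum fun k => enorm_coeff_mul_le_polyNorm r (G k) α
  let S : MvPowerSeries σ ℂ := fun α => ∑' k, coeff α (G k)
  have hS (α : σ →₀ ℕ) : coeff α S = ∑' k, coeff α (G k) := rfl
  refine ⟨S, fun m => ?_⟩
  simp_rw [polyNorm]
  rw [ENNReal.tsum_comm]
  refine ENNReal.tsum_le_tsum fun α => ?_
  rw [ENNReal.tsum_mul_right, map_sub, map_sum, hS]
  refine mul_le_mul_left ?_ _
  have htail : ∑' k, coeff α (G k) - ∑ k ∈ Finset.range m, coeff α (G k) =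
      ∑' k, coeff α (G (k + m)) :=
    sub_eq_of_eq_add' ((hsum α).sum_add_tsum_nat_add m).symm
  exact (congrArg _ htail).trans_le (enorm_tsum_le_tsum_enorm)

lemma polyNorm_pow_apply_le {L : MvPowerSeries σ ℂ →ₗ[ℂ] MvPowerSeries σ ℂ} {q : ℝ≥0∞}
    (hL : ∀ G, polyNorm r (L G) ≤ q * polyNorm r G) (F : MvPowerSeries σ ℂ) (k : ℕ) :
    polyNorm r ((L ^ k) F) ≤ q ^ k * polyNorm r F := by
  induction k with
  | zero => simp
  | succ k ih =>
    rw [pow_succ', pow_succ', mul_assoc]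
    exact (hL _).trans (mul_le_mul_right ih _)

lemma polyNorm_add_apply_sub_le {L : MvPowerSeries σ ℂ →ₗ[ℂ] MvPowerSeries σ ℂ}
    (hL : ∀ G, polyNorm r (L G) ≤ 2⁻¹ * polyNorm r G) {F P S T : MvPowerSeries σ ℂ} {b : ℝ≥0∞}
    (hP : P + L P = F - T) (hS : polyNorm r (S - P) ≤ 2 * b) (hT : polyNorm r T ≤ b) :
    polyNorm r (S + L S - F) ≤ 4 * b := by
  have hsplit : S + L S - F = (S - P) + (L (S - P) + -T) := by
    rw [map_sub, ← sub_sub_cancel F T, ← hP]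
    abel
  calc polyNorm r (S + L S - F)
      ≤ polyNorm r (S - P) + (polyNorm r (L (S - P)) + polyNorm r (-T)) := by
        rw [hsplit]
        exact (polyNorm_add_le _ _ _).trans (by gcongr; exact polyNorm_add_le _ _ _)
    _ ≤ 2 * b + (2⁻¹ * (2 * b) + b) := by
        rw [polyNorm_neg]
        gcongr
        exact (hL _).trans (by gcongr)
    _ = 4 * b := by
        rw [ENNReal.inv_mul_cancel_left two_ne_zero ENNReal.ofNat_ne_top]
        ring

/-- The inverse of `1 + L` is the Neumann series `∑ (-L)^k`. -/
lemma exists_add_eq_of_polyNorm_le_half (hr : ∀ i, 0 < r i)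
    {L : MvPowerSeries σ ℂ →ₗ[ℂ] MvPowerSeries σ ℂ}
    (hL : ∀ G, polyNorm r (L G) ≤ 2⁻¹ * polyNorm r G) {F : MvPowerSeries σ ℂ}
    (hF : polyNorm r F ≠ ∞) : ∃ G, polyNorm r G ≠ ∞ ∧ G + L G = F := by
  let T (k : ℕ) : MvPowerSeries σ ℂ := ((-L) ^ k) F
  have hT (k : ℕ) : polyNorm r (T k) ≤ 2⁻¹ ^ k * polyNorm r F :=
    polyNorm_pow_apply_le (fun G => (polyNorm_neg r (L G)).trans_le (hL G)) F k
  have htail (m : ℕ) : ∑' k, polyNorm r (T (k + m)) ≤ 2⁻¹ ^ m * (2 * polyNorm r F) := by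
    calc ∑' k, polyNorm r (T (k + m)) ≤ ∑' k, 2⁻¹ ^ k * (2⁻¹ ^ m * polyNorm r F) :=
          ENNReal.tsum_le_tsum fun k => (hT _).trans_eq (by rw [pow_add, mul_assoc])
      _ = _ := by rw [ENNReal.tsum_mul_right, ENNReal.tsum_geometric_two, mul_left_comm]
  have hfin : 2 * polyNorm r F ≠ ∞ := ENNReal.mul_ne_top (by simp) hF
  obtain ⟨S, hS⟩ := exists_polyNorm_sub_sum_le hr
    (ne_top_of_le_ne_top hfin (by simpa using htail 0))
  have hdefect (m : ℕ) : polyNorm r (S + L S - F) ≤ 2⁻¹ ^ m * (4 * polyNorm r F) := by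
    have hgeom : ∑ k ∈ Finset.range m, T k + L (∑ k ∈ Finset.range m, T k) = F - T m := by
      have := LinearMap.congr_fun (mul_neg_geom_sum (-L) m) F
      simpa [T, LinearMap.sum_apply, sub_neg_eq_add, Finset.sum_add_distrib] using this
    rw [mul_left_comm]
    refine polyNorm_add_apply_sub_le hL hgeom ?_ (hT m)
    rw [mul_left_comm]
    exact (hS m).trans (htail m)
  have hlim : Tendsto (fun m : ℕ => (2⁻¹ : ℝ≥0∞) ^ m * (4 * polyNorm r F)) atTop (𝓝 0) := by
    rw [← zero_mul (4 * polyNorm r F)]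
    exact ENNReal.Tendsto.mul_const (ENNReal.tendsto_pow_atTop_nhds_zero_of_lt_one (by simp))
      (.inr (ENNReal.mul_ne_top (by simp) hF))
  have hSF : S + L S = F := sub_eq_zero.1 <| (polyNorm_eq_zero hr).1 <|
    le_antisymm (ge_of_tendsto' hlim hdefect) zero_le
  exact ⟨S, ne_top_of_le_ne_top hfin (by simpa using (hS 0).trans (htail 0)), hSF⟩

end Neumann

section Partition

variable {σ κ : Type*} [Fintype κ]

lemma sum_restrict_fiber (s : (σ →₀ ℕ) → κ) (F : MvPowerSeries σ ℂ) :
    ∑ k, restrict (s ⁻¹' {k}) F = F := by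
  classical
  ext α
  simp [map_sum, coeff_restrict]

lemma sum_polyNorm_restrict_fiber [Fintype σ] (r : σ → ℝ≥0) (s : (σ →₀ ℕ) → κ)
    (F : MvPowerSeries σ ℂ) : ∑ k, polyNorm r (restrict (s ⁻¹' {k}) F) = polyNorm r F := by
  classical
  simp_rw [polyNorm]
  rw [← Summable.tsum_finsetSum fun _ _ => ENNReal.summable]
  refine tsum_congr fun α => ?_
  rw [← Finset.sum_mul, Finset.sum_eq_single (s α)] <;> simp +contextual [coeff_restrict, eq_comm]

end Partition

section Shift

variable {σ : Type*}

/-- The quotient of the division of a power series by the monomial `x^e`. -/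
def divMonomial (e : σ →₀ ℕ) : MvPowerSeries σ ℂ →ₗ[ℂ] MvPowerSeries σ ℂ where
  toFun F := fun β => coeff (β + e) F
  map_add' _ _ := rfl
  map_smul' _ _ := rfl

lemma coeff_divMonomial (e β : σ →₀ ℕ) (F : MvPowerSeries σ ℂ) :
    coeff β (divMonomial e F) = coeff (β + e) F := rfl

lemma divMonomial_mul_monomial {e : σ →₀ ℕ} {F : MvPowerSeries σ ℂ}
    (hF : ∀ α, coeff α F ≠ 0 → e ≤ α) : divMonomial e F * monomial e 1 = F := by
  classical
  ext α
  rw [MvPowerSeries.coeff_mul_monomial, coeff_divMonomial, mul_one]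
  split_ifs with h
  · rw [tsub_add_cancel_of_le h]
  · exact (not_not.1 (mt (hF α) h)).symm

lemma polyNorm_divMonomial_mul_le [Fintype σ] (r : σ → ℝ≥0) (e : σ →₀ ℕ) (F : MvPowerSeries σ ℂ) :
    polyNorm r (divMonomial e F) * (multiPow r e : ℝ≥0) ≤ polyNorm r F := by
  rw [polyNorm, ← ENNReal.tsum_mul_right]
  refine le_trans (ENNReal.tsum_le_tsum fun β => ?_) (ENNReal.tsum_comp_le_tsum_of_injective
    (add_left_injective e) fun α => ‖coeff α F‖ₑ * (multiPow r α : ℝ≥0))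
  rw [mul_assoc, ← ENNReal.coe_mul, ← multiPow_add, coeff_divMonomial]

lemma divMonomial_mem_convergent [Fintype σ] (e : σ →₀ ℕ) {F : MvPowerSeries σ ℂ}
    (hF : F ∈ convergent σ) : divMonomial e F ∈ convergent σ := by
  obtain ⟨r, hr, h⟩ := hF
  refine ⟨r, hr, fun htop => h (top_unique ?_)⟩
  simpa [htop, ENNReal.top_mul, (multiPow_pos hr e).ne'] using polyNorm_divMonomial_mul_le r e F

end Shift

section MonomialDivision

variable {σ ι : Type*}

/-- The `j`-th quotient in the division of a power series by the monomials `x^(e j)`, where the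
monomial `x^α` is divided by `x^(e j)` if `sel α = some j`. -/
def partialQuotient (e : ι → σ →₀ ℕ) (sel : (σ →₀ ℕ) → Option ι) (j : ι) :
    MvPowerSeries σ ℂ →ₗ[ℂ] MvPowerSeries σ ℂ :=
  divMonomial (e j) ∘ₗ restrict (sel ⁻¹' {some j})

lemma exists_selector (e : ι → σ →₀ ℕ) : ∃ sel : (σ →₀ ℕ) → Option ι,
    (∀ α j, sel α = some j → e j ≤ α) ∧ ∀ α, sel α = none → ∀ j, ¬ e j ≤ α := by
  have h (α : σ →₀ ℕ) : ∃ o : Option ι, (∀ j, o = some j → e j ≤ α) ∧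
      (o = none → ∀ j, ¬ e j ≤ α) := by
    by_cases hα : ∃ j, e j ≤ α
    · obtain ⟨j, hj⟩ := hα
      exact ⟨some j, by simpa using hj, by simp⟩
    · exact ⟨none, by simp, fun _ => not_exists.1 hα⟩
  choose sel h₁ h₂ using h
  exact ⟨sel, h₁, h₂⟩

variable [Fintype ι] {e : ι → σ →₀ ℕ} {sel : (σ →₀ ℕ) → Option ι}

lemma sum_partialQuotient_mul_monomial (h : ∀ α j, sel α = some j → e j ≤ α)
    (F : MvPowerSeries σ ℂ) :
    ∑ j, partialQuotient e sel j F * monomial (e j) 1 + restrict (sel ⁻¹' {none}) F = F := by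
  conv_rhs => rw [← sum_restrict_fiber sel F, Fintype.sum_option, add_comm]
  refine congrArg (· + _) (Finset.sum_congr rfl fun j _ => divMonomial_mul_monomial fun α hα => ?_)
  classical
  rw [coeff_restrict] at hα
  exact h α j (of_not_not fun h => hα (if_neg h))

lemma sum_polyNorm_partialQuotient_mul_le [Fintype σ] (r : σ → ℝ≥0) (e : ι → σ →₀ ℕ)
    (sel : (σ →₀ ℕ) → Option ι) (F : MvPowerSeries σ ℂ) :
    ∑ j, polyNorm r (partialQuotient e sel j F) * (multiPow r (e j) : ℝ≥0) ≤ polyNorm r F := by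
  rw [← sum_polyNorm_restrict_fiber r sel F, Fintype.sum_option]
  exact le_add_left (Finset.sum_le_sum fun j _ => polyNorm_divMonomial_mul_le r (e j) _)

lemma polyNorm_sum_partialQuotient_mul_le [Fintype σ] {r : σ → ℝ≥0} {g : ι → MvPowerSeries σ ℂ}
    {q : ℝ≥0∞} (hg : ∀ j, polyNorm r (g j) ≤ q * (multiPow r (e j) : ℝ≥0))
    (sel : (σ →₀ ℕ) → Option ι) (F : MvPowerSeries σ ℂ) :
    polyNorm r (∑ j, partialQuotient e sel j F * g j) ≤ q * polyNorm r F :=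
  calc polyNorm r (∑ j, partialQuotient e sel j F * g j)
      ≤ ∑ j, polyNorm r (partialQuotient e sel j F) * polyNorm r (g j) :=
        (polyNorm_sum_le _ _ _).trans (Finset.sum_le_sum fun j _ => polyNorm_mul_le _ _ _)
    _ ≤ ∑ j, polyNorm r (partialQuotient e sel j F) * (q * (multiPow r (e j) : ℝ≥0)) :=
        Finset.sum_le_sum fun j _ => mul_le_mul_right (hg j) _
    _ = q * ∑ j, polyNorm r (partialQuotient e sel j F) * (multiPow r (e j) : ℝ≥0) := by
        simp_rw [Finset.mul_sum, mul_left_comm]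
    _ ≤ q * polyNorm r F := mul_le_mul_right (sum_polyNorm_partialQuotient_mul_le r e sel F) _

end MonomialDivision

section Division

variable {σ : Type*}

/-- `e` is the exponent of the unique monomial of `F` of least `u`-weight. -/
def IsInitialExponent (u : σ → ℝ) (F : MvPowerSeries σ ℂ) (e : σ →₀ ℕ) : Prop :=
  coeff e F ≠ 0 ∧ ∀ α ≠ e, coeff α F ≠ 0 → Finsupp.weight u e < Finsupp.weight u α

variable {u : σ → ℝ}

lemma IsInitialExponent.exists_gt_mem [Finite σ] (hu : ∀ i, 0 < u i) {F : MvPowerSeries σ ℂ}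
    {e : σ →₀ ℕ} (h : IsInitialExponent u F e) :
    ∃ d > Finsupp.weight u e, (coeff e F)⁻¹ • F - monomial e 1 ∈ weightFiltration u d := by
  classical
  refine exists_gt_mem_weightFiltration hu fun α hα => ?_
  have hαe : α ≠ e := by
    rintro rfl
    simp [h.1] at hα
  refine h.2 α hαe fun hF => hα ?_
  simp [hF, MvPowerSeries.coeff_monomial, hαe]

variable [Fintype σ]

/-- Weierstrass–Hironaka division: on a small polydisc, replacing the initial monomials `x^(e j)` by
the series `f j` in the monomial division is a small perturbation of the identity. -/
theorem exists_eq_sum_mul_add_remainder {ι : Type*} [Fintype ι] (hu : ∀ i, 0 < u i)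
    {f : ι → MvPowerSeries σ ℂ} (hf : ∀ j, f j ∈ convergent σ) {e : ι → σ →₀ ℕ}
    (he : ∀ j, IsInitialExponent u (f j) (e j)) {a : MvPowerSeries σ ℂ} (ha : a ∈ convergent σ) :
    ∃ (q : ι → MvPowerSeries σ ℂ) (b : MvPowerSeries σ ℂ), (∀ j, q j ∈ convergent σ) ∧
      b ∈ convergent σ ∧ a = ∑ j, q j * f j + b ∧ ∀ α, coeff α b ≠ 0 → ∀ j, ¬ e j ≤ α := by
  classical
  obtain ⟨sel, hsome, hnone⟩ := exists_selector e
  let c (j : ι) : ℂ := (coeff (e j) (f j))⁻¹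
  let tail (j : ι) : MvPowerSeries σ ℂ := c j • f j - monomial (e j) 1
  have htail (j : ι) : ∀ᶠ t : ℝ≥0 in 𝓝[>] 0,
      polyNorm (fun i => t ^ u i) (tail j) ≤ 2⁻¹ * (t ^ Finsupp.weight u (e j) : ℝ≥0) := by
    obtain ⟨d, hd, hmem⟩ := (he j).exists_gt_mem hu
    simpa using eventually_polyNorm_le hu hd (sub_mem (Subalgebra.smul_mem _ (hf j) _)
      (monomial_mem_convergent _ _)) hmem (η := 2⁻¹) (by simp)
  obtain ⟨t, ⟨ht, hat⟩, htpos : 0 < t⟩ := (((eventually_all.2 htail).and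
    (eventually_polyNorm_ne_top hu ha)).and self_mem_nhdsWithin).exists
  let r : σ → ℝ≥0 := fun i => t ^ u i
  let L : MvPowerSeries σ ℂ →ₗ[ℂ] MvPowerSeries σ ℂ :=
    ∑ j, LinearMap.mulRight ℂ (tail j) ∘ₗ partialQuotient e sel j
  have hL_apply (G : MvPowerSeries σ ℂ) : L G = ∑ j, partialQuotient e sel j G * tail j := by
    simp [L]
  have hL (G : MvPowerSeries σ ℂ) : polyNorm r (L G) ≤ 2⁻¹ * polyNorm r G := by
    rw [hL_apply]
    exact polyNorm_sum_partialQuotient_mul_le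
      (fun j => (ht j).trans_eq (by rw [multiPow_rpow u htpos])) sel G
  obtain ⟨g, hg, rfl⟩ := exists_add_eq_of_polyNorm_le_half (fun i => NNReal.rpow_pos htpos) hL hat
  have hgconv : g ∈ convergent σ := ⟨r, fun i => NNReal.rpow_pos htpos, hg⟩
  refine ⟨fun j => c j • partialQuotient e sel j g, restrict (sel ⁻¹' {none}) g,
    fun j => Subalgebra.smul_mem _ (divMonomial_mem_convergent _
      (restrict_mem_convergent _ hgconv)) _, restrict_mem_convergent _ hgconv, ?_, fun α hα =>
    hnone α ?_⟩
  · nth_rewrite 1 [← sum_partialQuotient_mul_monomial hsome g]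
    rw [hL_apply, add_right_comm, ← Finset.sum_add_distrib]
    refine congrArg (· + _) (Finset.sum_congr rfl fun j _ => ?_)
    rw [← mul_add, add_sub_cancel, smul_mul_assoc, mul_smul_comm]
  · rw [coeff_restrict] at hα
    exact of_not_not fun h => hα (if_neg h)

end Division

section InitialExponent

variable {σ : Type*} {u : σ → ℝ}

/-- The values of an injective weight come from positive reals linearly independent over `ℚ`. -/
lemma exists_pos_injective_weight (σ : Type*) [Finite σ] :
    ∃ u : σ → ℝ, (∀ i, 0 < u i) ∧ Function.Injective (Finsupp.weight (R := ℕ) u) := by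
  have := Fintype.ofFinite σ
  have hrank : ((Fintype.card σ : ℕ) : Cardinal) ≤ Module.rank ℚ ℝ := by
    rw [Real.rank_rat_real]
    exact (Cardinal.natCast_le_aleph0).trans Cardinal.aleph0_le_continuum
  obtain ⟨s, hs, hli⟩ := le_rank_iff_exists_linearIndependent_finset.1 hrank
  let e : σ ≃ s := Fintype.equivOfCardEq (by simp [hs])
  have hv : LinearIndependent ℚ fun i => (e i : ℝ) := hli.comp e e.injective
  let sgn (i : σ) : ℚˣ := if 0 < (e i : ℝ) then 1 else -1
  refine ⟨fun i => sgn i • (e i : ℝ), fun i => ?_, fun α β h => ?_⟩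
  · rcases lt_trichotomy 0 (e i : ℝ) with h | h | h
    · simp [sgn, h]
    · exact absurd h.symm (hv.ne_zero i)
    · simp [sgn, h.not_gt, h]
  · refine ((hv.units_smul sgn).restrict_scalars' ℕ) ?_
    simpa [Finsupp.weight_apply, Finsupp.linearCombination_apply] using h

variable {F G : MvPowerSeries σ ℂ} {e : σ →₀ ℕ}

lemma exists_isInitialExponent [Finite σ] (hu : ∀ i, 0 < u i)
    (hinj : Function.Injective (Finsupp.weight (R := ℕ) u)) (hF : F ≠ 0) :
    ∃ e, IsInitialExponent u F e := by
  obtain ⟨β, hβ⟩ : ∃ β, coeff β F ≠ 0 := by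
    contrapose! hF
    exact MvPowerSeries.ext hF
  let S := {α : σ →₀ ℕ | coeff α F ≠ 0 ∧ Finsupp.weight u α ≤ Finsupp.weight u β}
  have hS : S.Finite := (finite_setOf_weight_le hu _).subset fun α h => h.2
  obtain ⟨e, he, hmin⟩ := hS.exists_minimalFor (Finsupp.weight u) S ⟨β, hβ, le_rfl⟩
  refine ⟨e, he.1, fun α hne hα => lt_of_le_of_ne ?_ fun h => hne (hinj h.symm)⟩
  by_contra! h
  exact h.not_ge (hmin ⟨hα, h.le.trans he.2⟩ h.le)

lemma IsInitialExponent.sub {d : ℝ} (hF : IsInitialExponent u F e)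
    (hG : G ∈ weightFiltration u d) (hd : Finsupp.weight u e < d) :
    IsInitialExponent u (F - G) e := by
  have hcoeff {α : σ →₀ ℕ} (h : Finsupp.weight u α ≤ Finsupp.weight u e) :
      coeff α (F - G) = coeff α F := by
    have : coeff α G = 0 := of_not_not fun hα => (h.trans_lt hd).not_ge (hG α hα)
    rw [map_sub, this, sub_zero]
  refine ⟨by rw [hcoeff le_rfl]; exact hF.1, fun α hne hα => ?_⟩
  by_contra! h
  exact h.not_gt (hF.2 α hne (hcoeff h ▸ hα))

end InitialExponent

section StandardBasis

variable {σ : Type*} [Fintype σ] {u : σ → ℝ} {I : Ideal (convergent σ)}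

/-- Elements `f e` of an ideal `I`, indexed by a finite set `E` of initial exponents that generates
all initial exponents of elements of `I`. -/
structure IsStandardBasis (u : σ → ℝ) (I : Ideal (convergent σ)) {E : Finset (σ →₀ ℕ)}
    (f : E → convergent σ) : Prop where
  mem (e : E) : f e ∈ I
  isInitialExponent (e : E) : IsInitialExponent u (f e : MvPowerSeries σ ℂ) e
  exists_le {g : convergent σ} (hg : g ∈ I) {α : σ →₀ ℕ} :
    IsInitialExponent u (g : MvPowerSeries σ ℂ) α → ∃ e ∈ E, e ≤ α

lemma exists_isStandardBasis (u : σ → ℝ) (I : Ideal (convergent σ)) :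
    ∃ (E : Finset (σ →₀ ℕ)) (f : E → convergent σ), IsStandardBasis u I f := by
  let S : Set (σ →₀ ℕ) := {α | ∃ g ∈ I, IsInitialExponent u (g : MvPowerSeries σ ℂ) α}
  have hfin : {α | Minimal (· ∈ S) α}.Finite :=
    (setOfPred_minimal_antichain (· ∈ S)).finite_of_partiallyWellOrderedOn
      (Set.isPWO_of_wellQuasiOrderedLE _)
  have hmem (e : hfin.toFinset) : (e : σ →₀ ℕ) ∈ S := (hfin.mem_toFinset.1 e.2).prop
  choose f hfI hf using hmem
  refine ⟨hfin.toFinset, f, hfI, hf, fun {g} hg α hα => ?_⟩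
  obtain ⟨e, hle, hmin⟩ := exists_minimal_le_of_wellFoundedLT (· ∈ S) α ⟨g, hg, hα⟩
  exact ⟨e, hfin.mem_toFinset.2 hmin, hle⟩

variable {E : Finset (σ →₀ ℕ)} {f : E → convergent σ}

/-- The remainder of the division of `a` by the standard basis vanishes, since its initial exponent
would be that of an element of `I`. -/
lemma IsStandardBasis.mem_span (hf : IsStandardBasis u I f) (hu : ∀ i, 0 < u i)
    (hinj : Function.Injective (Finsupp.weight (R := ℕ) u)) {a : convergent σ}
    (ha : ∀ d : ℝ, ∃ g ∈ I, (a - g : MvPowerSeries σ ℂ) ∈ weightFiltration u d) :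
    a ∈ Ideal.span (Set.range f) := by
  obtain ⟨q, b, hq, -, hab, hrem⟩ :=
    exists_eq_sum_mul_add_remainder hu (fun e => (f e).2) hf.isInitialExponent a.2
  let s : convergent σ := ∑ e, (⟨q e, hq e⟩ : convergent σ) * f e
  have hs : s ∈ Ideal.span (Set.range f) :=
    sum_mem fun e _ => Ideal.mul_mem_left _ _ (Ideal.subset_span ⟨e, rfl⟩)
  have has : (a : MvPowerSeries σ ℂ) = s + b := by simpa [s] using hab
  suffices b = 0 by
    rwa [show a = s from Subtype.ext (by rw [has, this, add_zero])]
  by_contra hne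
  obtain ⟨α, hα⟩ := exists_isInitialExponent hu hinj hne
  obtain ⟨g, hg, hag⟩ := ha (Finsupp.weight u α + 1)
  have hgs : g - s ∈ I :=
    sub_mem hg ((Ideal.span_le.2 (by rintro _ ⟨e, rfl⟩; exact hf.mem e)) hs)
  have hinit : IsInitialExponent u ((g - s : convergent σ) : MvPowerSeries σ ℂ) α := by
    convert hα.sub hag (lt_add_one _) using 1
    rw [has, Subalgebra.coe_sub]
    ring
  obtain ⟨e, he, hle⟩ := hf.exists_le hgs hinit
  exact hrem α hα.1 ⟨e, he⟩ hle

lemma IsStandardBasis.span_eq (hf : IsStandardBasis u I f) (hu : ∀ i, 0 < u i)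
    (hinj : Function.Injective (Finsupp.weight (R := ℕ) u)) : Ideal.span (Set.range f) = I := by
  refine le_antisymm (Ideal.span_le.2 (by rintro _ ⟨e, rfl⟩; exact hf.mem e)) fun a ha =>
    hf.mem_span hu hinj fun d => ⟨a, ha, ?_⟩
  rw [sub_self]
  exact zero_mem _

/-- Rückert's basis theorem. -/
instance : IsNoetherianRing (convergent σ) := by
  obtain ⟨u, hu, hinj⟩ := exists_pos_injective_weight σ
  refine (isNoetherianRing_iff_ideal_fg _).2 fun I => ?_
  obtain ⟨E, f, hf⟩ := exists_isStandardBasis u I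
  classical
  exact ⟨Finset.univ.image f, by simpa using hf.span_eq hu hinj⟩

/-- Krull's intersection theorem: ideals are closed in the topology of the weight filtration. -/
theorem mem_of_forall_exists_sub_mem_weightFiltration {v : σ → ℝ} {a : convergent σ}
    (ha : ∀ d : ℝ, ∃ g ∈ I, (a - g : MvPowerSeries σ ℂ) ∈ weightFiltration v d) : a ∈ I := by
  obtain ⟨u, hu, hinj⟩ := exists_pos_injective_weight σ
  obtain ⟨κ, hκ, hκuv⟩ := exists_pos_mul_le hu v
  obtain ⟨E, f, hf⟩ := exists_isStandardBasis u I
  rw [← hf.span_eq hu hinj]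
  refine hf.mem_span hu hinj fun d => ?_
  obtain ⟨g, hg, hag⟩ := ha (d / κ)
  exact ⟨g, hg, fun α hα => ((div_le_iff₀' hκ).1 (hag α hα)).trans (mul_weight_le hκuv α)⟩

end StandardBasis

section VectorField

lemma coeff_X_mul_pderiv {σ : Type*} (i : σ) (F : MvPowerSeries σ ℂ) (α : σ →₀ ℕ) :
    coeff α (X i * pderiv ℂ i F) = α i * coeff α F := by
  classical
  rw [MvPowerSeries.X, mul_comm, MvPowerSeries.coeff_mul_monomial, mul_one]
  split_ifs with h
  · have hi : 1 ≤ α i := by simpa using h i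
    rw [MvPowerSeries.coeff_pderiv, tsub_add_cancel_of_le h, mul_comm]
    simp [Nat.cast_sub hi]
  · have : α i = 0 := by
      by_contra h'
      exact h (Finsupp.single_le_iff.2 (Nat.one_le_iff_ne_zero.2 h'))
    simp [this]

variable {σ : Type*} [Fintype σ]

/-- The derivation `∑ δᵢ ∂/∂xᵢ` of the ring of formal power series, as a linear map. -/
def vectorField (δ : σ → MvPowerSeries σ ℂ) : Module.End ℂ (MvPowerSeries σ ℂ) :=
  ∑ i, LinearMap.mulLeft ℂ (δ i) ∘ₗ (pderiv ℂ i).toLinearMap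

lemma vectorField_apply (δ : σ → MvPowerSeries σ ℂ) (F : MvPowerSeries σ ℂ) :
    vectorField δ F = ∑ i, δ i * pderiv ℂ i F := by
  simp [vectorField]

lemma vectorField_mul (δ : σ → MvPowerSeries σ ℂ) (F G : MvPowerSeries σ ℂ) :
    vectorField δ (F * G) = vectorField δ F * G + F * vectorField δ G := by
  simp only [vectorField_apply, Derivation.leibniz, smul_eq_mul, Finset.sum_mul, Finset.mul_sum,
    ← Finset.sum_add_distrib]
  exact Finset.sum_congr rfl fun i _ => by ring

lemma vectorField_X (δ : σ → MvPowerSeries σ ℂ) (i : σ) : vectorField δ (X i) = δ i := by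
  classical
  simp [vectorField_apply, MvPowerSeries.pderiv_X, Pi.single_apply]

lemma vectorField_smul_X (w : σ → ℂ) (F : MvPowerSeries σ ℂ) :
    vectorField (fun i => w i • X i) F = multiplier (Finsupp.weight w) F := by
  ext α
  simp [vectorField_apply, coeff_X_mul_pderiv, coeff_multiplier,
    Finsupp.weight_eq_sum, Finset.sum_mul, mul_assoc, mul_left_comm]

variable {δ : σ → MvPowerSeries σ ℂ}

lemma vectorField_eq_multiplier_add (δ : σ → MvPowerSeries σ ℂ) (w : σ → ℂ)
    (F : MvPowerSeries σ ℂ) : vectorField δ F = multiplier (Finsupp.weight w) F +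
      ∑ i, (δ i - w i • X i) * pderiv ℂ i F := by
  simp only [← vectorField_smul_X, vectorField_apply, ← Finset.sum_add_distrib, ← add_mul,
    add_sub_cancel]

lemma vectorField_mem_convergent (hδ : ∀ i, δ i ∈ convergent σ) {F : MvPowerSeries σ ℂ}
    (hF : F ∈ convergent σ) : vectorField δ F ∈ convergent σ := by
  rw [vectorField_apply]
  exact sum_mem fun i _ => mul_mem (hδ i) (pderiv_mem_convergent i hF)

lemma sum_mul_pderiv_mem_weightFiltration {u : σ → ℝ} {c a : ℝ}
    (hδ : ∀ i, δ i ∈ weightFiltration u (u i + a)) {F : MvPowerSeries σ ℂ}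
    (hF : F ∈ weightFiltration u c) : ∑ i, δ i * pderiv ℂ i F ∈ weightFiltration u (c + a) :=
  sum_mem fun i _ => by
    convert mul_mem_weightFiltration (hδ i) (pderiv_mem_weightFiltration i hF) using 1
    ring_nf

end VectorField

section LinearAlgebra

variable {K V : Type*} [Field K] [AddCommGroup V] [Module K V]

lemma le_map_pow_of_le_map {T : Module.End K V} {W : Submodule K V} (h : W ≤ W.map T) (N : ℕ) :
    W ≤ W.map (T ^ N) := by
  induction N with
  | zero => simp [Module.End.one_eq_id]
  | succ N ih =>
    rw [pow_succ, Module.End.mul_eq_comp, Submodule.map_comp]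
    exact ih.trans (Submodule.map_mono h)

lemma aeval_sub_aeval_apply_mem {D E : Module.End K V} {p q : Submodule K V} (hE : p ≤ p.comap E)
    (hD : q ≤ q.comap D) (hDE : p ≤ q.comap (D - E)) (P : K[X]) {x : V} (hx : x ∈ p) :
    aeval D P x - aeval E P x ∈ q := by
  induction P using Polynomial.induction_on' with
  | add P Q hP hQ =>
    simpa only [map_add, LinearMap.add_apply, add_sub_add_comm] using add_mem hP hQ
  | monomial k a =>
    suffices (D ^ k) x - (E ^ k) x ∈ q by
      simpa [Polynomial.aeval_monomial, Module.End.mul_apply, ← smul_sub] using q.smul_mem a this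
    induction k with
    | zero => simp
    | succ k ih =>
      have hEk : (E ^ k) x ∈ p := by
        simpa using Polynomial.aeval_apply_smul_mem_of_le_comap hx (Polynomial.X ^ k) E hE
      have := add_mem (show D ((D ^ k) x - (E ^ k) x) ∈ q from hD ih)
        (show (D - E) ((E ^ k) x) ∈ q from hDE hEk)
      simpa [pow_succ', Module.End.mul_apply] using this

lemma mem_of_sum_mem_of_mem_maxGenEigenspace {T : Module.End K V} {p : Submodule K V}
    (hp : p ≤ p.comap T) {s : Finset K} {g : K → V} (hg : ∀ μ ∈ s, g μ ∈ T.maxGenEigenspace μ)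
    (hsum : ∑ μ ∈ s, g μ ∈ p) {l : K} (hl : l ∈ s) : g l ∈ p := by
  classical
  simp_rw [Module.End.mem_maxGenEigenspace] at hg
  choose! k hk using hg
  let Q (μ : K) : K[X] := (Polynomial.X - Polynomial.C μ) ^ k μ
  have hQ {μ : K} (hμ : μ ∈ s) : aeval T (Q μ) (g μ) = 0 := by
    simpa [Q, Algebra.algebraMap_eq_smul_one] using hk μ hμ
  obtain ⟨a, b, hab⟩ : IsCoprime (Q l) (∏ μ ∈ s.erase l, Q μ) :=
    IsCoprime.prod_right fun μ hμ => (Polynomial.isCoprime_X_sub_C_of_isUnit_sub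
      (sub_ne_zero.2 (Finset.ne_of_mem_erase hμ).symm).isUnit).pow
  let P := b * ∏ μ ∈ s.erase l, Q μ
  have hPl : aeval T P (g l) = g l := by
    have := congrArg (fun q => aeval T q (g l)) hab
    simpa [P, hQ hl] using this
  have hPμ {μ : K} (hμ : μ ∈ s.erase l) : aeval T P (g μ) = 0 := by
    have : P = b * (∏ ν ∈ (s.erase l).erase μ, Q ν) * Q μ := by
      rw [mul_assoc, Finset.prod_erase_mul _ _ hμ]
    rw [this, map_mul, Module.End.mul_apply, hQ (Finset.mem_of_mem_erase hμ), map_zero]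
  have hP : aeval T P (∑ μ ∈ s, g μ) = g l := by
    rw [map_sum, ← Finset.add_sum_erase _ _ hl, hPl, Finset.sum_eq_zero fun μ => hPμ, add_zero]
  exact hP ▸ Polynomial.aeval_apply_smul_mem_of_le_comap hsum P T hp

end LinearAlgebra

section Homological

variable {σ : Type*}

lemma weight_ofReal (w : σ → ℝ≥0) (α : σ →₀ ℕ) :
    Finsupp.weight (fun i => ((w i : ℝ) : ℂ)) α = ((Finsupp.weight w α : ℝ≥0) : ℝ) := by
  simp [Finsupp.weight_apply, Finsupp.sum]

lemma norm_ofReal_sub_inv_le {l : ℂ} {x : ℝ≥0} (h : 2 * ‖l‖ + 2 ≤ x) :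
    ‖((x : ℝ) - l : ℂ)⁻¹‖ ≤ 1 ∧ x * ‖((x : ℝ) - l : ℂ)⁻¹‖ ≤ 2 := by
  have hge : (x : ℝ) - ‖l‖ ≤ ‖((x : ℝ) - l : ℂ)‖ := by
    simpa using norm_sub_norm_le ((x : ℝ) : ℂ) l
  have hpos : (0 : ℝ) < ‖((x : ℝ) - l : ℂ)‖ := by linarith [norm_nonneg l]
  rw [norm_inv, ← div_eq_mul_inv, div_le_iff₀ hpos]
  exact ⟨inv_le_one_of_one_le₀ (by linarith [norm_nonneg l]), by linarith⟩

/-- An inverse of `∑ wᵢ xᵢ ∂ᵢ - l` on the exponents of large `u`-weight, with the estimates that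
make it lose no more than it gains. -/
lemma exists_multiplier {u : σ → ℝ} {w : σ → ℝ≥0} {l : ℂ} {c : ℝ}
    (h : ∀ α : σ →₀ ℕ, c ≤ Finsupp.weight u α → 2 * ‖l‖ + 2 ≤ Finsupp.weight w α) :
    ∃ m : (σ →₀ ℕ) → ℂ, (∀ α, ‖m α‖ ≤ 1) ∧ (∀ α, Finsupp.weight w α * ‖m α‖₊ ≤ 2) ∧
      (∀ α, m α ≠ 0 → c ≤ Finsupp.weight u α) ∧
      ∀ α, c ≤ Finsupp.weight u α → (((Finsupp.weight w α : ℝ≥0) : ℝ) - l) * m α = 1 := by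
  classical
  let m (α : σ →₀ ℕ) : ℂ := if c ≤ Finsupp.weight u α then
    (((Finsupp.weight w α : ℝ≥0) : ℝ) - l : ℂ)⁻¹ else 0
  have hm_pos {α : σ →₀ ℕ} (hα : c ≤ Finsupp.weight u α) :
      m α = (((Finsupp.weight w α : ℝ≥0) : ℝ) - l : ℂ)⁻¹ := if_pos hα
  have hm_neg {α : σ →₀ ℕ} (hα : ¬c ≤ Finsupp.weight u α) : m α = 0 := if_neg hα
  refine ⟨m, fun α => ?_, fun α => ?_, fun α hα => of_not_not fun h => hα (hm_neg h),
    fun α hα => ?_⟩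
  · by_cases hα : c ≤ Finsupp.weight u α
    · exact hm_pos hα ▸ (norm_ofReal_sub_inv_le (h α hα)).1
    · simp [hm_neg hα]
  · by_cases hα : c ≤ Finsupp.weight u α
    · exact_mod_cast hm_pos hα ▸ (norm_ofReal_sub_inv_le (h α hα)).2
    · simp [hm_neg hα]
  · rw [hm_pos hα]
    refine mul_inv_cancel₀ (sub_ne_zero.2 fun heq => ?_)
    have := h α hα
    rw [← heq, Complex.norm_real, NNReal.norm_eq] at this
    linarith [(Finsupp.weight w α).coe_nonneg]

lemma multiplier_weight_sub_smul {u : σ → ℝ} {w : σ → ℝ≥0} {c : ℝ} {l : ℂ}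
    {m : (σ →₀ ℕ) → ℂ}
    (hm : ∀ α, c ≤ Finsupp.weight u α → (((Finsupp.weight w α : ℝ≥0) : ℝ) - l) * m α = 1)
    {G : MvPowerSeries σ ℂ} (hG : G ∈ weightFiltration u c) :
    multiplier (Finsupp.weight fun i => (w i : ℂ)) (multiplier m G) - l • multiplier m G = G := by
  ext α
  by_cases hα : coeff α G = 0
  · simp [coeff_multiplier, hα]
  · simp only [map_sub, map_smul, coeff_multiplier, smul_eq_mul]
    rw [weight_ofReal]
    linear_combination coeff α G * hm α (hG α hα)

variable [Fintype σ]

lemma polyNorm_sum_mul_pderiv_multiplier_le {r w : σ → ℝ≥0} {ε : σ → MvPowerSeries σ ℂ} {η C : ℝ≥0}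
    (hε : ∀ i, polyNorm r (ε i) ≤ η * (w i * r i)) {m : (σ →₀ ℕ) → ℂ}
    (hm : ∀ α, Finsupp.weight w α * ‖m α‖₊ ≤ C) (F : MvPowerSeries σ ℂ) :
    polyNorm r (∑ i, ε i * pderiv ℂ i (multiplier m F)) ≤ η * C * polyNorm r F :=
  calc polyNorm r (∑ i, ε i * pderiv ℂ i (multiplier m F))
      ≤ ∑ i, polyNorm r (ε i) * polyNorm r (pderiv ℂ i (multiplier m F)) :=
        (polyNorm_sum_le _ _ _).trans (Finset.sum_le_sum fun i _ => polyNorm_mul_le _ _ _)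
    _ ≤ ∑ i, η * (w i * r i) * polyNorm r (pderiv ℂ i (multiplier m F)) :=
        Finset.sum_le_sum fun i _ => mul_le_mul_left (hε i) _
    _ = η * ∑' α, (Finsupp.weight w α : ℝ≥0) *
          (‖m α * coeff α F‖ₑ * (multiPow r α : ℝ≥0)) := by
        have := sum_mul_polyNorm_pderiv r w (multiplier m F)
        simp only [coeff_multiplier] at this
        rw [← this, Finset.mul_sum]
        simp only [mul_assoc]
    _ ≤ η * ∑' α, C * (‖coeff α F‖ₑ * (multiPow r α : ℝ≥0)) := by
        refine mul_le_mul_right (ENNReal.tsum_le_tsum fun α => ?_) _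
        rw [enorm_mul, mul_assoc ‖m α‖ₑ, ← mul_assoc, enorm_eq_nnnorm, ← ENNReal.coe_mul]
        exact mul_le_mul_left (ENNReal.coe_le_coe.2 (hm α)) _
    _ = η * C * polyNorm r F := by rw [ENNReal.tsum_mul_left, ← mul_assoc, polyNorm]

/-- The convergent power series all of whose exponents have `u`-weight at least `c`. -/
def convergentFiltration (u : σ → ℝ) (c : ℝ) : Submodule ℂ (MvPowerSeries σ ℂ) :=
  Subalgebra.toSubmodule (convergent σ) ⊓ weightFiltration u c

variable {u : σ → ℝ} {w : σ → ℝ≥0}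

lemma exists_polyNorm_rpow_le (hu : ∀ i, 0 < u i) (hw : ∀ i, 0 < w i)
    {ε : σ → MvPowerSeries σ ℂ} (hε : ∀ i, ε i ∈ convergentFiltration u (u i + 1))
    {F : MvPowerSeries σ ℂ} (hF : F ∈ convergent σ) {η : ℝ≥0} (hη : 0 < η) :
    ∃ t : ℝ≥0, 0 < t ∧ polyNorm (fun i => t ^ u i) F ≠ ∞ ∧
      ∀ i, polyNorm (fun i => t ^ u i) (ε i) ≤ η * (w i * (t ^ u i : ℝ≥0)) := by
  have hεsmall (i : σ) : ∀ᶠ t : ℝ≥0 in 𝓝[>] 0,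
      polyNorm (fun i => t ^ u i) (ε i) ≤ η * (w i * (t ^ u i : ℝ≥0)) := by
    simpa [mul_assoc] using eventually_polyNorm_le hu (lt_add_one (u i)) (hε i).1 (hε i).2
      (mul_pos hη (hw i))
  obtain ⟨t, ⟨ht, hFt⟩, htpos⟩ := (((eventually_all.2 hεsmall).and
    (eventually_polyNorm_ne_top hu hF)).and self_mem_nhdsWithin).exists
  exact ⟨t, htpos, hFt, ht⟩

/-- With `m` the inverse of the semisimple part `∑ wᵢ xᵢ ∂ᵢ - l`, the preimage is `m G` where `G`
solves `G + ∑ εᵢ ∂ᵢ (m G) = F`, a contractive equation on a small polydisc. -/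
lemma convergentFiltration_le_map (hu : ∀ i, 0 < u i) (hw : ∀ i, 0 < w i)
    {δ : σ → MvPowerSeries σ ℂ}
    (hδ : ∀ i, δ i - (w i : ℂ) • X i ∈ convergentFiltration u (u i + 1)) {l : ℂ} {c : ℝ}
    (h : ∀ α : σ →₀ ℕ, c ≤ Finsupp.weight u α → 2 * ‖l‖ + 2 ≤ Finsupp.weight w α) :
    convergentFiltration u c ≤
      (convergentFiltration u c).map (vectorField δ - l • (1 : Module.End ℂ _)) := by
  rintro F ⟨hF, hFc⟩
  obtain ⟨m, hm_le, hm_weight, hm_supp, hm_inv⟩ := exists_multiplier h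
  obtain ⟨t, ht, hFt, hεt⟩ := exists_polyNorm_rpow_le hu hw hδ hF (η := 4⁻¹) (by simp)
  let L : MvPowerSeries σ ℂ →ₗ[ℂ] MvPowerSeries σ ℂ :=
    vectorField (fun i => δ i - (w i : ℂ) • X i) ∘ₗ multiplier m
  have hL_apply (G : MvPowerSeries σ ℂ) :
      L G = ∑ i, (δ i - (w i : ℂ) • X i) * pderiv ℂ i (multiplier m G) :=
    vectorField_apply _ _
  obtain ⟨G, hG, hGF⟩ : ∃ G, polyNorm (fun i => t ^ u i) G ≠ ∞ ∧ G + L G = F := by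
    refine exists_add_eq_of_polyNorm_le_half (fun i => NNReal.rpow_pos ht) (fun G => ?_) hFt
    rw [hL_apply]
    convert polyNorm_sum_mul_pderiv_multiplier_le hεt hm_weight G using 2
    rw [← ENNReal.coe_mul]
    norm_num
  have hmG : multiplier m G ∈ weightFiltration u c := fun α hα => hm_supp α (left_ne_zero_of_mul hα)
  have hGc : G ∈ weightFiltration u c := by
    rw [eq_sub_of_add_eq hGF, hL_apply]
    exact sub_mem hFc (weightFiltration_anti u (le_add_of_nonneg_right zero_le_one)
      (sum_mul_pderiv_mem_weightFiltration (fun i => (hδ i).2) hmG))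
  have hmG_conv : multiplier m G ∈ convergent σ := by
    refine ⟨fun i => t ^ u i, fun i => NNReal.rpow_pos ht,
      ne_top_of_le_ne_top hG (polyNorm_le_of_coeff_le fun α => ?_)⟩
    rw [coeff_multiplier, norm_mul]
    exact mul_le_of_le_one_left (norm_nonneg _) (hm_le α)
  refine ⟨multiplier m G, ⟨hmG_conv, hmG⟩, ?_⟩
  rw [← hGF, LinearMap.sub_apply, vectorField_eq_multiplier_add δ (fun i => (w i : ℂ)), hL_apply,
    add_sub_right_comm]
  exact congrArg (· + _) (multiplier_weight_sub_smul hm_inv hGc)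

end Homological

section EigenCoordinates

lemma exists_forall_le_weight {σ : Type*} [Finite σ] (u : σ → ℝ) {v : σ → ℝ} (hv : ∀ i, 0 < v i)
    (b : ℝ) : ∃ c : ℝ, ∀ α : σ →₀ ℕ, c ≤ Finsupp.weight u α → b ≤ Finsupp.weight v α := by
  obtain ⟨κ, hκ, h⟩ := exists_pos_mul_le hv u
  refine ⟨b / κ, fun α hα => ?_⟩
  rw [div_le_iff₀' hκ] at hα
  exact hα.trans (mul_weight_le h α)

lemma aeval_multiplier {σ : Type*} (m : (σ →₀ ℕ) → ℂ) (P : ℂ[X]) (F : MvPowerSeries σ ℂ) :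
    aeval (multiplier m) P F = multiplier (fun α => P.eval (m α)) F := by
  induction P using Polynomial.induction_on' with
  | add P Q hP hQ => ext α; simp [hP, hQ, coeff_multiplier, add_mul]
  | monomial k a =>
    have hpow : (multiplier m ^ k) F = multiplier (fun α => m α ^ k) F := by
      induction k with
      | zero => ext α; simp [coeff_multiplier]
      | succ k ih => ext α; simp [pow_succ', Module.End.mul_apply, ih, coeff_multiplier, mul_assoc]
    ext α
    simp [Polynomial.aeval_monomial, Module.End.mul_apply, hpow, coeff_multiplier, mul_assoc]

variable {σ : Type*} [Fintype σ] {u : σ → ℝ} {w : σ → ℂ} {δ : σ → MvPowerSeries σ ℂ}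

lemma weightFiltration_le_comap_vectorField_sub
    (hδ : ∀ i, δ i - w i • X i ∈ weightFiltration u (u i + 1)) (c : ℝ) :
    weightFiltration u c ≤ (weightFiltration u (c + 1)).comap
      (vectorField δ - multiplier (Finsupp.weight w)) := fun F hF => by
  rw [Submodule.mem_comap, LinearMap.sub_apply, vectorField_eq_multiplier_add δ w,
    add_sub_cancel_left]
  exact sum_mul_pderiv_mem_weightFiltration hδ hF

lemma weightFiltration_le_comap_vectorField
    (hδ : ∀ i, δ i - w i • X i ∈ weightFiltration u (u i + 1)) (c : ℝ) :
    weightFiltration u c ≤ (weightFiltration u c).comap (vectorField δ) := fun F hF => by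
  have := add_mem (weightFiltration_anti u (le_add_of_nonneg_right zero_le_one)
    (weightFiltration_le_comap_vectorField_sub hδ c hF))
    (multiplier_mem_weightFiltration (Finsupp.weight w) hF)
  simpa using this

lemma aeval_vectorField_sub_mem (hδ : ∀ i, δ i - w i • X i ∈ weightFiltration u (u i + 1)) {c : ℝ}
    (P : ℂ[X]) {F : MvPowerSeries σ ℂ} (hF : F ∈ weightFiltration u c) :
    aeval (vectorField δ) P F - aeval (multiplier (Finsupp.weight w)) P F ∈
      weightFiltration u (c + 1) :=
  aeval_sub_aeval_apply_mem (fun _ => multiplier_mem_weightFiltration _)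
    (weightFiltration_le_comap_vectorField hδ _) (weightFiltration_le_comap_vectorField_sub hδ c) P
    hF

lemma aeval_vectorField_X_sub_mem (hδ : ∀ i, δ i - w i • X i ∈ weightFiltration u (u i + 1))
    (P : ℂ[X]) (i : σ) :
    aeval (vectorField δ) P (X i) - P.eval (w i) • X i ∈ weightFiltration u (u i + 1) := by
  classical
  convert aeval_vectorField_sub_mem hδ P (X_mem_weightFiltration u i) using 2
  ext α
  rw [aeval_multiplier, coeff_multiplier, map_smul, MvPowerSeries.coeff_X, smul_eq_mul]
  split_ifs with h
  · simp [h, Finsupp.weight_single]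
  · simp

lemma exists_aeval_vectorField_mem (hu : ∀ i, 0 < u i)
    (hδ : ∀ i, δ i - w i • X i ∈ weightFiltration u (u i + 1)) (k : ℝ) :
    ∃ P : ℂ[X], P ≠ 0 ∧ ∀ F, aeval (vectorField δ) P F ∈ weightFiltration u k := by
  let S := (finite_setOf_weight_le hu k).toFinset
  let Q : ℂ[X] := ∏ α ∈ S, (Polynomial.X - Polynomial.C (Finsupp.weight w α))
  have hQ_step {c : ℝ} {F : MvPowerSeries σ ℂ} (hF : F ∈ weightFiltration u c) :
      aeval (vectorField δ) Q F ∈ weightFiltration u (min (c + 1) k) := by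
    have hE : aeval (multiplier (Finsupp.weight w)) Q F ∈ weightFiltration u k := by
      intro α hα
      by_contra! hlt
      refine hα ?_
      rw [aeval_multiplier, coeff_multiplier, Polynomial.eval_prod, Finset.prod_eq_zero
        (i := α) (by simpa [S] using hlt.le) (by simp), zero_mul]
    rw [← sub_add_cancel (aeval (vectorField δ) Q F)]
    exact add_mem (weightFiltration_anti u (min_le_left _ _) (aeval_vectorField_sub_mem hδ Q hF))
      (weightFiltration_anti u (min_le_right _ _) hE)
  have hQ_pow (N : ℕ) (F : MvPowerSeries σ ℂ) :
      aeval (vectorField δ) (Q ^ N) F ∈ weightFiltration u (min N k) := by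
    induction N with
    | zero =>
      exact weightFiltration_anti u (by simp) (mem_weightFiltration_zero hu _)
    | succ N ih =>
      rw [pow_succ', map_mul, Module.End.mul_apply]
      refine weightFiltration_anti u ?_ (hQ_step ih)
      push_cast
      grind
  refine ⟨Q ^ ⌈k⌉₊, pow_ne_zero _ (Finset.prod_ne_zero_iff.2 fun _ _ =>
    Polynomial.X_sub_C_ne_zero _), fun F => ?_⟩
  simpa [min_eq_right (Nat.le_ceil k)] using hQ_pow ⌈k⌉₊ F

lemma aeval_vectorField_mem_convergent (hδ : ∀ i, δ i ∈ convergent σ) (P : ℂ[X])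
    {F : MvPowerSeries σ ℂ} (hF : F ∈ convergent σ) : aeval (vectorField δ) P F ∈ convergent σ :=
  Polynomial.aeval_apply_smul_mem_of_le_comap (q := Subalgebra.toSubmodule (convergent σ)) hF P
    (vectorField δ) fun _ => vectorField_mem_convergent hδ

/-- The polynomial `P` of `exists_aeval_vectorField_mem` projects `xᵢ` to the generalized
eigenspace up to terms of high order, which `convergentFiltration_le_map` corrects. -/
theorem exists_mem_maxGenEigenspace_sub_X_mem {w : σ → ℝ≥0} (hu : ∀ i, 0 < u i)
    (hw : ∀ i, 0 < w i)
    (hδ : ∀ i, δ i - (w i : ℂ) • X i ∈ convergentFiltration u (u i + 1)) (i : σ) :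
    ∃ y ∈ convergent σ, y ∈ (vectorField δ).maxGenEigenspace (w i) ∧
      y - X i ∈ weightFiltration u (u i + 1) := by
  let l : ℂ := w i
  let A : ℂ[X] := Polynomial.X - Polynomial.C l
  have hA : aeval (vectorField δ) A = vectorField δ - l • (1 : Module.End ℂ _) := by
    simp [A, Algebra.algebraMap_eq_smul_one]
  have hδc (j : σ) : δ j ∈ convergent σ := by
    simpa using add_mem (hδ j).1 ((convergent σ).smul_mem (X_mem_convergent j) (w j : ℂ))
  obtain ⟨c, hc⟩ : ∃ c : ℝ, ∀ α : σ →₀ ℕ, c ≤ Finsupp.weight u α →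
      2 * ‖l‖ + 2 ≤ Finsupp.weight w α := by
    simpa [Finsupp.weight_apply, Finsupp.sum] using
      exists_forall_le_weight u (v := fun j => (w j : ℝ)) hw (2 * ‖l‖ + 2)
  let k := max c (u i + 1)
  obtain ⟨P, hP, hPk⟩ := exists_aeval_vectorField_mem hu (fun j => (hδ j).2) k
  obtain ⟨q, hPq, hq⟩ := Polynomial.exists_eq_pow_rootMultiplicity_mul_and_not_dvd P hP l
  set N := P.rootMultiplicity l
  have hql : q.eval l ≠ 0 := by rwa [Polynomial.dvd_iff_isRoot] at hq
  let z := aeval (vectorField δ) q (X i)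
  have hAz : aeval (vectorField δ) (A ^ N) z = aeval (vectorField δ) P (X i) := by
    rw [hPq, map_mul, Module.End.mul_apply]
  obtain ⟨b, ⟨hb, hbk⟩, hAb⟩ : aeval (vectorField δ) P (X i) ∈
      (convergentFiltration u k).map ((vectorField δ - l • (1 : Module.End ℂ _)) ^ N) :=
    le_map_pow_of_le_map (convergentFiltration_le_map hu hw hδ fun α hα =>
      hc α ((le_max_left _ _).trans hα)) N
      ⟨aeval_vectorField_mem_convergent hδc P (X_mem_convergent i), hPk _⟩
  have hz : z - q.eval l • X i ∈ weightFiltration u (u i + 1) :=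
    aeval_vectorField_X_sub_mem (fun j => (hδ j).2) q i
  refine ⟨(q.eval l)⁻¹ • (z - b), ?_, ?_, ?_⟩
  · exact Subalgebra.smul_mem _ (sub_mem (aeval_vectorField_mem_convergent hδc q
      (X_mem_convergent i)) hb) _
  · refine Submodule.smul_mem _ _ ((Module.End.mem_maxGenEigenspace _ _ _).2 ⟨N, ?_⟩)
    rw [map_sub, hAb, ← hA, ← map_pow, hAz, sub_self]
  · have : (q.eval l)⁻¹ • (z - q.eval l • X i - b) ∈ weightFiltration u (u i + 1) :=
      Submodule.smul_mem _ _ (sub_mem hz (weightFiltration_anti u (le_max_right _ _) hbk))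
    convert this using 1
    rw [sub_right_comm, smul_sub _ (z - b), inv_smul_smul₀ hql]

end EigenCoordinates

section WeightDecomposition

lemma mul_mem_maxGenEigenspace {K A : Type*} [CommRing K] [CommRing A] [Algebra K A]
    {T : Module.End K A} (hT : ∀ a b, T (a * b) = T a * b + a * T b) {μ ν : K} {a b : A}
    (ha : a ∈ T.maxGenEigenspace μ) (hb : b ∈ T.maxGenEigenspace ν) :
    a * b ∈ T.maxGenEigenspace (μ + ν) := by
  obtain ⟨k, hk⟩ := (Module.End.mem_maxGenEigenspace _ _ _).1 ha
  obtain ⟨l, hl⟩ := (Module.End.mem_maxGenEigenspace _ _ _).1 hb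
  refine (Module.End.mem_maxGenEigenspace _ _ _).2 ⟨k + l, ?_⟩
  clear ha hb
  induction hs : k + l generalizing k l a b with
  | zero =>
    obtain rfl : k = 0 := by lia
    simp_all
  | succ s ih =>
    obtain _ | k := k
    · simp_all
    obtain _ | l := l
    · simp_all
    have hstep : (T - (μ + ν) • 1) (a * b) = (T - μ • 1) a * b + a * (T - ν • 1) b := by
      simp only [LinearMap.sub_apply, LinearMap.smul_apply, Module.End.one_apply, hT, sub_mul,
        mul_sub, smul_mul_assoc, mul_smul_comm]
      module
    rw [pow_succ, Module.End.mul_apply, hstep, map_add,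
      ih k (by rwa [pow_succ, Module.End.mul_apply] at hk) (l + 1) hl (by lia),
      ih (k + 1) hk l (by rwa [pow_succ, Module.End.mul_apply] at hl) (by lia), add_zero]

variable {σ : Type*}

lemma eventually_sub_sum_restrict_mem {κ : Type*} [Finite σ] {u : σ → ℝ} (hu : ∀ i, 0 < u i)
    (m : (σ →₀ ℕ) → κ) (d : ℝ) : ∀ᶠ Λ : Finset κ in atTop, ∀ F : MvPowerSeries σ ℂ,
      F - ∑ l ∈ Λ, restrict (m ⁻¹' {l}) F ∈ weightFiltration u d := by
  classical
  filter_upwards [eventually_ge_atTop ((finite_setOf_weight_le hu d).toFinset.image m)]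
    with Λ hΛ F α hα
  by_contra! hlt
  refine hα ?_
  have hmem : m α ∈ Λ := hΛ (Finset.mem_image_of_mem m (by simpa using hlt.le))
  simp [coeff_restrict, hmem]

variable [Fintype σ] {u : σ → ℝ} {w : σ → ℂ} {δ : σ → MvPowerSeries σ ℂ}

lemma monomial_mem_maxGenEigenspace (hδ : ∀ i, X i ∈ (vectorField δ).maxGenEigenspace (w i))
    (α : σ →₀ ℕ) (c : ℂ) :
    monomial α c ∈ (vectorField δ).maxGenEigenspace (Finsupp.weight w α) := by
  suffices monomial α 1 ∈ (vectorField δ).maxGenEigenspace (Finsupp.weight w α) by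
    simpa [← map_smul] using Submodule.smul_mem _ c this
  have hone : (1 : MvPowerSeries σ ℂ) ∈ (vectorField δ).maxGenEigenspace 0 :=
    (Module.End.mem_maxGenEigenspace _ _ _).2 ⟨1, by simp [vectorField_apply]⟩
  induction α using Finsupp.induction_linear with
  | zero => simpa using hone
  | add α β hα hβ =>
    rw [map_add, ← mul_one (1 : ℂ), ← MvPowerSeries.monomial_mul_monomial]
    exact mul_mem_maxGenEigenspace (vectorField_mul δ) hα hβ
  | single i k =>
    rw [← MvPowerSeries.X_pow_eq, Finsupp.weight_single]
    induction k with
    | zero => simpa using hone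
    | succ k ih =>
      rw [pow_succ, succ_nsmul]
      exact mul_mem_maxGenEigenspace (vectorField_mul δ) ih (hδ i)

lemma restrict_mem_maxGenEigenspace (hδ : ∀ i, X i ∈ (vectorField δ).maxGenEigenspace (w i))
    (l : ℂ) {F : MvPowerSeries σ ℂ} (hF : {α | coeff α F ≠ 0}.Finite) :
    restrict (Finsupp.weight w ⁻¹' {l}) F ∈ (vectorField δ).maxGenEigenspace l := by
  classical
  have : restrict (Finsupp.weight w ⁻¹' {l}) F =
      ∑ α ∈ hF.toFinset with Finsupp.weight w α = l, monomial α (coeff α F) := by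
    ext α
    by_cases hα : coeff α F = 0 <;>
      simp [coeff_restrict, MvPowerSeries.coeff_monomial, Finset.sum_ite_eq, hα]
  rw [this]
  refine sum_mem fun α hα => ?_
  rw [← (Finset.mem_filter.1 hα).2]
  exact monomial_mem_maxGenEigenspace hδ α _

/-- An ideal of convergent power series, as a subspace of all power series. -/
def idealSubmodule (I : Ideal (convergent σ)) : Submodule ℂ (MvPowerSeries σ ℂ) :=
  (I.restrictScalars ℂ).map (convergent σ).val.toLinearMap

variable {I : Ideal (convergent σ)}

lemma restrict_mem_idealSubmodule_sup (hu : ∀ i, 0 < u i)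
    (hδu : ∀ i, δ i ∈ weightFiltration u (u i))
    (hδ : ∀ i, X i ∈ (vectorField δ).maxGenEigenspace (w i))
    (hI : idealSubmodule I ≤ (idealSubmodule I).comap (vectorField δ))
    (l : ℂ) (d : ℝ) {F : MvPowerSeries σ ℂ} (hF : F ∈ idealSubmodule I) :
    restrict (Finsupp.weight w ⁻¹' {l}) F ∈ idealSubmodule I ⊔ weightFiltration u d := by
  let p := idealSubmodule I ⊔ weightFiltration u d
  have hp : p ≤ p.comap (vectorField δ) := by
    refine sup_le (hI.trans (Submodule.comap_mono le_sup_left)) fun G hG =>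
      le_sup_right (a := idealSubmodule I) ?_
    rw [vectorField_apply]
    simpa using sum_mul_pderiv_mem_weightFiltration (a := 0) (by simpa using hδu) hG
  let T := restrict {α | Finsupp.weight u α ≤ d} F
  have hFT : F - T ∈ weightFiltration u d := by
    intro α hα
    by_contra! hlt
    exact hα (by simp [T, coeff_restrict, hlt.le])
  have hT : {α | coeff α T ≠ 0}.Finite :=
    (finite_setOf_weight_le hu d).subset fun α hα => by
      by_contra h
      exact hα (by rw [coeff_restrict, if_neg h])
  obtain ⟨Λ, hΛ, hl⟩ := ((eventually_sub_sum_restrict_mem hu (Finsupp.weight w) d).and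
    (eventually_ge_atTop {l})).exists
  have hsum : ∑ l ∈ Λ, restrict (Finsupp.weight w ⁻¹' {l}) T ∈ p := by
    have := sub_mem (le_sup_left (b := weightFiltration u d) hF)
      (le_sup_right (a := idealSubmodule I) (add_mem hFT (hΛ T)))
    simpa [p] using this
  have hlT : restrict (Finsupp.weight w ⁻¹' {l}) T ∈ p :=
    mem_of_sum_mem_of_mem_maxGenEigenspace hp
      (fun μ _ => restrict_mem_maxGenEigenspace hδ μ hT) hsum (by simpa using hl)
  have hlFT : restrict (Finsupp.weight w ⁻¹' {l}) (F - T) ∈ weightFiltration u d :=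
    multiplier_mem_weightFiltration _ hFT
  rw [← add_sub_cancel T F, map_add]
  exact add_mem hlT (le_sup_right (a := idealSubmodule I) hlFT)

lemma mem_of_forall_mem_idealSubmodule_sup {f : convergent σ}
    (hf : ∀ d, (f : MvPowerSeries σ ℂ) ∈ idealSubmodule I ⊔ weightFiltration u d) : f ∈ I := by
  refine mem_of_forall_exists_sub_mem_weightFiltration (v := u) fun d => ?_
  obtain ⟨_, ⟨g, hg, rfl⟩, h, hh, hgh⟩ := Submodule.mem_sup.1 (hf d)
  exact ⟨g, hg, by rwa [← hgh, AlgHom.toLinearMap_apply, Subalgebra.coe_val, add_sub_cancel_left]⟩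

/-- In coordinates which are generalized eigenvectors, every truncation of a weight component of
`f ∈ I` is one of the generalized eigencomponents of `f` modulo high order, hence lies in `I`
modulo high order; and ideals are closed. -/
theorem exists_finset_span_eq_of_le_comap (hu : ∀ i, 0 < u i)
    (hδu : ∀ i, δ i ∈ weightFiltration u (u i))
    (hδ : ∀ i, X i ∈ (vectorField δ).maxGenEigenspace (w i))
    (hI : idealSubmodule I ≤ (idealSubmodule I).comap (vectorField δ)) :
    ∃ S : Finset (convergent σ), Ideal.span (S : Set (convergent σ)) = I ∧
      ∀ h ∈ S, ∃ l, ∀ α, coeff α (h : MvPowerSeries σ ℂ) ≠ 0 → Finsupp.weight w α = l := by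
  let H : Set (convergent σ) := {h | h ∈ I ∧
    ∃ l, ∀ α, coeff α (h : MvPowerSeries σ ℂ) ≠ 0 → Finsupp.weight w α = l}
  have hH_le : Ideal.span H ≤ I := Ideal.span_le.2 fun h hh => hh.1
  let comp (l : ℂ) (f : convergent σ) : convergent σ :=
    ⟨restrict (Finsupp.weight w ⁻¹' {l}) f, restrict_mem_convergent _ f.2⟩
  have hcomp {f : convergent σ} (hf : f ∈ I) (l : ℂ) : comp l f ∈ H := by
    refine ⟨mem_of_forall_mem_idealSubmodule_sup fun d =>
      restrict_mem_idealSubmodule_sup hu hδu hδ hI l d ⟨f, hf, rfl⟩, l, fun α hα => ?_⟩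
    simp only [comp, coeff_restrict, ne_eq, ite_eq_right_iff, not_forall] at hα
    exact hα.1
  have hH : Ideal.span H = I := by
    refine le_antisymm hH_le fun f hf =>
      mem_of_forall_exists_sub_mem_weightFiltration (v := u) fun d => ?_
    obtain ⟨Λ, hΛ⟩ := (eventually_sub_sum_restrict_mem hu (Finsupp.weight w) d).exists
    refine ⟨∑ l ∈ Λ, comp l f, sum_mem fun l _ => Ideal.subset_span (hcomp hf l), ?_⟩
    simpa [comp] using hΛ f
  obtain ⟨S, hS, hSspan⟩ := Submodule.fg_span_iff_fg_span_finset_subset H |>.1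
    (IsNoetherian.noetherian (Ideal.span H))
  exact ⟨S, hSspan.symm.trans hH, fun h hh => (hS hh).2⟩

end WeightDecomposition

section Eval

variable {σ : Type*} [Fintype σ]

/-- The value at the point `x` of a power series, meaningful where the series converges
absolutely. -/
def evalAt (F : MvPowerSeries σ ℂ) (x : σ → ℂ) : ℂ := ∑' α, coeff α F * multiPow x α

variable {r : σ → ℝ≥0} {x : σ → ℂ} {F G : MvPowerSeries σ ℂ}

lemma enorm_coeff_mul_multiPow (F : MvPowerSeries σ ℂ) (x : σ → ℂ) (α : σ →₀ ℕ) :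
    ‖coeff α F * multiPow x α‖ₑ = ‖coeff α F‖ₑ * (multiPow (fun i => ‖x i‖₊) α : ℝ≥0) := by
  simp [multiPow, enorm_eq_nnnorm]

lemma summable_evalAt (hF : polyNorm r F ≠ ∞) (hx : ∀ i, ‖x i‖₊ ≤ r i) :
    Summable fun α => ‖coeff α F * multiPow x α‖ := by
  refine summable_norm_iff.2 (Summable.of_enorm ?_)
  simp only [enorm_coeff_mul_multiPow]
  exact ne_top_of_le_ne_top hF (polyNorm_mono hx F)

lemma enorm_evalAt_le (F : MvPowerSeries σ ℂ) (x : σ → ℂ) :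
    ‖evalAt F x‖ₑ ≤ polyNorm (fun i => ‖x i‖₊) F := by
  refine enorm_tsum_le_tsum_enorm.trans_eq ?_
  simp only [enorm_coeff_mul_multiPow, polyNorm]

lemma evalAt_add (hF : polyNorm r F ≠ ∞) (hG : polyNorm r G ≠ ∞) (hx : ∀ i, ‖x i‖₊ ≤ r i) :
    evalAt (F + G) x = evalAt F x + evalAt G x := by
  simp only [evalAt, map_add, add_mul]
  exact (summable_evalAt hF hx).of_norm.tsum_add (summable_evalAt hG hx).of_norm

lemma evalAt_mul (hF : polyNorm r F ≠ ∞) (hG : polyNorm r G ≠ ∞) (hx : ∀ i, ‖x i‖₊ ≤ r i) :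
    evalAt (F * G) x = evalAt F x * evalAt G x := by
  classical
  have hF' := summable_evalAt hF hx
  have hG' := summable_evalAt hG hx
  have hFG := summable_mul_of_summable_norm hF' hG'
  simp only [evalAt]
  rw [hF'.of_norm.tsum_mul_tsum_eq_tsum_sum_antidiagonal hG'.of_norm hFG]
  refine tsum_congr fun γ => ?_
  rw [MvPowerSeries.coeff_mul, Finset.sum_mul]
  refine Finset.sum_congr rfl fun p hp => ?_
  rw [← Finset.HasAntidiagonal.mem_antidiagonal.1 hp, multiPow_add]
  ring

lemma evalAt_smul (c : ℂ) (F : MvPowerSeries σ ℂ) (x : σ → ℂ) :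
    evalAt (c • F) x = c * evalAt F x := by
  simp only [evalAt, MvPowerSeries.coeff_smul, mul_assoc, tsum_mul_left]

lemma evalAt_monomial (α : σ →₀ ℕ) (c : ℂ) (x : σ → ℂ) :
    evalAt (monomial α c) x = c * multiPow x α := by
  classical
  rw [evalAt, tsum_eq_single α fun β hβ => ?_, MvPowerSeries.coeff_monomial_same]
  rw [MvPowerSeries.coeff_monomial, if_neg hβ, zero_mul]

omit [Fintype σ] in
lemma eventually_nnnorm_le [Finite σ] (hr : ∀ i, 0 < r i) :
    ∀ᶠ x in 𝓝 (0 : σ → ℂ), ∀ i, ‖x i‖₊ ≤ r i :=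
  eventually_all.2 fun i =>
    ((continuous_apply i).nnnorm.tendsto' (0 : σ → ℂ) 0 (by simp)).eventually_le_const (hr i)

end Eval

section Words

variable {σ : Type*}

/-- The exponent `α` such that the word monomial `x_{v 1} ⋯ x_{v k}` equals `x^α`. -/
def wordExponent (v : Σ k, Fin k → σ) : σ →₀ ℕ := ∑ j, Finsupp.single (v.2 j) 1

lemma multiPow_wordExponent [Fintype σ] {R : Type*} [CommSemiring R] (x : σ → R)
    (v : Σ k, Fin k → σ) : multiPow x (wordExponent v) = ∏ j, x (v.2 j) := by
  classical
  rw [wordExponent]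
  induction (Finset.univ : Finset (Fin v.1)) using Finset.induction_on with
  | empty => simp [multiPow_zero]
  | insert j s hj ih => rw [Finset.sum_insert hj, Finset.prod_insert hj, multiPow_add, ih,
      multiPow_single, pow_one]

lemma wordExponent_surjective : Function.Surjective (wordExponent (σ := σ)) := by
  classical
  intro α
  refine ⟨⟨_, α.toMultiset.toList.get⟩, ?_⟩
  have h : ((List.ofFn α.toMultiset.toList.get).map fun i => Finsupp.single i 1).sum = α := by
    rw [List.ofFn_get, ← Multiset.sum_coe, ← Multiset.map_coe, Multiset.coe_toList]
    conv_rhs => rw [← Finsupp.toMultiset_toFinsupp α]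
    induction α.toMultiset using Multiset.induction_on with
    | empty => simp
    | cons a s ih => simp [← Multiset.singleton_add, ih]
  rwa [List.map_ofFn, List.sum_ofFn] at h

variable [Fintype σ]

/-- The formal multilinear series of the function `x ↦ ∑ c_v x_{v 1} ⋯ x_{v k}`. -/
def wordSeries (c : (Σ k, Fin k → σ) → ℂ) : FormalMultilinearSeries ℂ (σ → ℂ) ℂ := fun k =>
  ∑ v : Fin k → σ, c ⟨k, v⟩ •
    (ContinuousMultilinearMap.mkPiAlgebra ℂ (Fin k) ℂ).compContinuousLinearMap
      fun j => ContinuousLinearMap.proj (v j)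

lemma wordSeries_apply (c : (Σ k, Fin k → σ) → ℂ) (k : ℕ) (x : σ → ℂ) :
    (wordSeries c k fun _ => x) = ∑ v : Fin k → σ, c ⟨k, v⟩ * multiPow x (wordExponent ⟨k, v⟩) := by
  simp [wordSeries, multiPow_wordExponent]

lemma norm_wordSeries_le (c : (Σ k, Fin k → σ) → ℂ) (k : ℕ) :
    ‖wordSeries c k‖ ≤ ∑ v : Fin k → σ, ‖c ⟨k, v⟩‖ := by
  refine norm_sum_le_of_le _ fun v _ => ?_
  rw [norm_smul]
  refine mul_le_of_le_one_right (norm_nonneg _)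
    (ContinuousMultilinearMap.opNorm_le_bound zero_le_one fun m => ?_)
  simp only [ContinuousMultilinearMap.compContinuousLinearMap_apply,
    ContinuousMultilinearMap.mkPiAlgebra_apply, ContinuousLinearMap.proj_apply, norm_prod, one_mul]
  exact Finset.prod_le_prod (fun _ _ => norm_nonneg _) fun j _ => norm_le_pi_norm (m j) (v j)

lemma norm_multiPow_wordExponent_le {x : σ → ℂ} {t : ℝ≥0} (hx : ‖x‖₊ ≤ t)
    (v : Σ k, Fin k → σ) : ‖multiPow x (wordExponent v)‖ ≤ t ^ v.1 := by
  rw [multiPow_wordExponent, norm_prod]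
  calc ∏ j, ‖x (v.2 j)‖ ≤ ∏ _j : Fin v.1, (t : ℝ) :=
        Finset.prod_le_prod (fun _ _ => norm_nonneg _) fun j _ =>
          (norm_le_pi_norm x (v.2 j)).trans hx
    _ = t ^ v.1 := by simp

lemma summable_wordSum {c : (Σ k, Fin k → σ) → ℂ} {t : ℝ≥0}
    (hc : Summable fun v => ‖c v‖ * t ^ v.1) {x : σ → ℂ} (hx : x ∈ Metric.eball 0 t) :
    Summable fun v => c v * multiPow x (wordExponent v) := by
  rw [Metric.mem_eball, edist_zero_right, enorm_eq_nnnorm, ENNReal.coe_lt_coe] at hx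
  refine Summable.of_norm_bounded hc fun v => ?_
  rw [norm_mul]
  gcongr
  exact norm_multiPow_wordExponent_le hx.le v

lemma hasFPowerSeriesOnBall_wordSeries {c : (Σ k, Fin k → σ) → ℂ} {t : ℝ≥0} (ht : 0 < t)
    (hc : Summable fun v => ‖c v‖ * t ^ v.1) :
    HasFPowerSeriesOnBall (fun x => ∑' v, c v * multiPow x (wordExponent v)) (wordSeries c) 0 t
    where
  r_le := by
    refine (wordSeries c).le_radius_of_bound (∑' v, ‖c v‖ * t ^ v.1) fun k => ?_
    calc ‖wordSeries c k‖ * t ^ k ≤ ∑ v : Fin k → σ, ‖c ⟨k, v⟩‖ * t ^ k := by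
          rw [← Finset.sum_mul]
          gcongr
          exact norm_wordSeries_le c k
      _ = ∑ v ∈ Finset.univ.map (Function.Embedding.sigmaMk k), ‖c v‖ * t ^ v.1 := by simp
      _ ≤ _ := hc.sum_le_tsum _ fun v _ => by positivity
  r_pos := by simpa
  hasSum {x} hx := by
    simp only [zero_add, wordSeries_apply]
    exact (summable_wordSum hc hx).hasSum.sigma fun k => hasSum_fintype _

end Words

section Expansion

variable {σ : Type*} [Fintype σ]

lemma exists_polyNorm_const_ne_top {F : MvPowerSeries σ ℂ} (hF : F ∈ convergent σ) :
    ∃ t : ℝ≥0, 0 < t ∧ polyNorm (fun _ => t) F ≠ ∞ := by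
  have h := eventually_polyNorm_ne_top (u := fun _ => 1) (fun _ => one_pos) hF
  simp only [NNReal.rpow_one] at h
  obtain ⟨t, ht, htpos⟩ := (h.and self_mem_nhdsWithin).exists
  exact ⟨t, htpos, ht⟩

lemma analyticAt_evalAt {F : MvPowerSeries σ ℂ} (hF : F ∈ convergent σ) :
    AnalyticAt ℂ (evalAt F) 0 := by
  obtain ⟨t, ht, hFt⟩ := exists_polyNorm_const_ne_top hF
  let word := Function.surjInv (wordExponent_surjective (σ := σ))
  have hword (α) : wordExponent (word α) = α := Function.surjInv_eq _ α
  have hinj : Function.Injective word := Function.injective_surjInv _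
  let c := Function.extend word (fun α => coeff α F) 0
  have hcword (α) : c (word α) = coeff α F := hinj.extend_apply _ _ _
  have hc0 (v) (hv : v ∉ Set.range word) : c v = 0 :=
    Function.extend_apply' _ _ _ fun ⟨α, hα⟩ => hv ⟨α, hα⟩
  have hc : Summable fun v => ‖c v‖ * t ^ v.1 := by
    refine (hinj.summable_iff fun v hv => by simp [hc0 v hv]).1 ?_
    refine (summable_evalAt (x := fun _ => ((t : ℝ) : ℂ)) hFt (by simp)).congr fun α => ?_
    have hlen := multiPow_wordExponent (fun _ : σ => ((t : ℝ) : ℂ)) (word α)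
    rw [hword] at hlen
    simp [hcword, hlen]
  have heval : evalAt F = fun x => ∑' v, c v * multiPow x (wordExponent v) := funext fun x => by
    rw [evalAt, ← hinj.tsum_eq fun v hv => by_contra fun h => hv (by simp [hc0 v h])]
    simp only [hcword, hword]
  exact heval ▸ (hasFPowerSeriesOnBall_wordSeries ht hc).analyticAt

/-- The power series obtained from a sum of word monomials by collecting the words with the same
exponent. -/
def collectWords (c : (Σ k, Fin k → σ) → ℂ) : MvPowerSeries σ ℂ :=
  fun α => ∑' v : wordExponent ⁻¹' {α}, c v

lemma polyNorm_collectWords_le (t : ℝ≥0) (c : (Σ k, Fin k → σ) → ℂ) :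
    polyNorm (fun _ => t) (collectWords c) ≤ ∑' v, ‖c v‖ₑ * (t ^ v.1 : ℝ≥0) := by
  rw [← ENNReal.tsum_fiberwise _ wordExponent]
  refine ENNReal.tsum_le_tsum fun α => ?_
  have hlen (v : wordExponent ⁻¹' {α}) : t ^ (v : Σ k, Fin k → σ).1 = multiPow (fun _ => t) α := by
    obtain ⟨v, rfl⟩ := v
    simp [multiPow_wordExponent]
  simp only [hlen, ENNReal.tsum_mul_right]
  exact mul_le_mul_left enorm_tsum_le_tsum_enorm _

lemma evalAt_collectWords {c : (Σ k, Fin k → σ) → ℂ} {x : σ → ℂ}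
    (h : Summable fun v => c v * multiPow x (wordExponent v)) :
    evalAt (collectWords c) x = ∑' v, c v * multiPow x (wordExponent v) := by
  rw [← (h.hasSum.tsum_fiberwise wordExponent).tsum_eq, evalAt]
  refine tsum_congr fun α => ?_
  refine (tsum_mul_right.symm.trans (tsum_congr fun v => ?_))
  rw [show wordExponent v = α from v.2]

lemma sum_apply_single_mul_multiPow {k : ℕ}
    (p : ContinuousMultilinearMap ℂ (fun _ : Fin k => σ → ℂ) ℂ) [DecidableEq σ] (x : σ → ℂ) :
    ∑ v : Fin k → σ, p (fun j => Pi.single (v j) 1) * multiPow x (wordExponent ⟨k, v⟩) =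
      p fun _ => x := by
  conv_rhs => rw [← Finset.univ_sum_single x]
  rw [p.map_sum]
  refine Finset.sum_congr rfl fun v _ => ?_
  have hsingle (i) : Pi.single i (x i) = x i • (Pi.single i 1 : σ → ℂ) := by
    rw [← Pi.single_smul, smul_eq_mul, mul_one]
  simp only [hsingle, p.map_smul_univ, multiPow_wordExponent, smul_eq_mul, mul_comm]

lemma exists_summable_apply_single [DecidableEq σ] {p : FormalMultilinearSeries ℂ (σ → ℂ) ℂ}
    (hp : 0 < p.radius) : ∃ t : ℝ≥0, 0 < t ∧
      Summable fun v : Σ k, Fin k → σ => ‖p v.1 fun j => Pi.single (v.2 j) 1‖ * t ^ v.1 := by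
  obtain ⟨ρ, hρ0, hρ⟩ := ENNReal.lt_iff_exists_nnreal_btwn.1 hp
  let t : ℝ≥0 := ρ / (Fintype.card σ + 1)
  have htρ : Fintype.card σ * t ≤ ρ :=
    calc Fintype.card σ * t ≤ (Fintype.card σ + 1) * t := by gcongr; simp
      _ = ρ := mul_div_cancel₀ _ (by positivity)
  refine ⟨t, div_pos (ENNReal.coe_pos.1 hρ0) (by positivity),
    (summable_sigma_of_nonneg fun v => by positivity).2 ⟨fun k => Summable.of_finite, ?_⟩⟩
  refine (p.summable_norm_mul_pow hρ).of_nonneg_of_le (fun k => by positivity) fun k => ?_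
  have hpk (v : Fin k → σ) : ‖p k fun j => Pi.single (v j) 1‖ ≤ ‖p k‖ := by
    simpa [Pi.norm_single] using (p k).le_opNorm fun j => (Pi.single (v j) 1 : σ → ℂ)
  calc ∑' v : Fin k → σ, ‖p k fun j => Pi.single (v j) 1‖ * (t : ℝ) ^ k
      ≤ ∑ _v : Fin k → σ, ‖p k‖ * (t : ℝ) ^ k := by
        rw [tsum_fintype]
        gcongr with v
        exact hpk v
    _ = ‖p k‖ * ((Fintype.card σ * t : ℝ≥0) : ℝ) ^ k := by
        simp only [Finset.sum_const, Finset.card_univ, Fintype.card_pi, Finset.prod_const,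
          Fintype.card_fin, nsmul_eq_mul, Nat.cast_pow, NNReal.coe_mul, NNReal.coe_natCast]
        ring
    _ ≤ ‖p k‖ * (ρ : ℝ) ^ k := by gcongr

theorem exists_evalAt_eventuallyEq {f : (σ → ℂ) → ℂ} (hf : AnalyticAt ℂ f 0) :
    ∃ F ∈ convergent σ, evalAt F =ᶠ[𝓝 0] f := by
  classical
  obtain ⟨p, r, hp⟩ := hf
  obtain ⟨t, ht, hc⟩ := exists_summable_apply_single (hp.r_pos.trans_le hp.r_le)
  let c (v : Σ k, Fin k → σ) : ℂ := p v.1 fun j => Pi.single (v.2 j) 1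
  have hnorm : polyNorm (fun _ => t) (collectWords c) ≠ ∞ :=
    ne_top_of_le_ne_top (ENNReal.tsum_coe_ne_top_iff_summable.2 (NNReal.summable_coe.1 hc))
      (polyNorm_collectWords_le t c)
  refine ⟨collectWords c, ⟨_, fun _ => ht, hnorm⟩, ?_⟩
  filter_upwards [Metric.eball_mem_nhds 0 hp.r_pos, Metric.eball_mem_nhds 0 (ENNReal.coe_pos.2 ht)]
    with x hx hxt
  have hword := (hasFPowerSeriesOnBall_wordSeries ht hc).hasSum hxt
  have hpx := hp.hasSum hx
  simp only [zero_add, wordSeries_apply, sum_apply_single_mul_multiPow] at hword hpx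
  rw [evalAt_collectWords (summable_wordSum hc hxt), ← hword.unique hpx]

omit [Fintype σ] in
lemma tendsto_rpow_nhdsGT_zero {u : σ → ℝ} (hu : ∀ i, 0 < u i) :
    Tendsto (fun (t : ℝ≥0) i => (((t ^ u i : ℝ≥0) : ℝ) : ℂ)) (𝓝[>] 0) (𝓝 0) := by
  refine (tendsto_pi_nhds.2 fun i => ?_).mono_left nhdsWithin_le_nhds
  refine Continuous.tendsto' ?_ _ _ (by simp [Real.zero_rpow (hu i).ne'])
  exact Complex.continuous_ofReal.comp
    (NNReal.continuous_coe.comp (NNReal.continuous_rpow_const (hu i).le))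

/-- On the points `(t ^ u i)` the initial monomial of a nonzero series dominates the rest. -/
theorem eq_zero_of_evalAt_eventuallyEq_zero {F : MvPowerSeries σ ℂ} (hF : F ∈ convergent σ)
    (h0 : evalAt F =ᶠ[𝓝 0] 0) : F = 0 := by
  by_contra hne
  obtain ⟨u, hu, hinj⟩ := exists_pos_injective_weight σ
  obtain ⟨e, he⟩ := exists_isInitialExponent hu hinj hne
  obtain ⟨d, hd, hGd⟩ := he.exists_gt_mem hu
  set G := (coeff e F)⁻¹ • F - monomial e 1 with hGdef
  have hG : G ∈ convergent σ := sub_mem (Subalgebra.smul_mem _ hF _) (monomial_mem_convergent _ _)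
  obtain ⟨t, ⟨hFx, hGt⟩, htpos : 0 < t⟩ :=
    (((tendsto_rpow_nhdsGT_zero hu).eventually h0).and
      (eventually_polyNorm_le hu hd hG hGd (η := 2⁻¹) (by simp))).and self_mem_nhdsWithin |>.exists
  set x : σ → ℂ := fun i => ((t ^ u i : ℝ≥0) : ℝ)
  have hxnorm (i) : ‖x i‖₊ = t ^ u i := by
    simp only [x, Complex.nnnorm_real, NNReal.nnnorm_eq]
  have hsum : evalAt (monomial e 1) x + evalAt G x = 0 := by
    rw [← evalAt_add (r := fun i => t ^ u i) (by simp [polyNorm_monomial])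
      (ne_top_of_le_ne_top (by finiteness) hGt) fun i => (hxnorm i).le, hGdef,
      add_sub_cancel, evalAt_smul, hFx, Pi.zero_apply, mul_zero]
  have hmon : ‖evalAt (monomial e 1) x‖ₑ = (t ^ Finsupp.weight u e : ℝ≥0) := by
    have h := enorm_coeff_mul_multiPow (monomial e 1) x e
    simp only [hxnorm, MvPowerSeries.coeff_monomial_same, enorm_one, one_mul,
      multiPow_rpow u htpos] at h
    rwa [evalAt_monomial, one_mul]
  have hle : ((t ^ Finsupp.weight u e : ℝ≥0) : ℝ≥0∞) ≤ (2⁻¹ * t ^ Finsupp.weight u e : ℝ≥0) := by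
    rw [← hmon, eq_neg_of_add_eq_zero_left hsum, enorm_neg, ENNReal.coe_mul]
    exact (enorm_evalAt_le G x).trans (by simpa only [hxnorm] using hGt)
  refine (ENNReal.coe_le_coe.1 hle).not_gt ?_
  exact mul_lt_of_lt_one_left (NNReal.rpow_pos htpos) (by norm_num)

end Expansion

section Germs

lemma mkOn_eq_mkOn {f g : (Fin n → ℂ) → ℂ} {hf : AnalyticAt ℂ f 0} {hg : AnalyticAt ℂ g 0} :
    mkOn f hf = mkOn g hg ↔ f =ᶠ[𝓝 0] g :=
  Subtype.ext_iff.trans Germ.coe_eq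

lemma mkOn_rep (g : On n) : mkOn (On.rep g) (On.rep_analyticAt g) = g := Subtype.ext (On.rep_spec g)

lemma eventually_exists_polyNorm_ne_top {σ : Type*} [Fintype σ] {F G : MvPowerSeries σ ℂ}
    (hF : F ∈ convergent σ) (hG : G ∈ convergent σ) :
    ∀ᶠ x in 𝓝 (0 : σ → ℂ),
      ∃ r : σ → ℝ≥0, polyNorm r F ≠ ∞ ∧ polyNorm r G ≠ ∞ ∧ ∀ i, ‖x i‖₊ ≤ r i := by
  have h1 (_ : σ) : (0 : ℝ) < 1 := one_pos
  obtain ⟨t, ⟨hFt, hGt⟩, ht : 0 < t⟩ := ((eventually_polyNorm_ne_top h1 hF).and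
    (eventually_polyNorm_ne_top h1 hG)).and self_mem_nhdsWithin |>.exists
  filter_upwards [eventually_nnnorm_le (σ := σ) fun _ => NNReal.rpow_pos ht] with x hx
  exact ⟨_, hFt, hGt, hx⟩

/-- The germ at `0` of the sum of a convergent power series. -/
def germ (n : ℕ) : convergent (Fin n) →ₐ[ℂ] On n where
  toFun F := mkOn (evalAt F) (analyticAt_evalAt F.2)
  map_one' := Subtype.ext <| Germ.coe_eq.2 <| .of_forall fun x => by
    rw [OneMemClass.coe_one, ← MvPowerSeries.monomial_zero_one, evalAt_monomial, multiPow_zero,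
      one_mul]
  map_zero' := Subtype.ext <| Germ.coe_eq.2 <| .of_forall fun x => by simp [evalAt]
  commutes' c := Subtype.ext <| Germ.coe_eq.2 <| .of_forall fun x => by
    exact (evalAt_monomial 0 c x).trans (by rw [multiPow_zero, mul_one]; rfl)
  map_add' F G := Subtype.ext <| Germ.coe_eq.2 <| by
    filter_upwards [eventually_exists_polyNorm_ne_top F.2 G.2] with x ⟨r, hF, hG, hx⟩
    exact evalAt_add hF hG hx
  map_mul' F G := Subtype.ext <| Germ.coe_eq.2 <| by
    filter_upwards [eventually_exists_polyNorm_ne_top F.2 G.2] with x ⟨r, hF, hG, hx⟩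
    exact evalAt_mul hF hG hx

lemma germ_apply (F : convergent (Fin n)) :
    germ n F = mkOn (evalAt F) (analyticAt_evalAt F.2) := rfl

lemma germ_bijective (n : ℕ) : Function.Bijective (germ n) := by
  refine ⟨(injective_iff_map_eq_zero _).2 fun F hF => Subtype.ext ?_, fun g => ?_⟩
  · exact eq_zero_of_evalAt_eventuallyEq_zero F.2
      ((mkOn_eq_mkOn (hg := analyticAt_const)).1 ((germ_apply F).symm.trans hF))
  · obtain ⟨F, hF, h⟩ := exists_evalAt_eventuallyEq (On.rep_analyticAt g)
    exact ⟨⟨F, hF⟩, (germ_apply _).trans ((mkOn_eq_mkOn.2 h).trans (mkOn_rep g))⟩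

/-- The isomorphism of `𝒪ₙ` with the convergent power series given by Taylor expansion. -/
def taylor (n : ℕ) : On n ≃ₐ[ℂ] convergent (Fin n) :=
  (AlgEquiv.ofBijective (germ n) (germ_bijective n)).symm

lemma taylor_germ (F : convergent (Fin n)) : taylor n (germ n F) = F :=
  (AlgEquiv.ofBijective (germ n) (germ_bijective n)).symm_apply_apply F

lemma taylor_coordG (i : Fin n) : (taylor n (coordG i) : MvPowerSeries (Fin n) ℂ) = X i := by
  have h : germ n ⟨X i, X_mem_convergent i⟩ = coordG i := by
    refine (germ_apply _).trans <| mkOn_eq_mkOn.2 <| .of_forall fun x =>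
      (evalAt_monomial _ 1 x).trans ?_
    rw [multiPow_single, pow_one, one_mul]
  rw [← h, taylor_germ]

end Germs

section Conjugation

variable {R A B : Type*} [CommRing R] [CommRing A] [CommRing B] [Algebra R A] [Algebra R B]

/-- The transport `e ∘ D ∘ e⁻¹` of a derivation along an isomorphism of algebras. -/
def conjDerivation (e : A ≃ₐ[R] B) (D : Derivation R A A) : Derivation R B B :=
  .mk' (e.toLinearMap ∘ₗ D ∘ₗ e.symm.toLinearMap) fun a b => by simp

lemma conjDerivation_apply (e : A ≃ₐ[R] B) (D : Derivation R A A) (b : B) :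
    conjDerivation e D b = e (D (e.symm b)) := rfl

end Conjugation

section Derivation

variable {σ : Type*}

variable (σ) in
/-- The coordinates, as convergent power series. -/
def coordSeries [Fintype σ] (i : σ) : convergent σ := ⟨X i, X_mem_convergent i⟩

lemma eq_zero_of_forall_mem_weightFiltration [Finite σ] {F : MvPowerSeries σ ℂ}
    (h : ∀ k : ℕ, F ∈ weightFiltration (fun _ => 1) (k : ℝ)) : F = 0 := by
  ext α
  by_contra hα
  obtain ⟨k, hk⟩ := exists_nat_gt (Finsupp.weight (fun _ => (1 : ℝ)) α)
  exact (h k α hα).not_gt hk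

variable [Fintype σ]

lemma exists_eq_algebraMap_add_sum (F : convergent σ) :
    ∃ G : σ → convergent σ, F = algebraMap ℂ _ (constantCoeff (F : MvPowerSeries σ ℂ)) +
      ∑ i, coordSeries σ i * G i := by
  classical
  have he (i : σ) : IsInitialExponent (fun _ => (1 : ℝ)) (X i) (Finsupp.single i 1) := by
    refine ⟨by simp [MvPowerSeries.coeff_X], fun α hα h => absurd ?_ h⟩
    rw [MvPowerSeries.coeff_X, if_neg hα]
  obtain ⟨q, b, hq, -, hF, hb⟩ := exists_eq_sum_mul_add_remainder (fun _ => one_pos)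
    X_mem_convergent he F.2
  have hbC : b = MvPowerSeries.C (constantCoeff (F : MvPowerSeries σ ℂ)) := by
    ext α
    rw [MvPowerSeries.coeff_C]
    split_ifs with hα
    · simp [hF, hα]
    · obtain ⟨i, hi⟩ := Finsupp.ne_iff.1 hα
      by_contra h
      exact hb α h i (Finsupp.single_le_iff.2 (Nat.one_le_iff_ne_zero.2 hi))
  refine ⟨fun i => ⟨q i, hq i⟩, Subtype.ext ?_⟩
  rw [hbC] at hF
  simpa [coordSeries, mul_comm, add_comm, MvPowerSeries.algebraMap_apply] using hF

/-- If all `E xᵢ` vanish, then `E F = ∑ xᵢ E Gᵢ` for `F = F(0) + ∑ xᵢ Gᵢ`, so the order of `E F` is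
infinite. -/
lemma derivation_eq_zero {E : Derivation ℂ (convergent σ) (MvPowerSeries σ ℂ)}
    (hE : ∀ i, E (coordSeries σ i) = 0) : E = 0 := by
  have h (k : ℕ) (F : convergent σ) : E F ∈ weightFiltration (fun _ => 1) (k : ℝ) := by
    induction k generalizing F with
    | zero => simpa using mem_weightFiltration_zero (fun _ => one_pos) (E F)
    | succ k ih =>
      obtain ⟨G, hG⟩ := exists_eq_algebraMap_add_sum F
      rw [hG, map_add, Derivation.map_algebraMap, zero_add, map_sum]
      refine sum_mem fun i _ => ?_
      rw [Derivation.leibniz, hE, smul_zero, add_zero, Nat.cast_succ, add_comm]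
      exact mul_mem_weightFiltration (X_mem_weightFiltration _ i) (ih (G i))
  exact Derivation.ext fun F => eq_zero_of_forall_mem_weightFiltration fun k => h k F

theorem derivation_apply_eq_vectorField (D : Derivation ℂ (convergent σ) (convergent σ))
    (F : convergent σ) :
    (D F : MvPowerSeries σ ℂ) = vectorField (fun i => D (coordSeries σ i)) F := by
  let V := vectorField fun i => (D (coordSeries σ i) : MvPowerSeries σ ℂ)
  let D₁ : Derivation ℂ (convergent σ) (MvPowerSeries σ ℂ) :=
    .mk' ((convergent σ).val.toLinearMap ∘ₗ D) fun F G => by simp [Subalgebra.smul_def]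
  let D₂ : Derivation ℂ (convergent σ) (MvPowerSeries σ ℂ) :=
    .mk' (V ∘ₗ (convergent σ).val.toLinearMap) fun F G => by
      simp [V, vectorField_mul, Subalgebra.smul_def, add_comm, mul_comm]
  have hD₁ (F) : D₁ F = D F := rfl
  have hD₂ (F) : D₂ F = V F := rfl
  have h : D₁ - D₂ = 0 := derivation_eq_zero fun i => by
    rw [Derivation.sub_apply, hD₁, hD₂, coordSeries, vectorField_X, coordSeries, sub_self]
  simpa [hD₁, hD₂, sub_eq_zero] using DFunLike.congr_fun h F

end Derivation

section PartialDerivatives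

lemma taylor_symm_coordSeries (i : Fin n) : (taylor n).symm (coordSeries _ i) = coordG i :=
  (taylor n).symm_apply_eq.2 (Subtype.ext (taylor_coordG i).symm)

lemma ev0_mkOn {f : (Fin n → ℂ) → ℂ} (hf : AnalyticAt ℂ f 0) : ev0 (mkOn f hf) = f 0 :=
  (Germ.coe_eq.1 (On.rep_spec (mkOn f hf))).self_of_nhds

lemma exists_mkOn_eq (g : On n) : ∃ f, ∃ hf : AnalyticAt ℂ f 0, mkOn f hf = g :=
  ⟨_, _, mkOn_rep g⟩

/-- The value at the origin as an algebra homomorphism. -/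
def evZero (n : ℕ) : On n →ₐ[ℂ] ℂ where
  toFun := ev0
  map_one' := ev0_mkOn analyticAt_const
  map_zero' := ev0_mkOn analyticAt_const
  commutes' _ := ev0_mkOn analyticAt_const
  map_add' f g := by
    obtain ⟨⟨f, hf, rfl⟩, ⟨g, hg, rfl⟩⟩ := exists_mkOn_eq f, exists_mkOn_eq g
    exact (ev0_mkOn (hf.add hg)).trans (by simp [ev0_mkOn])
  map_mul' f g := by
    obtain ⟨⟨f, hf, rfl⟩, ⟨g, hg, rfl⟩⟩ := exists_mkOn_eq f, exists_mkOn_eq g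
    exact (ev0_mkOn (hf.mul hg)).trans (by simp [ev0_mkOn])

lemma evZero_apply (g : On n) : evZero n g = ev0 g := rfl

lemma mem_mId {g : On n} : g ∈ mId n ↔ evZero n g = 0 := by
  obtain ⟨f, hf, rfl⟩ := exists_mkOn_eq g
  rw [evZero_apply, ev0_mkOn]
  exact Germ.coe_eq.trans (by simp [EventuallyEq])

lemma constantCoeff_taylor (g : On n) :
    constantCoeff (taylor n g : MvPowerSeries (Fin n) ℂ) = evZero n g := by
  obtain ⟨F, rfl⟩ := (germ_bijective n).surjective g
  rw [taylor_germ, germ_apply, evZero_apply, ev0_mkOn, evalAt,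
    tsum_eq_single 0 fun α hα => ?_, multiPow_zero, mul_one, coeff_zero_eq_constantCoeff_apply]
  obtain ⟨i, hi⟩ := Finsupp.ne_iff.1 hα
  rw [multiPow, Finset.prod_eq_zero (Finset.mem_univ i) (zero_pow hi), mul_zero]

lemma analyticAt_fderiv_apply {f : (Fin n → ℂ) → ℂ} (hf : AnalyticAt ℂ f 0) (v : Fin n → ℂ) :
    AnalyticAt ℂ (fun x => fderiv ℂ f x v) 0 :=
  ((ContinuousLinearMap.apply ℂ ℂ v).analyticAt _).comp hf.fderiv

lemma pd_mkOn (i : Fin n) {f : (Fin n → ℂ) → ℂ} (hf : AnalyticAt ℂ f 0) :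
    pd i (mkOn f hf) = mkOn _ (analyticAt_fderiv_apply hf (Pi.single i 1)) :=
  mkOn_eq_mkOn.2 <| (Germ.coe_eq.1 (On.rep_spec (mkOn f hf))).fderiv.fun_comp (· (Pi.single i 1))

/-- The partial derivative `∂/∂xᵢ` as a derivation of `𝒪ₙ`. -/
def pdDerivation (i : Fin n) : Derivation ℂ (On n) (On n) where
  toFun := pd i
  map_one_eq_zero' := (pd_mkOn i analyticAt_const).trans <| Subtype.ext <| Germ.coe_eq.2 <|
    .of_forall fun x => by simp
  map_add' f g := by
    obtain ⟨⟨f, hf, rfl⟩, ⟨g, hg, rfl⟩⟩ := exists_mkOn_eq f, exists_mkOn_eq g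
    rw [pd_mkOn, pd_mkOn]
    refine (pd_mkOn i (hf.add hg)).trans <| Subtype.ext <| Germ.coe_eq.2 ?_
    filter_upwards [hf.eventually_analyticAt, hg.eventually_analyticAt] with x hfx hgx
    rw [fderiv_add hfx.differentiableAt hgx.differentiableAt]
    rfl
  map_smul' c f := by
    obtain ⟨f, hf, rfl⟩ := exists_mkOn_eq f
    rw [pd_mkOn]
    refine (pd_mkOn i (hf.const_smul (c := c))).trans <| Subtype.ext <| Germ.coe_eq.2 ?_
    filter_upwards [hf.eventually_analyticAt] with x hfx
    simp [fderiv_const_smul hfx.differentiableAt]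
  leibniz' f g := by
    obtain ⟨⟨f, hf, rfl⟩, ⟨g, hg, rfl⟩⟩ := exists_mkOn_eq f, exists_mkOn_eq g
    change pd i _ = _ * pd i _ + _ * pd i _
    rw [pd_mkOn, pd_mkOn]
    refine (pd_mkOn i (hf.mul hg)).trans <| Subtype.ext <| Germ.coe_eq.2 ?_
    filter_upwards [hf.eventually_analyticAt, hg.eventually_analyticAt] with x hfx hgx
    rw [fderiv_mul hfx.differentiableAt hgx.differentiableAt]
    rfl

lemma pdDerivation_apply (i : Fin n) (g : On n) : pdDerivation i g = pd i g := rfl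

lemma pd_coordG (i j : Fin n) : pd i (coordG j) = if i = j then 1 else 0 := by
  refine (pd_mkOn i _).trans ?_
  split_ifs with h <;> refine Subtype.ext <| Germ.coe_eq.2 <| .of_forall fun x => ?_ <;>
    simp [(hasFDerivAt_apply j x).fderiv, h, eq_comm]

lemma taylor_pd (i : Fin n) (g : On n) :
    (taylor n (pd i g) : MvPowerSeries (Fin n) ℂ) = pderiv ℂ i (taylor n g) := by
  have h := derivation_apply_eq_vectorField (conjDerivation (taylor n) (pdDerivation i))
    (taylor n g)
  simpa [conjDerivation_apply, taylor_symm_coordSeries, pdDerivation_apply, pd_coordG,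
    vectorField_apply, apply_ite] using h

end PartialDerivatives

section LinearParts

/-- The derivation of `𝒪ₙ` given by a vector field. -/
def vfDerivation (δ : Fin n → On n) : Derivation ℂ (On n) (On n) := ∑ i, δ i • pdDerivation i

lemma vfDerivation_apply (δ : Fin n → On n) (g : On n) : vfDerivation δ g = applyVF δ g := by
  change Derivation.coeFnAddMonoidHom _ g = _
  simp [vfDerivation, applyVF, map_sum, pdDerivation_apply]

lemma vfDerivation_coordG (δ : Fin n → On n) (i : Fin n) : vfDerivation δ (coordG i) = δ i := by
  simp [vfDerivation_apply, applyVF, pd_coordG]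

lemma evZero_coordG (i : Fin n) : evZero n (coordG i) = 0 := ev0_mkOn _

lemma exists_eq_algebraMap_evZero_add_sum (g : On n) :
    ∃ h : Fin n → On n, g = algebraMap ℂ _ (evZero n g) + ∑ i, coordG i * h i := by
  obtain ⟨G, hG⟩ := exists_eq_algebraMap_add_sum (taylor n g)
  refine ⟨fun i => (taylor n).symm (G i), (taylor n).injective (hG.trans ?_)⟩
  rw [constantCoeff_taylor]
  simp [← taylor_symm_coordSeries]

lemma eq_sum_ev0_pd_mul {v : On n →ₗ[ℂ] ℂ}
    (hv : ∀ f g, v (f * g) = evZero n f * v g + evZero n g * v f) (g : On n) :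
    v g = ∑ i, ev0 (pd i g) * v (coordG i) := by
  obtain ⟨h, hg⟩ := exists_eq_algebraMap_evZero_add_sum g
  have key (v : On n →ₗ[ℂ] ℂ) (hv : ∀ f g, v (f * g) = evZero n f * v g + evZero n g * v f) :
      v g = ∑ i, evZero n (h i) * v (coordG i) := by
    have h1 : v 1 = 0 := by simpa using hv 1 1
    rw [hg, map_add, Algebra.algebraMap_eq_smul_one, map_smul, h1, smul_zero, zero_add, map_sum]
    simp [hv, evZero_coordG]
  have hpd (i) : evZero n (pd i g) = evZero n (h i) := by
    have := key ((evZero n).toLinearMap ∘ₗ (pdDerivation i : On n →ₗ[ℂ] On n)) fun f g => by simp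
    simpa [pdDerivation_apply, pd_coordG, apply_ite (evZero n)] using this
  simpa only [← evZero_apply, hpd] using key v hv

lemma linPart_coordG : linPart (coordG (n := n)) = 1 := by
  ext i j
  rw [linPart, Matrix.of_apply, pd_coordG, ← evZero_apply, Matrix.one_apply, apply_ite (evZero n),
    map_one, map_zero]

lemma linPart_algHom {Φ : On n →ₐ[ℂ] On n} (hΦ : ∀ g, evZero n (Φ g) = evZero n g)
    (y : Fin n → On n) :
    linPart (fun j => Φ (y j)) = linPart (fun i => Φ (coordG i)) * linPart y := by
  ext i j
  have h := eq_sum_ev0_pd_mul (v := (evZero n).toLinearMap ∘ₗ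
    (pdDerivation i : On n →ₗ[ℂ] On n) ∘ₗ Φ.toLinearMap) (fun f g => by simp [hΦ]) (y j)
  simpa [pdDerivation_apply, evZero_apply, linPart, Matrix.mul_apply, mul_comm] using h

lemma evZero_derivation_apply {D : Derivation ℂ (On n) (On n)}
    (hD : ∀ i, evZero n (D (coordG i)) = 0) (g : On n) : evZero n (D g) = 0 := by
  obtain ⟨h, hg⟩ := exists_eq_algebraMap_evZero_add_sum g
  rw [hg]
  simp [hD, evZero_coordG]

lemma linPart_derivation {D : Derivation ℂ (On n) (On n)}
    (hD : ∀ i, evZero n (D (coordG i)) = 0) (y : Fin n → On n) :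
    linPart (fun j => D (y j)) = linPart (fun i => D (coordG i)) * linPart y := by
  ext i j
  have h := eq_sum_ev0_pd_mul (v := (evZero n).toLinearMap ∘ₗ
    (pdDerivation i : On n →ₗ[ℂ] On n) ∘ₗ (D : On n →ₗ[ℂ] On n))
    (fun f g => by simp [evZero_derivation_apply hD]) (y j)
  simpa [pdDerivation_apply, evZero_apply, linPart, Matrix.mul_apply, mul_comm] using h

lemma linPart_sum_smul_coordG (P : Matrix (Fin n) (Fin n) ℂ) :
    linPart (fun j => ∑ i, P i j • coordG i) = P := by
  ext i j
  change evZero n (pdDerivation i _) = _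
  simp [map_sum, pdDerivation_apply, pd_coordG]

lemma coeff_single_one_taylor (i : Fin n) (g : On n) :
    coeff (Finsupp.single i 1) (taylor n g : MvPowerSeries (Fin n) ℂ) = ev0 (pd i g) := by
  rw [← evZero_apply, ← constantCoeff_taylor, taylor_pd, ← coeff_zero_eq_constantCoeff_apply]
  simp [MvPowerSeries.coeff_pderiv]

end LinearParts

section Charts

lemma analyticAt_comp_toFun (φ : CoordChange n) {f : (Fin n → ℂ) → ℂ} (hf : AnalyticAt ℂ f 0) :
    AnalyticAt ℂ (f ∘ φ.toFun) 0 :=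
  AnalyticAt.comp (φ.map_zero.symm ▸ hf) φ.analyticAt

/-- The inverse change of coordinates. -/
def inverseChange (φ : CoordChange n) : CoordChange n where
  toFun := φ.invFun
  invFun := φ.toFun
  analyticAt := φ.inv_analyticAt
  inv_analyticAt := φ.analyticAt
  map_zero := φ.inv_map_zero
  inv_map_zero := φ.map_zero
  left_inv := φ.right_inv
  right_inv := φ.left_inv

lemma pullback_inverseChange_pullback (φ : CoordChange n) (g : On n) :
    pullback (inverseChange φ) (pullback φ g) = g := by
  obtain ⟨f, hf, rfl⟩ := exists_mkOn_eq g
  exact Subtype.ext <| Germ.coe_eq.2 <| φ.right_inv.mono fun x hx => congrArg f hx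

/-- The pullback along a change of coordinates as an automorphism of `𝒪ₙ`. -/
def pullbackEquiv (φ : CoordChange n) : On n ≃ₐ[ℂ] On n where
  toFun := pullback φ
  invFun := pullback (inverseChange φ)
  left_inv := pullback_inverseChange_pullback φ
  right_inv := pullback_inverseChange_pullback (inverseChange φ)
  map_mul' f g := by
    obtain ⟨⟨f, hf, rfl⟩, ⟨g, hg, rfl⟩⟩ := exists_mkOn_eq f, exists_mkOn_eq g
    rfl
  map_add' f g := by
    obtain ⟨⟨f, hf, rfl⟩, ⟨g, hg, rfl⟩⟩ := exists_mkOn_eq f, exists_mkOn_eq g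
    rfl
  commutes' _ := rfl

lemma evZero_pullback (φ : CoordChange n) (g : On n) : evZero n (pullback φ g) = evZero n g := by
  obtain ⟨f, hf, rfl⟩ := exists_mkOn_eq g
  refine (ev0_mkOn (analyticAt_comp_toFun φ hf)).trans ?_
  exact (congrArg f φ.map_zero).trans (ev0_mkOn hf).symm

lemma ev0_pd (i : Fin n) (g : On n) : ev0 (pd i g) = fderiv ℂ (On.rep g) 0 (Pi.single i 1) :=
  ev0_mkOn _

lemma det_fderiv_rep (y : Fin n → On n) :
    (fderiv ℂ (fun x i => On.rep (y i) x) 0).det = (linPart y).det := by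
  have hy (i) : DifferentiableAt ℂ (On.rep (y i)) 0 := (On.rep_analyticAt (y i)).differentiableAt
  rw [← Matrix.det_transpose, ContinuousLinearMap.det, ← LinearMap.det_toMatrix']
  congr 1
  ext i j
  rw [LinearMap.toMatrix'_apply, Matrix.transpose_apply, linPart, Matrix.of_apply, ev0_pd,
    fderiv_pi hy]
  simp

lemma exists_coordChange_invFun_eq {Y : (Fin n → ℂ) → Fin n → ℂ} (hY : AnalyticAt ℂ Y 0)
    (hY0 : Y 0 = 0) (hdet : (fderiv ℂ Y 0).det ≠ 0) : ∃ φ : CoordChange n, φ.invFun = Y := by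
  let Y' := (fderiv ℂ Y 0).toContinuousLinearEquivOfDetNeZero hdet
  have hY' : fderiv ℂ Y 0 = Y' :=
    (ContinuousLinearMap.coe_toContinuousLinearEquivOfDetNeZero _ hdet).symm
  have hs : HasStrictFDerivAt Y (Y' : (Fin n → ℂ) →L[ℂ] Fin n → ℂ) 0 :=
    hY' ▸ hY.hasStrictFDerivAt
  have hZ : AnalyticAt ℂ (hs.localInverse Y Y' 0) 0 := by
    have h := (hs.toOpenPartialHomeomorph Y).analyticAt_symm'
      hs.mem_toOpenPartialHomeomorph_source hY hY'
    rwa [HasStrictFDerivAt.toOpenPartialHomeomorph_coe, hY0] at h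
  exact ⟨{
    toFun := hs.localInverse Y Y' 0
    invFun := Y
    analyticAt := hZ
    inv_analyticAt := hY
    map_zero := by simpa only [hY0] using hs.localInverse_apply_image
    inv_map_zero := hY0
    left_inv := by simpa only [hY0] using hs.eventually_right_inverse
    right_inv := hs.eventually_left_inverse }, rfl⟩

theorem exists_pullback_eq_coordG {y : Fin n → On n} (hy : ∀ i, evZero n (y i) = 0)
    (hdet : (linPart y).det ≠ 0) : ∃ φ : CoordChange n, ∀ i, pullback φ (y i) = coordG i := by
  obtain ⟨φ, hφ⟩ := exists_coordChange_invFun_eq (Y := fun x i => On.rep (y i) x)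
    (analyticAt_pi_iff.2 fun i => On.rep_analyticAt (y i)) (funext hy)
    (det_fderiv_rep y ▸ hdet)
  refine ⟨φ, fun i => ?_⟩
  rw [← mkOn_rep (y i)]
  exact Subtype.ext <| Germ.coe_eq.2 <| φ.left_inv.mono fun x hx => by
    simpa only [hφ, Function.comp_apply] using congrFun hx i

lemma linPart_pullback (φ : CoordChange n) (y : Fin n → On n) :
    linPart (fun j => pullback φ (y j)) = linPart (fun i => pullback φ (coordG i)) * linPart y :=
  linPart_algHom (Φ := (pullbackEquiv φ).toAlgHom) (evZero_pullback φ) y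

end Charts

section Triangular

variable {K V : Type*} [Field K] [AddCommGroup V] [Module K V]

lemma mkFinSnoc_repr_coe {N : Submodule K V} (b : Module.Basis (Fin n) K N) (y : V)
    (hli : ∀ (c : K), ∀ x ∈ N, c • y + x = 0 → c = 0) (hsp : ∀ z : V, ∃ c : K, z + c • y ∈ N)
    (x : N) : (Module.Basis.mkFinSnoc b y hli hsp).repr x =
      ∑ k, b.repr x k • Finsupp.single (Fin.castSucc k) 1 := by
  have hb (k : Fin n) : (b k : V) = Module.Basis.mkFinSnoc b y hli hsp (Fin.castSucc k) := by
    simp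
  conv_lhs => rw [← b.sum_repr x]
  simp only [Submodule.coe_sum, Submodule.coe_smul, hb, map_sum, map_smul, Module.Basis.repr_self]

/-- The kernel of an eigenvector of the transposed endomorphism is an invariant hyperplane. -/
lemma exists_dual_forall_apply_eq_mul [IsAlgClosed K] [FiniteDimensional K V] [Nontrivial V]
    (f : Module.End K V) : ∃ l : Module.Dual K V, l ≠ 0 ∧ ∃ μ : K, ∀ v, l (f v) = μ * l v := by
  obtain ⟨μ, hμ⟩ := Module.End.exists_eigenvalue (K := K) (V := Module.Dual K V) f.dualMap
  obtain ⟨l, hl⟩ := hμ.exists_hasEigenvector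
  exact ⟨l, hl.2, μ, fun v => by simpa using LinearMap.congr_fun hl.apply_eq_smul v⟩

theorem exists_basis_isUpperTriangular_toMatrix [IsAlgClosed K] [FiniteDimensional K V]
    (f : Module.End K V) (hn : Module.finrank K V = n) :
    ∃ b : Module.Basis (Fin n) K V, (LinearMap.toMatrix b b f).IsUpperTriangular := by
  induction n generalizing V with
  | zero => exact ⟨Module.finBasisOfFinrankEq K V hn, fun i => i.elim0⟩
  | succ n ih =>
    have : Nontrivial V := Module.nontrivial_of_finrank_pos (R := K) (by omega)
    obtain ⟨l, hl, μ, hμ⟩ := exists_dual_forall_apply_eq_mul f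
    have hinv : ∀ v ∈ LinearMap.ker l, f v ∈ LinearMap.ker l := fun v hv => by
      rw [LinearMap.mem_ker, hμ, LinearMap.mem_ker.1 hv, mul_zero]
    have hker : Module.finrank K (LinearMap.ker l) = n := by
      have := Module.Dual.finrank_ker_add_one_of_ne_zero hl
      omega
    obtain ⟨b, hb⟩ := ih (f.restrict hinv) hker
    obtain ⟨y, hy⟩ := LinearMap.surjective hl 1
    refine ⟨.mkFinSnoc b y (fun c x hx hc => ?_) (fun z => ⟨-l z, ?_⟩), fun i j hji => ?_⟩
    · simpa [hy, LinearMap.mem_ker.1 hx] using congrArg l hc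
    · simp [hy]
    · obtain ⟨j, rfl⟩ := Fin.exists_castSucc_eq.2 (hji.trans_le (Fin.le_last i)).ne
      have hfj : f (b j) = (f.restrict hinv (b j) : V) := rfl
      rw [LinearMap.toMatrix_apply, Module.Basis.coe_mkFinSnoc, Fin.snoc_castSucc,
        Function.comp_apply, hfj, mkFinSnoc_repr_coe]
      have hbj (k) (hk : Fin.castSucc k = i) : b.repr (f.restrict hinv (b j)) k = 0 := by
        subst hk
        simpa [LinearMap.toMatrix_apply] using hb (Fin.castSucc_lt_castSucc_iff.1 hji)
      simp only [Finsupp.coe_finsetSum, Finset.sum_apply, Finsupp.smul_apply, Finsupp.single_apply]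
      exact Finset.sum_eq_zero fun k _ => by split_ifs with hk <;> simp [hbj, hk]

theorem exists_isUnit_mul_eq_mul_isUpperTriangular [IsAlgClosed K] (A : Matrix (Fin n) (Fin n) K) :
    ∃ P B : Matrix (Fin n) (Fin n) K, IsUnit P ∧ A * P = P * B ∧ B.IsUpperTriangular := by
  obtain ⟨b, hb⟩ := exists_basis_isUpperTriangular_toMatrix (Matrix.toLin' A)
    (Module.finrank_fin_fun K)
  let c := Pi.basisFun K (Fin n)
  have := c.invertibleToMatrix b
  refine ⟨c.toMatrix b, _, isUnit_of_invertible _, ?_, hb⟩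
  have hA : LinearMap.toMatrix c c (Matrix.toLin' A) = A := LinearMap.toMatrix'_toLin' A
  conv_lhs => rw [← hA]
  rw [basis_toMatrix_mul_linearMap_toMatrix, linearMap_toMatrix_mul_basis_toMatrix]

lemma charpoly_eq_of_isUnit_of_mul_eq_mul {R m : Type*} [CommRing R] [Fintype m] [DecidableEq m]
    {A P B : Matrix m m R} (hP : IsUnit P) (h : A * P = P * B) : A.charpoly = B.charpoly := by
  obtain ⟨P, rfl⟩ := hP
  rw [(Units.eq_mul_inv_iff_mul_eq P).2 h, Matrix.coe_units_inv, Matrix.charpoly_units_conj]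

lemma exists_apply_self_eq_of_charpoly_eq {R m : Type*} [CommRing R] [IsDomain R] [Fintype m]
    [LinearOrder m] {A : Matrix m m R} (hA : A.IsUpperTriangular) {w : m → R}
    (h : A.charpoly = ∏ i, (Polynomial.X - Polynomial.C (w i))) (i : m) : ∃ k, A i i = w k := by
  rw [Matrix.charpoly_of_isUpperTriangular _ hA] at h
  have h := congrArg (Polynomial.eval (A i i)) h
  rw [Polynomial.eval_prod, Polynomial.eval_prod, Finset.prod_eq_zero (Finset.mem_univ i)
    (by simp), eq_comm, Finset.prod_eq_zero_iff] at h
  simpa [sub_eq_zero] using h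

end Triangular

section GeneralizedEigenvectors

lemma map_mem_maxGenEigenspace_iff {K V W : Type*} [CommRing K] [AddCommGroup V] [Module K V]
    [AddCommGroup W] [Module K W] {L : V →ₗ[K] W} (hL : Function.Injective L)
    {f : Module.End K V} {g : Module.End K W} (hfg : ∀ v, L (f v) = g (L v)) {μ : K} {v : V} :
    L v ∈ g.maxGenEigenspace μ ↔ v ∈ f.maxGenEigenspace μ := by
  have h (k : ℕ) : ((g - μ • 1) ^ k) (L v) = L (((f - μ • 1) ^ k) v) :=
    LinearMap.congr_fun (Module.End.commute_pow_left_of_commute (by ext; simp [hfg]) k) v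
  simp only [Module.End.mem_maxGenEigenspace, h, map_eq_zero_iff L hL]

lemma mem_maxGenEigenspace_conjDerivation {R A B : Type*} [CommRing R] [CommRing A] [CommRing B]
    [Algebra R A] [Algebra R B] (e : A ≃ₐ[R] B) (D : Derivation R A A) {μ : R} {b : B} :
    b ∈ Module.End.maxGenEigenspace (conjDerivation e D : B →ₗ[R] B) μ ↔
      e.symm b ∈ Module.End.maxGenEigenspace (D : A →ₗ[R] A) μ :=
  (map_mem_maxGenEigenspace_iff (L := e.symm.toLinearMap) e.symm.injective
    fun b => e.symm_apply_apply (D (e.symm b))).symm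

variable {σ : Type*}

lemma mem_weightFiltration_of_coeff_single_one {F : MvPowerSeries σ ℂ} {u : σ → ℝ} {c : ℝ}
    (h0 : constantCoeff F = 0) (h1 : ∀ i, coeff (Finsupp.single i 1) F ≠ 0 → c ≤ u i)
    (hu : ∀ i, 0 < u i) (hc : ∀ i k, c ≤ u i + u k) : F ∈ weightFiltration u c := by
  intro α hα
  have hα0 : α ≠ 0 := by
    rintro rfl
    exact hα h0
  obtain ⟨i, hi⟩ := Finsupp.ne_iff.1 hα0
  obtain ⟨β, rfl⟩ := le_iff_exists_add.1 (Finsupp.single_le_iff.2 (Nat.one_le_iff_ne_zero.2 hi))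
  rw [map_add, Finsupp.weight_single, one_smul]
  rcases eq_or_ne β 0 with rfl | hβ
  · simpa using h1 i (by simpa using hα)
  · obtain ⟨k, hk⟩ := Finsupp.ne_iff.1 hβ
    obtain ⟨γ, rfl⟩ := le_iff_exists_add.1 (Finsupp.single_le_iff.2 (Nat.one_le_iff_ne_zero.2 hk))
    rw [map_add, Finsupp.weight_single, one_smul]
    linarith [hc i k, weight_nonneg hu γ]

variable [Fintype σ] {D : Derivation ℂ (convergent σ) (convergent σ)}

lemma coe_mem_maxGenEigenspace_vectorField {μ : ℂ} {F : convergent σ} :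
    (F : MvPowerSeries σ ℂ) ∈
        (vectorField fun i => (D (coordSeries σ i) : MvPowerSeries σ ℂ)).maxGenEigenspace μ ↔
      F ∈ Module.End.maxGenEigenspace (D : convergent σ →ₗ[ℂ] convergent σ) μ :=
  map_mem_maxGenEigenspace_iff (L := (convergent σ).val.toLinearMap) Subtype.val_injective
    (derivation_apply_eq_vectorField D)

theorem exists_mem_maxGenEigenspace_sub_coordSeries_mem {u : σ → ℝ} {w : σ → ℝ≥0}
    (hu : ∀ i, 0 < u i) (hw : ∀ i, 0 < w i)
    (hD : ∀ i, (D (coordSeries σ i) - (w i : ℂ) • coordSeries σ i : convergent σ).1 ∈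
      weightFiltration u (u i + 1)) (i : σ) :
    ∃ y ∈ Module.End.maxGenEigenspace (D : convergent σ →ₗ[ℂ] convergent σ) (w i),
      (y - coordSeries σ i : convergent σ).1 ∈ weightFiltration u (u i + 1) := by
  obtain ⟨y, hy, hyD, hyu⟩ := exists_mem_maxGenEigenspace_sub_X_mem hu hw
    (δ := fun i => D (coordSeries σ i)) (fun i =>
      ⟨(D (coordSeries σ i) - (w i : ℂ) • coordSeries σ i).2, hD i⟩) i
  exact ⟨⟨y, hy⟩, coe_mem_maxGenEigenspace_vectorField.1 hyD, hyu⟩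

theorem exists_finset_span_eq_of_derivation_mem {w : σ → ℂ}
    (h0 : ∀ i, constantCoeff (D (coordSeries σ i) : MvPowerSeries σ ℂ) = 0)
    (hD : ∀ i, coordSeries σ i ∈
      Module.End.maxGenEigenspace (D : convergent σ →ₗ[ℂ] convergent σ) (w i))
    {I : Ideal (convergent σ)} (hI : ∀ F ∈ I, D F ∈ I) :
    ∃ S : Finset (convergent σ), Ideal.span (S : Set (convergent σ)) = I ∧
      ∀ F ∈ S, ∃ l, ∀ α, coeff α (F : MvPowerSeries σ ℂ) ≠ 0 → Finsupp.weight w α = l := by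
  refine exists_finset_span_eq_of_le_comap (u := fun _ => 1)
    (δ := fun i => D (coordSeries σ i)) (fun _ => one_pos) (fun i => ?_) (fun i => ?_) ?_
  · exact mem_weightFiltration_of_coeff_single_one (h0 i) (fun _ _ => le_rfl) (fun _ => one_pos)
      fun _ _ => by norm_num
  · exact coe_mem_maxGenEigenspace_vectorField.2 (hD i)
  · rintro _ ⟨F, hF, rfl⟩
    exact ⟨D F, hI F hF, derivation_apply_eq_vectorField D F⟩

end GeneralizedEigenvectors

section GeneralizedEigencoordinates

lemma derivation_eq_of_coordG {D E : Derivation ℂ (On n) (On n)}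
    (h : ∀ i, D (coordG i) = E (coordG i)) : D = E := by
  refine Derivation.ext fun g => (taylor n).injective (Subtype.ext ?_)
  have key (D : Derivation ℂ (On n) (On n)) := derivation_apply_eq_vectorField
    (conjDerivation (taylor n) D) (taylor n g)
  simp only [conjDerivation_apply, AlgEquiv.symm_apply_apply, taylor_symm_coordSeries] at key
  simp only [key, h]

lemma vfDerivation_apply_coordG (D : Derivation ℂ (On n) (On n)) :
    vfDerivation (fun i => D (coordG i)) = D :=
  derivation_eq_of_coordG (vfDerivation_coordG _)

variable {D : Derivation ℂ (On n) (On n)} {φ : CoordChange n} {y : Fin n → On n}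

lemma evZero_conjDerivation_pullbackEquiv (hD : ∀ i, evZero n (D (coordG i)) = 0)
    (φ : CoordChange n) (g : On n) : evZero n (conjDerivation (pullbackEquiv φ) D g) = 0 :=
  (evZero_pullback φ _).trans (evZero_derivation_apply hD _)

lemma linPart_pullback_mul_linPart (hy : ∀ i, pullback φ (y i) = coordG i) :
    linPart (fun i => pullback φ (coordG i)) * linPart y = 1 := by
  rw [← linPart_pullback, ← linPart_coordG]
  simp only [hy]

lemma linPart_mul_linPart_conjDerivation (hD : ∀ i, evZero n (D (coordG i)) = 0)
    (hy : ∀ i, pullback φ (y i) = coordG i) :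
    linPart y * linPart (fun i => conjDerivation (pullbackEquiv φ) D (coordG i)) =
      linPart (fun i => D (coordG i)) * linPart y := by
  have hφ (i) : conjDerivation (pullbackEquiv φ) D (coordG i) = pullback φ (D (y i)) := by
    rw [conjDerivation_apply, (pullbackEquiv φ).symm_apply_eq.2 (hy i).symm]
    rfl
  simp only [hφ]
  rw [linPart_pullback, linPart_derivation hD, ← mul_assoc,
    mul_eq_one_comm.1 (linPart_pullback_mul_linPart hy), one_mul]

lemma charpoly_linPart_conjDerivation (hD : ∀ i, evZero n (D (coordG i)) = 0) (φ : CoordChange n) :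
    (linPart fun i => conjDerivation (pullbackEquiv φ) D (coordG i)).charpoly =
      (linPart fun i => D (coordG i)).charpoly := by
  have hy (i : Fin n) := (pullbackEquiv φ).apply_symm_apply (coordG i)
  exact (charpoly_eq_of_isUnit_of_mul_eq_mul
    (IsUnit.of_mul_eq_one_right _ (linPart_pullback_mul_linPart hy))
    (linPart_mul_linPart_conjDerivation hD hy).symm).symm

lemma exists_isUpperTriangular_linPart_conjDerivation
    (hD : ∀ i, evZero n (D (coordG i)) = 0) : ∃ φ : CoordChange n,
      (linPart fun i => conjDerivation (pullbackEquiv φ) D (coordG i)).IsUpperTriangular := by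
  obtain ⟨P, B, hP, hPB, hB⟩ :=
    exists_isUnit_mul_eq_mul_isUpperTriangular (linPart fun i => D (coordG i))
  have hPy := linPart_sum_smul_coordG P
  obtain ⟨φ, hφ⟩ := exists_pullback_eq_coordG (y := fun j => ∑ i, P i j • coordG i)
    (fun j => by simp [evZero_coordG])
    (by simpa [hPy] using (Matrix.isUnit_iff_isUnit_det P).1 hP)
  refine ⟨φ, ?_⟩
  have h := linPart_mul_linPart_conjDerivation hD hφ
  rw [hPy, hPB] at h
  rwa [hP.mul_left_cancel h]

/-- The weights `2n - i`: every monomial of order at least two, and every coordinate before the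
`j`-th, has weight at least one more than the `j`-th coordinate. -/
def flagWeight (n : ℕ) (i : Fin n) : ℝ := 2 * n - (i : ℝ)

lemma add_one_le_flagWeight (i : Fin n) : n + 1 ≤ flagWeight n i := by
  have : (i : ℝ) + 1 ≤ n := by exact_mod_cast i.2
  rw [flagWeight]
  linarith

lemma flagWeight_pos (i : Fin n) : 0 < flagWeight n i :=
  (Nat.cast_add_one_pos n).trans_le (add_one_le_flagWeight i)

lemma flagWeight_add_one_le_iff {i j : Fin n} : flagWeight n j + 1 ≤ flagWeight n i ↔ i < j := by
  have : (i : ℝ) + 1 ≤ j ↔ i < j := by exact_mod_cast Nat.succ_le_iff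
  rw [← this, flagWeight, flagWeight]
  constructor <;> intro h <;> linarith

lemma flagWeight_add_one_le_add (i j k : Fin n) :
    flagWeight n j + 1 ≤ flagWeight n i + flagWeight n k := by
  have : flagWeight n j ≤ 2 * n := by simp [flagWeight]
  linarith [add_one_le_flagWeight i, add_one_le_flagWeight k]

lemma taylor_mem_weightFiltration_flagWeight_iff {g : On n} {j : Fin n} :
    (taylor n g : MvPowerSeries (Fin n) ℂ) ∈
        weightFiltration (flagWeight n) (flagWeight n j + 1) ↔
      evZero n g = 0 ∧ ∀ i, j ≤ i → ev0 (pd i g) = 0 := by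
  constructor
  · refine fun h => ⟨?_, fun i hij => ?_⟩
    · rw [← constantCoeff_taylor, ← coeff_zero_eq_constantCoeff_apply]
      by_contra h0
      have := h 0 h0
      rw [map_zero] at this
      linarith [flagWeight_pos j]
    · rw [← coeff_single_one_taylor]
      by_contra hi
      have hle := h _ hi
      rw [Finsupp.weight_single, one_smul, flagWeight_add_one_le_iff] at hle
      exact hle.not_ge hij
  · rintro ⟨h0, h1⟩
    refine mem_weightFiltration_of_coeff_single_one ((constantCoeff_taylor g).trans h0)
      (fun i hi => flagWeight_add_one_le_iff.2 (lt_of_not_ge fun hij => hi ?_)) flagWeight_pos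
      fun i k => flagWeight_add_one_le_add i j k
    rw [coeff_single_one_taylor, h1 i hij]

lemma ev0_pd_sub_smul_coordG (g : On n) (c : ℂ) (i j : Fin n) :
    ev0 (pd i (g - c • coordG j)) = ev0 (pd i g) - if i = j then c else 0 := by
  change evZero n (pdDerivation i _) = evZero n (pd i g) - _
  rw [map_sub, Derivation.map_smul, pdDerivation_apply, pdDerivation_apply, pd_coordG]
  split_ifs <;> simp

lemma exists_mem_maxGenEigenspace_sub_coordG {w : Fin n → ℝ≥0} (hw : ∀ i, 0 < w i)
    (hD : ∀ i, evZero n (D (coordG i)) = 0)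
    (hDu : (linPart fun i => D (coordG i)).IsUpperTriangular)
    (hDw : ∀ i, linPart (fun i => D (coordG i)) i i = w i) (j : Fin n) :
    ∃ y ∈ Module.End.maxGenEigenspace (D : On n →ₗ[ℂ] On n) (w j),
      evZero n (y - coordG j) = 0 ∧ ∀ i, j ≤ i → ev0 (pd i (y - coordG j)) = 0 := by
  have hflag (j : Fin n) : (taylor n (D (coordG j) - (w j : ℂ) • coordG j) :
      MvPowerSeries (Fin n) ℂ) ∈ weightFiltration (flagWeight n) (flagWeight n j + 1) := by
    refine taylor_mem_weightFiltration_flagWeight_iff.2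
      ⟨by rw [map_sub, map_smul, hD, evZero_coordG, smul_zero, sub_zero], fun i hij => ?_⟩
    rw [ev0_pd_sub_smul_coordG, sub_eq_zero]
    split_ifs with h
    · rw [h, ← hDw]
      rfl
    · exact hDu (lt_of_le_of_ne' hij h)
  obtain ⟨Y, hY, hYj⟩ := exists_mem_maxGenEigenspace_sub_coordSeries_mem
    (D := conjDerivation (taylor n) D) flagWeight_pos hw (fun i => by
      simpa [conjDerivation_apply, ← taylor_symm_coordSeries, -Complex.coe_smul] using hflag i) j
  refine ⟨_, (mem_maxGenEigenspace_conjDerivation _ _).1 hY,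
    taylor_mem_weightFiltration_flagWeight_iff.1 ?_⟩
  simpa [← taylor_symm_coordSeries] using hYj

lemma det_linPart_of_forall_ev0_pd_sub_coordG
    (hy : ∀ i j, j ≤ i → ev0 (pd i (y j - coordG j)) = 0) : (linPart y).det = 1 := by
  have hlin {i j : Fin n} (hij : j ≤ i) : linPart y i j = if i = j then 1 else 0 := by
    have := hy i j hij
    rwa [← one_smul ℂ (coordG j), ev0_pd_sub_smul_coordG, sub_eq_zero] at this
  rw [Matrix.det_of_isUpperTriangular fun i j (hij : j < i) => by rw [hlin hij.le, if_neg hij.ne']]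
  simp [hlin]

/-- The linear part is first made triangular in a chart `φ`, and the generalized eigenvectors found
there are transported back to the original coordinates. -/
theorem exists_symm_coordG_mem_maxGenEigenspace (hD : ∀ i, evZero n (D (coordG i)) = 0)
    {w : Fin n → ℝ≥0} (hw : ∀ i, 0 < w i) (hDw : (linPart fun i => D (coordG i)).charpoly =
      ∏ i, (Polynomial.X - Polynomial.C (w i : ℂ))) :
    ∃ φ : CoordChange n, ∃ k : Fin n → Fin n, ∀ i, (pullbackEquiv φ).symm (coordG i) ∈
      Module.End.maxGenEigenspace (D : On n →ₗ[ℂ] On n) (w (k i)) := by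
  obtain ⟨φ, hφ⟩ := exists_isUpperTriangular_linPart_conjDerivation hD
  choose k hk using exists_apply_self_eq_of_charpoly_eq hφ
    ((charpoly_linPart_conjDerivation hD φ).trans hDw)
  choose y hyE hy0 hy using exists_mem_maxGenEigenspace_sub_coordG (fun i => hw (k i))
    (fun i => evZero_conjDerivation_pullbackEquiv hD φ _) hφ hk
  let z i := (pullbackEquiv φ).symm (y i)
  have hz (i) : pullback φ (z i) = y i := (pullbackEquiv φ).apply_symm_apply (y i)
  have hz0 (i) : evZero n (z i) = 0 := by
    rw [← evZero_pullback φ, hz]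
    simpa [evZero_coordG] using hy0 i
  have hdet : (linPart z).det ≠ 0 := by
    have h := congrArg Matrix.det (linPart_pullback φ z)
    simp only [hz, Matrix.det_mul] at h
    rw [det_linPart_of_forall_ev0_pd_sub_coordG fun i j => hy j i] at h
    exact right_ne_zero_of_mul_eq_one h.symm
  obtain ⟨ψ, hψ⟩ := exists_pullback_eq_coordG hz0 hdet
  refine ⟨ψ, k, fun i => ?_⟩
  rw [(pullbackEquiv ψ).symm_apply_eq.2 (hψ i).symm]
  exact (mem_maxGenEigenspace_conjDerivation _ _).1 (hyE i)

end GeneralizedEigencoordinates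

section Quasihomogeneous

variable {X : Set (Fin n → ℂ)} {w : Fin n → ℚ}

/-- The Euler vector field `∑ wᵢ xᵢ ∂/∂xᵢ` of a system of weights. -/
def eulerDerivation (w : Fin n → ℂ) : Derivation ℂ (On n) (On n) :=
  vfDerivation fun i => w i • coordG i

lemma eulerDerivation_coordG (w : Fin n → ℂ) (i : Fin n) :
    eulerDerivation w (coordG i) = w i • coordG i :=
  vfDerivation_coordG _ i

lemma evZero_eulerDerivation_coordG (w : Fin n → ℂ) (i : Fin n) :
    evZero n (eulerDerivation w (coordG i)) = 0 := by
  rw [eulerDerivation_coordG, map_smul, evZero_coordG, smul_zero]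

lemma linPart_eulerDerivation (w : Fin n → ℂ) :
    linPart (fun i => eulerDerivation w (coordG i)) = Matrix.diagonal w := by
  rw [← linPart_sum_smul_coordG (Matrix.diagonal w)]
  congr 1 with j
  simp [eulerDerivation_coordG, Matrix.diagonal_apply, ite_smul]

lemma isQH_iff_eulerDerivation {d : ℚ} {g : On n} :
    IsQH n w d g ↔ eulerDerivation (fun i => (w i : ℂ)) g = (d : ℂ) • g := by
  simp only [IsQH, eulerDerivation, vfDerivation_apply, applyVF, smul_mul_assoc]

lemma coeff_taylor_eulerDerivation (w : Fin n → ℂ) (g : On n) (α : Fin n →₀ ℕ) :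
    coeff α (taylor n (eulerDerivation w g) : MvPowerSeries (Fin n) ℂ) =
      Finsupp.weight w α * coeff α (taylor n g : MvPowerSeries (Fin n) ℂ) := by
  have h := derivation_apply_eq_vectorField (conjDerivation (taylor n) (eulerDerivation w))
    (taylor n g)
  simp only [conjDerivation_apply, AlgEquiv.symm_apply_apply, taylor_symm_coordSeries,
    eulerDerivation_coordG, map_smul] at h
  rw [h]
  simp [vectorField_apply, taylor_coordG, coeff_X_mul_pderiv, Finsupp.weight_apply,
    Finsupp.sum_fintype, Finset.sum_mul, mul_assoc, mul_left_comm]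

lemma weight_ratCast (w : Fin n → ℚ) (α : Fin n →₀ ℕ) :
    Finsupp.weight (fun i => (w i : ℂ)) α = (Finsupp.weight w α : ℚ) := by
  simp [Finsupp.weight_apply, Finsupp.sum]

lemma isQH_iff {d : ℚ} {g : On n} : IsQH n w d g ↔
    ∀ α, coeff α (taylor n g : MvPowerSeries (Fin n) ℂ) ≠ 0 → Finsupp.weight w α = d := by
  rw [isQH_iff_eulerDerivation, ← (taylor n).injective.eq_iff, Subtype.ext_iff,
    MvPowerSeries.ext_iff]
  refine forall_congr' fun α => ?_
  rw [coeff_taylor_eulerDerivation, weight_ratCast, map_smul]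
  change _ = (d : ℂ) * coeff α (taylor n g : MvPowerSeries (Fin n) ℂ) ↔ _
  rw [mul_eq_mul_right_iff, Rat.cast_inj, or_iff_not_imp_right]

lemma exists_isQH_of_forall_weight_eq (hw : ∀ i, 0 < w i) {g : On n} (hg : evZero n g = 0)
    {l : ℂ} (h : ∀ α, coeff α (taylor n g : MvPowerSeries (Fin n) ℂ) ≠ 0 →
      Finsupp.weight (fun i => (w i : ℂ)) α = l) : ∃ d, 0 < d ∧ IsQH n w d g := by
  by_cases! hc : ∃ α, coeff α (taylor n g : MvPowerSeries (Fin n) ℂ) ≠ 0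
  · obtain ⟨α, hα⟩ := hc
    have hα0 : α ≠ 0 := by
      rintro rfl
      exact hα ((constantCoeff_taylor g).trans hg)
    refine ⟨Finsupp.weight w α, weight_pos hw hα0, isQH_iff.2 fun β hβ => ?_⟩
    have := (h β hβ).trans (h α hα).symm
    rwa [weight_ratCast, weight_ratCast, Rat.cast_inj] at this
  · exact ⟨1, one_pos, isQH_iff.2 fun α hα => absurd (hc α) hα⟩

lemma derivation_mem_span {R A : Type*} [CommSemiring R] [CommSemiring A] [Algebra R A]
    {D : Derivation R A A} {s : Set A} (hs : ∀ f ∈ s, D f ∈ Ideal.span s) {f : A}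
    (hf : f ∈ Ideal.span s) : D f ∈ Ideal.span s := by
  induction hf using Submodule.span_induction with
  | mem f hf => exact hs f hf
  | zero => simp
  | add f g _ _ hf hg => simpa using add_mem hf hg
  | smul a f hf hDf =>
    rw [smul_eq_mul, Derivation.leibniz]
    exact add_mem (Ideal.mul_mem_left _ _ hDf) (Ideal.mul_mem_right _ _ hf)

theorem exists_mem_thetaX_of_varQH (h : VarQH n X w) :
    ∃ δ ∈ ThetaX n X, (∀ i, δ i ∈ mId n) ∧ EigsEq δ w := by
  obtain ⟨φ, m, g, d, hg, -, hgd⟩ := h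
  let E := eulerDerivation fun i => (w i : ℂ)
  let D := conjDerivation (pullbackEquiv (inverseChange φ)) E
  have hE (i) : evZero n (E (coordG i)) = 0 := evZero_eulerDerivation_coordG _ i
  have hDg (j) : D (g j) = (d j : ℂ) • g j := by
    have h : E (pullback φ (g j)) = _ := isQH_iff_eulerDerivation.1 (hgd j)
    exact (congrArg (pullbackEquiv φ).symm h).trans (by
      rw [map_smul]
      exact congrArg _ ((pullbackEquiv φ).symm_apply_apply (g j)))
  refine ⟨fun i => D (coordG i), fun f hf => ?_,
    fun i => mem_mId.2 (evZero_conjDerivation_pullbackEquiv hE _ _), ?_⟩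
  · rw [← vfDerivation_apply, vfDerivation_apply_coordG]
    rw [← hg] at hf ⊢
    refine derivation_mem_span ?_ hf
    rintro _ ⟨j, rfl⟩
    rw [hDg]
    exact Submodule.smul_of_tower_mem _ _ (Ideal.subset_span ⟨j, rfl⟩)
  · rw [EigsEq, charpoly_linPart_conjDerivation hE, linPart_eulerDerivation,
      Matrix.charpoly_diagonal]

theorem exists_finset_span_eq_of_mem_maxGenEigenspace {D : Derivation ℂ (On n) (On n)}
    {φ : CoordChange n} {w : Fin n → ℂ} (h0 : ∀ i, evZero n (D (coordG i)) = 0)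
    (hD : ∀ i, (pullbackEquiv φ).symm (coordG i) ∈
      Module.End.maxGenEigenspace (D : On n →ₗ[ℂ] On n) (w i))
    {I : Ideal (On n)} (hI : ∀ g ∈ I, D g ∈ I) :
    ∃ S : Finset (On n), Ideal.span (S : Set (On n)) = I ∧ ∀ g ∈ S, ∃ l, ∀ α,
      coeff α (taylor n (pullback φ g) : MvPowerSeries (Fin n) ℂ) ≠ 0 →
        Finsupp.weight w α = l := by
  classical
  let e := (pullbackEquiv φ).trans (taylor n)
  have he (i) : e.symm (coordSeries _ i) = (pullbackEquiv φ).symm (coordG i) :=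
    congrArg (pullbackEquiv φ).symm (taylor_symm_coordSeries i)
  obtain ⟨S, hS, hSw⟩ := exists_finset_span_eq_of_derivation_mem
    (D := conjDerivation e D) (w := w) (I := I.comap e.symm)
    (fun i => (constantCoeff_taylor _).trans <|
      (evZero_pullback φ _).trans (evZero_derivation_apply h0 _))
    (fun i => (mem_maxGenEigenspace_conjDerivation _ _).2 (he i ▸ hD i))
    (fun F hF => by simpa [conjDerivation_apply] using hI _ hF)
  refine ⟨S.image e.symm, ?_, Finset.forall_mem_image.2 fun F hF => ?_⟩
  · rw [Finset.coe_image, ← Ideal.map_span, hS]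
    exact Ideal.map_comap_of_surjective _ e.symm.surjective I
  · have hF' : taylor n (pullback φ (e.symm F)) = F := e.apply_symm_apply F
    rw [hF']
    exact hSw F hF

lemma IX_le_mId (h0 : (0 : Fin n → ℂ) ∈ closure X) : IX n X ≤ mId n := by
  intro g hg
  obtain ⟨f, hf, rfl⟩ := exists_mkOn_eq g
  have hfX : f =ᶠ[𝓝[X] 0] 0 := Germ.coe_eq.1 hg
  rw [mem_mId, evZero_apply, ev0_mkOn]
  have : (𝓝[X] (0 : Fin n → ℂ)).NeBot := mem_closure_iff_nhdsWithin_neBot.1 h0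
  exact tendsto_nhds_unique (hf.continuousAt.mono_left nhdsWithin_le_nhds)
    (tendsto_const_nhds.congr' hfX.symm)

theorem exists_varQH_of_mem_thetaX (hX : IX n X ≤ mId n) {δ : Fin n → On n}
    (hδ : δ ∈ ThetaX n X) (hδ0 : ∀ i, δ i ∈ mId n) (hw : ∀ i, 0 < w i) (hδw : EigsEq δ w) :
    ∃ w' : Fin n → ℚ, (∀ i, 0 < w' i) ∧ VarQH n X w' := by
  lift w to Fin n → ℚ≥0 using fun i => (hw i).le
  have hD (i) : evZero n (vfDerivation δ (coordG i)) = 0 := by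
    rw [vfDerivation_coordG]
    exact mem_mId.1 (hδ0 i)
  have hcast (q : ℚ≥0) : (((q : ℝ≥0) : ℝ) : ℂ) = ((q : ℚ) : ℂ) := by
    push_cast
    rfl
  obtain ⟨φ, k, hφ⟩ := exists_symm_coordG_mem_maxGenEigenspace hD
    (w := fun i => (w i : ℝ≥0)) (fun i => by exact_mod_cast hw i)
    (by simpa only [vfDerivation_coordG, hcast, EigsEq] using hδw)
  obtain ⟨S, hS, hSw⟩ := exists_finset_span_eq_of_mem_maxGenEigenspace hD
    (w := fun i => ((w (k i) : ℚ) : ℂ)) (fun i => hcast (w (k i)) ▸ hφ i)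
    (fun g hg => vfDerivation_apply δ g ▸ hδ g hg)
  have hSd (g : S) : ∃ d, 0 < d ∧ IsQH n (fun i => (w (k i) : ℚ)) d (pullback φ g) := by
    obtain ⟨l, hl⟩ := hSw g g.2
    refine exists_isQH_of_forall_weight_eq (fun i => hw (k i)) ?_ hl
    rw [evZero_pullback]
    exact mem_mId.1 (hX (hS ▸ Ideal.subset_span g.2))
  choose d hd hdS using hSd
  refine ⟨_, fun i => hw (k i), φ, S.card, fun j => S.equivFin.symm j,
    fun j => d (S.equivFin.symm j),
    ?_, fun j => hd _, fun j => hdS _⟩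
  rw [← hS]
  congr 1
  exact (S.equivFin.symm.surjective.range_comp _).trans Subtype.range_coe

end Quasihomogeneous

end QuasiHomogeneous

theorem varQH_iff_exists_logarithmic_general (n : ℕ) (X : Set (Fin n → ℂ))
    (h0 : (0 : Fin n → ℂ) ∈ closure X) :
    (∃ w : Fin n → ℚ, (∀ i, 0 < w i) ∧ VarQH n X w) ↔
      ∃ δ : Fin n → On n, δ ∈ ThetaX n X ∧ (∀ i, δ i ∈ mId n) ∧
        ∃ w : Fin n → ℚ, (∀ i, 0 < w i) ∧ EigsEq δ w := by
  constructor
  · rintro ⟨w, hw, hX⟩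
    obtain ⟨δ, hδ, hδ0, hδw⟩ := QuasiHomogeneous.exists_mem_thetaX_of_varQH hX
    exact ⟨δ, hδ, hδ0, w, hw, hδw⟩
  · rintro ⟨δ, hδ, hδ0, w, hw, hδw⟩
    exact QuasiHomogeneous.exists_varQH_of_mem_thetaX (QuasiHomogeneous.IX_le_mId h0) hδ hδ0 hw hδw

/-- Theorem 3.1 applied to varieties: `X` is quasihomogeneous in an appropriate coordinate
system iff there exists a logarithmic vector field `δ ∈ Θ_X` with `δ(0) = 0` whose
eigenvalues are all positive rational numbers. -/
theorem varQH_iff_exists_logarithmic (n : ℕ) (X : Set (Fin n → ℂ))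
    (hX : IsAnalyticGermAt0 n X) :
    (∃ w : Fin n → ℚ, (∀ i, 0 < w i) ∧ VarQH n X w) ↔
      ∃ δ : Fin n → On n, δ ∈ ThetaX n X ∧ (∀ i, δ i ∈ mId n) ∧
        ∃ w : Fin n → ℚ, (∀ i, 0 < w i) ∧ EigsEq δ w :=
  varQH_iff_exists_logarithmic_general n X (subset_closure hX.1)

end
end

section
/- Let w = (w_1,...,w_n) ∈ ℂ^n, let δ_S = Σ_{i=1}^n w_i x_i ∂_{x_i} on Ô_n = ℂ[[x_1,...,x_n]], let δ_N be a formal vector field with δ_N(0) = 0, nilpotent linear part, and [δ_S, δ_N] = 0, and set δ = δ_S + δ_N. Then for any ideal I ⊆ Ô_n, δ(I) ⊆ I if and only if δ_S(I) ⊆ I and δ_N(I) ⊆ I. -/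
set_option maxHeartbeats 1000000
set_option synthInstance.maxHeartbeats 1000000

noncomputable section

/-- The ring `Ô_n = ℂ[[x₁, …, xₙ]]` of formal power series. -/
abbrev FPS (n : ℕ) : Type := MvPowerSeries (Fin n) ℂ

/-- The `i`-th partial derivative of a formal power series. -/
def fpd {n : ℕ} (i : Fin n) (f : FPS n) : FPS n :=
  fun m => ((m i : ℂ) + 1) * MvPowerSeries.coeff (R := ℂ) (m + Finsupp.single i 1) f

/-- The action `δ(f) = Σ aᵢ ∂f/∂xᵢ` of a formal vector field `δ = Σ aᵢ ∂ᵢ`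
(given by its coefficients `aᵢ ∈ Ô_n`) on a formal power series `f`. -/
def applyPS {n : ℕ} (δ : Fin n → FPS n) (f : FPS n) : FPS n := ∑ i, δ i * fpd i f

/-- The linear part `j¹δ` of a formal vector field, as the matrix `(∂δⱼ/∂xᵢ)(0)`. -/
def linPartPS {n : ℕ} (δ : Fin n → FPS n) : Matrix (Fin n) (Fin n) ℂ :=
  Matrix.of fun i j => MvPowerSeries.coeff (R := ℂ) (Finsupp.single i 1) (δ j)

/-- The semisimple (Euler) vector field `δ_S = Σ wᵢ xᵢ ∂ᵢ` attached to weights `w`. -/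
def eulerPS {n : ℕ} (w : Fin n → ℂ) : Fin n → FPS n :=
  fun j => MvPowerSeries.C (σ := Fin n) (R := ℂ) (w j) * MvPowerSeries.X j

/-- `δ(0) = 0`: all coefficients of the vector field lie in the maximal ideal. -/
def VanishAt0 {n : ℕ} (δ : Fin n → FPS n) : Prop :=
  ∀ j, MvPowerSeries.constantCoeff (σ := Fin n) (R := ℂ) (δ j) = 0

/-- Vanishing of the Lie bracket `[δ, η] = 0` of two formal vector fields,
componentwise: `δ(ηⱼ) - η(δⱼ) = 0` for all `j`. -/
def CommutePS {n : ℕ} (δ η : Fin n → FPS n) : Prop :=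
  ∀ j, applyPS δ (η j) = applyPS η (δ j)

/-!
Ideals are closed in the `𝔪`-adic topology (Krull), so `δ_S f ∈ I` may be checked modulo each power
`𝔪 ^ k`. There `f` may be taken to be a polynomial, hence a sum of eigenvectors of `δ_S` (the
monomials), and `δ_N` is locally nilpotent because it is nilpotent on `𝔪 / 𝔪 ^ 2`. As `δ_N` commutes
with `δ_S`, it preserves the eigenspaces of `δ_S`, so that an eigenvector of `δ_S` for `μ` is a
generalized eigenvector of `δ = δ_S + δ_N` for `μ`. A `δ`-stable subspace contains the generalized
eigencomponents of each of its elements, so `I + 𝔪 ^ k` contains the `δ_S`-components of `f`, and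
therefore `δ_S f`.
-/

open IsLocalRing MvPowerSeries

section LinearAlgebra

variable {K V : Type*} [AddCommGroup V]

-- In `V ⧸ W` this is the independence of the generalized eigenspaces of the induced endomorphism.
lemma mem_of_sum_mem_of_pow_sub_apply_mem [Field K] [Module K V] {T : Module.End K V}
    {W : Submodule K V} (hW : W ∈ T.invtSubmodule) {s : Finset K} {v : K → V}
    (hv : ∀ μ ∈ s, ∃ k : ℕ, ((T - algebraMap K _ μ) ^ k) (v μ) ∈ W) (hsum : ∑ μ ∈ s, v μ ∈ W) :
    ∀ μ ∈ s, v μ ∈ W := by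
  let T' : Module.End K (V ⧸ W) := W.mapQ W T hW
  have intertwine (μ : K) (k : ℕ) (x : V) :
      ((T' - algebraMap K _ μ) ^ k) (W.mkQ x) = W.mkQ (((T - algebraMap K _ μ) ^ k) x) := by
    induction k generalizing x with
    | zero => rfl
    | succ k ih => simp only [pow_succ, Module.End.mul_apply, ← ih]; rfl
  have mem_gen (μ : K) (hμ : μ ∈ s) : W.mkQ (v μ) ∈ T'.maxGenEigenspace μ := by
    obtain ⟨k, hk⟩ := hv μ hμ
    refine (T'.mem_maxGenEigenspace μ _).2 ⟨k, ?_⟩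
    rw [← Algebra.algebraMap_eq_smul_one, intertwine]
    simpa using hk
  have sum_eq_zero : ∑ μ ∈ s, W.mkQ (v μ) = 0 := by
    rw [← map_sum]
    exact (Submodule.Quotient.mk_eq_zero W).2 hsum
  exact fun μ hμ ↦ (Submodule.Quotient.mk_eq_zero W).1 <|
    (iSupIndep_iff_finsetSum_eq_zero_imp_eq_zero _).1 T'.independent_maxGenEigenspace s _
      mem_gen sum_eq_zero μ hμ

lemma pow_add_sub_apply_of_mem_eigenspace [CommRing K] [Module K V] {S N : Module.End K V}
    (hSN : Commute S N) {μ : K} {v : V} (hv : v ∈ S.eigenspace μ) (k : ℕ) :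
    ((S + N - algebraMap K _ μ) ^ k) v = (N ^ k) v := by
  induction k with
  | zero => rfl
  | succ k ih =>
    have hNv : (N ^ k) v ∈ S.eigenspace μ :=
      Module.End.mapsTo_genEigenspace_of_comm (hSN.pow_right k) μ 1 hv
    rw [pow_succ', Module.End.mul_apply, ih, pow_succ', Module.End.mul_apply]
    simp [Module.End.mem_eigenspace_iff.1 hNv]

theorem apply_mem_of_mem_invtSubmodule_add [Field K] [Module K V] {S N : Module.End K V}
    (hSN : Commute S N) {W : Submodule K V} (hW : W ∈ (S + N).invtSubmodule)
    (hN : ∀ v, ∃ k : ℕ, (N ^ k) v ∈ W) {v : V} (hvW : v ∈ W)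
    (hv : v ∈ ⨆ μ, S.eigenspace μ) : S v ∈ W := by
  obtain ⟨u, hu, rfl⟩ := (Submodule.mem_iSup_iff_exists_finsupp _ _).1 hv
  have mem_W : ∀ μ ∈ u.support, u μ ∈ W :=
    mem_of_sum_mem_of_pow_sub_apply_mem hW (fun μ _ ↦ by
      simpa only [pow_add_sub_apply_of_mem_eigenspace hSN (hu μ)] using hN (u μ)) hvW
  rw [Finsupp.sum, map_sum]
  refine W.sum_mem fun μ hμ ↦ ?_
  rw [Module.End.mem_eigenspace_iff.1 (hu μ)]
  exact W.smul_mem μ (mem_W μ hμ)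

end LinearAlgebra

section Iterate

variable {K R : Type*} [CommRing K] [CommRing R] [Algebra K R] {D : Derivation K R R} {J : Ideal R}

lemma derivation_iterate_mul (D : Derivation K R R) (n : ℕ) (f g : R) :
    D^[n] (f * g) =
      ∑ ij ∈ Finset.HasAntidiagonal.antidiagonal n, n.choose ij.1 • (D^[ij.1] f * D^[ij.2] g) := by
  induction n with
  | zero => simp
  | succ n ih =>
    rw [Finset.sum_antidiagonal_choose_succ_nsmul (M := R) (fun i j ↦ D^[i] f * D^[j] g) n]
    simp only [Function.iterate_succ_apply', ih, map_sum, map_nsmul, Derivation.leibniz,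
      smul_eq_mul, smul_add, Finset.sum_add_distrib, add_right_inj]
    refine Finset.sum_congr rfl fun ⟨i, j⟩ hij ↦ ?_
    rw [n.choose_symm_of_eq_add (Finset.HasAntidiagonal.mem_antidiagonal.1 hij).symm, mul_comm]

lemma derivation_iterate_mem (hJ : ∀ f ∈ J, D f ∈ J) (n : ℕ) {f : R} (hf : f ∈ J) :
    D^[n] f ∈ J :=
  Set.MapsTo.iterate (s := (J : Set R)) hJ n hf

lemma derivation_iterate_mul_mem_sup {I I' J' : Ideal R} (hI : ∀ f ∈ I, D f ∈ I)
    (hJ : ∀ f ∈ J, D f ∈ J) {p q : ℕ} (hII' : ∀ f ∈ I, D^[p] f ∈ I')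
    (hJJ' : ∀ f ∈ J, D^[q] f ∈ J') {h : R} (hh : h ∈ I * J) :
    D^[p + q] h ∈ I' * J ⊔ I * J' := by
  have iterate_mem {A A' : Ideal R} (hA : ∀ f ∈ A, D f ∈ A) {m n : ℕ} (hmn : m ≤ n)
      (hAA' : ∀ f ∈ A, D^[m] f ∈ A') {f : R} (hf : f ∈ A) : D^[n] f ∈ A' := by
    rw [← Nat.add_sub_cancel' hmn, Function.iterate_add_apply]
    exact hAA' _ (derivation_iterate_mem hA _ hf)
  induction hh using Submodule.mul_induction_on' with
  | mem_mul_mem f hf g hg =>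
    rw [derivation_iterate_mul]
    refine Ideal.sum_mem _ fun ⟨i, j⟩ hij ↦ nsmul_mem ?_ _
    rw [Finset.HasAntidiagonal.mem_antidiagonal] at hij
    rcases le_or_gt p i with hpi | hip
    · exact Ideal.mem_sup_left <|
        Ideal.mul_mem_mul (iterate_mem hI hpi hII' hf) (derivation_iterate_mem hJ j hg)
    · exact Ideal.mem_sup_right <|
        Ideal.mul_mem_mul (derivation_iterate_mem hI i hf) (iterate_mem hJ (by omega) hJJ' hg)
  | add f _ g _ hf hg =>
    rw [iterate_map_add]
    exact add_mem hf hg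

lemma derivation_mem_pow (hJ : ∀ f ∈ J, D f ∈ J) (k : ℕ) : ∀ f ∈ J ^ k, D f ∈ J ^ k := by
  induction k with
  | zero => simp
  | succ k ih =>
    intro f hf
    rw [pow_succ'] at hf ⊢
    simpa using derivation_iterate_mul_mem_sup (p := 0) (q := 1) hJ ih (fun _ h ↦ h) ih hf

lemma derivation_mem_pow_of_mem_pow_succ (D : Derivation K R R) (J : Ideal R) (k : ℕ) :
    ∀ f ∈ J ^ (k + 1), D f ∈ J ^ k := by
  induction k with
  | zero => simp
  | succ k ih =>
    intro f hf
    rw [pow_succ] at hf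
    induction hf using Submodule.mul_induction_on' with
    | mem_mul_mem f hf g hg =>
      rw [Derivation.leibniz, smul_eq_mul, smul_eq_mul, mul_comm g, pow_succ]
      exact add_mem (Ideal.mul_mem_right _ _ (by rwa [← pow_succ])) (Ideal.mul_mem_mul (ih f hf) hg)
    | add f _ g _ hf hg =>
      rw [map_add]
      exact add_mem hf hg

lemma exists_derivation_iterate_mem_pow_add_two (hJ : ∀ f ∈ J, D f ∈ J) {r : ℕ}
    (hr : ∀ f ∈ J, D^[r] f ∈ J ^ 2) (k : ℕ) : ∃ s, ∀ f ∈ J ^ (k + 1), D^[s] f ∈ J ^ (k + 2) := by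
  induction k with
  | zero => exact ⟨r, by simpa using hr⟩
  | succ k ih =>
    obtain ⟨s, hs⟩ := ih
    refine ⟨r + s, fun f hf ↦ ?_⟩
    rw [pow_succ'] at hf
    have h_iterate := derivation_iterate_mul_mem_sup hJ (derivation_mem_pow hJ _) hr hs hf
    rwa [← pow_add, ← pow_succ', add_comm 2, sup_idem] at h_iterate

lemma exists_derivation_iterate_mem_pow (hD : ∀ f, D f ∈ J) {r : ℕ}
    (hr : ∀ f ∈ J, D^[r] f ∈ J ^ 2) (k : ℕ) : ∃ s, ∀ f, D^[s] f ∈ J ^ (k + 1) := by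
  induction k with
  | zero => exact ⟨1, by simpa using hD⟩
  | succ k ih =>
    obtain ⟨s, hs⟩ := ih
    obtain ⟨t, ht⟩ := exists_derivation_iterate_mem_pow_add_two (fun f _ ↦ hD f) hr k
    exact ⟨t + s, fun f ↦ by simpa only [Function.iterate_add_apply] using ht _ (hs f)⟩

end Iterate

section Generators

variable {K R : Type*} [CommRing K] [CommRing R] [Algebra K R]

lemma exists_sub_algebraMap_mem {J : Ideal R} (hJ : Function.Surjective (algebraMap K (R ⧸ J)))
    (f : R) : ∃ c : K, f - algebraMap K R c ∈ J := by
  obtain ⟨c, hc⟩ := hJ (Ideal.Quotient.mk J f)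
  exact ⟨c, Ideal.Quotient.eq.1 hc.symm⟩

lemma derivation_mem_of_surjective_algebraMap {D : Derivation K R R} {J : Ideal R}
    (hJ : Function.Surjective (algebraMap K (R ⧸ J))) (hD : ∀ f ∈ J, D f ∈ J) (f : R) :
    D f ∈ J := by
  obtain ⟨c, hc⟩ := exists_sub_algebraMap_mem hJ f
  simpa using hD _ hc

lemma derivation_mem_span {D : Derivation K R R} {s : Set R} (hD : ∀ f ∈ s, D f ∈ Ideal.span s) :
    ∀ f ∈ Ideal.span s, D f ∈ Ideal.span s := by
  intro f hf
  induction hf using Submodule.span_induction with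
  | mem f hf => exact hD f hf
  | zero => simp
  | add f g _ _ hf hg => simpa using add_mem hf hg
  | smul a f hf hDf =>
    rw [smul_eq_mul, Derivation.leibniz]
    exact add_mem (Ideal.mul_mem_left _ _ hDf) (Ideal.mul_mem_right _ _ hf)

lemma exists_mem_adjoin_sub_mem_span_pow {s : Set R}
    (hs : Function.Surjective (algebraMap K (R ⧸ Ideal.span s))) (k : ℕ) (f : R) :
    ∃ a ∈ Algebra.adjoin K s, f - a ∈ Ideal.span s ^ k := by
  induction k generalizing f with
  | zero => exact ⟨0, zero_mem _, by simp⟩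
  | succ k ih =>
    obtain ⟨c, hc⟩ := exists_sub_algebraMap_mem hs f
    obtain ⟨m, g, y, hgy⟩ := Submodule.mem_span_set'.1 hc
    choose a ha hga using fun i ↦ ih (g i)
    refine ⟨algebraMap K R c + ∑ i, a i * y i, add_mem (algebraMap_mem _ c) <|
      sum_mem fun i _ ↦ mul_mem (ha i) (Algebra.subset_adjoin (y i).2), ?_⟩
    have hfa : f - (algebraMap K R c + ∑ i, a i * y i) = ∑ i, (g i - a i) * y i := by
      rw [← sub_sub, ← hgy, ← Finset.sum_sub_distrib]
      simp only [smul_eq_mul, sub_mul]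
    rw [hfa, pow_succ]
    exact Ideal.sum_mem _ fun i _ ↦ Ideal.mul_mem_mul (hga i) (Ideal.subset_span (y i).2)

theorem derivation_ext_of_eqOn {s : Set R} [IsHausdorff (Ideal.span s) R]
    (hs : Function.Surjective (algebraMap K (R ⧸ Ideal.span s))) {D₁ D₂ : Derivation K R R}
    (h : Set.EqOn D₁ D₂ s) : D₁ = D₂ := by
  ext f
  refine (IsHausdorff.eq_iff_smodEq (I := Ideal.span s)).2 fun k ↦ ?_
  obtain ⟨a, ha, hfa⟩ := exists_mem_adjoin_sub_mem_span_pow hs (k + 1) f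
  have hDa : (D₁ - D₂) (f - a) = D₁ f - D₂ f := by
    rw [map_sub, Derivation.sub_apply, Derivation.sub_apply, Derivation.eqOn_adjoin h ha, sub_self,
      sub_zero]
  rw [SModEq.sub_mem, smul_eq_mul, Ideal.mul_top, ← hDa]
  exact derivation_mem_pow_of_mem_pow_succ _ _ k _ hfa

lemma mem_of_forall_mem_sup_pow {I J : Ideal R} [IsHausdorff J (R ⧸ I)] {f : R}
    (hf : ∀ k, f ∈ I ⊔ J ^ k) : f ∈ I := by
  refine Ideal.Quotient.eq_zero_iff_mem.1 <| IsHausdorff.haus ‹_› _ fun k ↦ ?_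
  obtain ⟨g, hg, h, hh, rfl⟩ := Submodule.mem_sup.1 (hf k)
  rw [SModEq.zero, map_add, Ideal.Quotient.eq_zero_iff_mem.2 hg, zero_add]
  have hh_one : Ideal.Quotient.mk I h = h • (1 : R ⧸ I) := by
    rw [Algebra.smul_def, mul_one, Ideal.Quotient.algebraMap_eq]
  rw [hh_one]
  exact Submodule.smul_mem_smul hh Submodule.mem_top

end Generators

section LinearPart

open Matrix

variable {K R ι : Type*} [CommRing K] [CommRing R] [Algebra K R] [Fintype ι] {x : ι → R}

lemma exists_sub_linearCombination_mem_sq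
    (hx : Function.Surjective (algebraMap K (R ⧸ Ideal.span (Set.range x)))) {f : R}
    (hf : f ∈ Ideal.span (Set.range x)) :
    ∃ c : ι → K, f - Fintype.linearCombination K x c ∈ Ideal.span (Set.range x) ^ 2 := by
  obtain ⟨g, rfl⟩ := Ideal.mem_span_range_iff_exists_fun.1 hf
  choose c hc using fun i ↦ exists_sub_algebraMap_mem hx (g i)
  refine ⟨c, ?_⟩
  simp only [Fintype.linearCombination_apply, Algebra.smul_def, ← Finset.sum_sub_distrib, ← sub_mul]
  rw [pow_two]
  exact Ideal.sum_mem _ fun i _ ↦ Ideal.mul_mem_mul (hc i) (Ideal.subset_span ⟨i, rfl⟩)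

lemma derivation_iterate_linearCombination_sub_mem [DecidableEq ι] {D : Derivation K R R}
    {J : Ideal R} (hJ : ∀ f ∈ J, D f ∈ J) {A : Matrix ι ι K}
    (hA : ∀ j, D (x j) - Fintype.linearCombination K x (A.col j) ∈ J) (s : ℕ) (c : ι → K) :
    D^[s] (Fintype.linearCombination K x c) - Fintype.linearCombination K x ((A ^ s) *ᵥ c) ∈ J := by
  have apply_sub_mem (c : ι → K) :
      D (Fintype.linearCombination K x c) - Fintype.linearCombination K x (A *ᵥ c) ∈ J := by
    rw [mulVec_eq_sum, map_sum, Fintype.linearCombination_apply, map_sum, ← Finset.sum_sub_distrib]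
    simp only [op_smul_eq_smul, map_smul, Derivation.map_smul, ← smul_sub]
    exact Ideal.sum_mem _ fun j _ ↦ Submodule.smul_of_tower_mem J (c j) (hA j)
  induction s with
  | zero => simp
  | succ s ih =>
    rw [Function.iterate_succ_apply', pow_succ', ← mulVec_mulVec]
    simpa using add_mem (hJ _ ih) (apply_sub_mem ((A ^ s) *ᵥ c))

theorem exists_derivation_iterate_mem_sq [DecidableEq ι]
    (hx : Function.Surjective (algebraMap K (R ⧸ Ideal.span (Set.range x)))) {D : Derivation K R R}
    (hD : ∀ f ∈ Ideal.span (Set.range x), D f ∈ Ideal.span (Set.range x)) {A : Matrix ι ι K}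
    (hA : ∀ j, D (x j) - Fintype.linearCombination K x (A.col j) ∈ Ideal.span (Set.range x) ^ 2)
    (hnil : IsNilpotent A) :
    ∃ r, ∀ f ∈ Ideal.span (Set.range x), D^[r] f ∈ Ideal.span (Set.range x) ^ 2 := by
  obtain ⟨r, hr⟩ := hnil
  refine ⟨r, fun f hf ↦ ?_⟩
  have hD2 := derivation_mem_pow hD 2
  obtain ⟨c, hc⟩ := exists_sub_linearCombination_mem_sq hx hf
  have h_linear : D^[r] (Fintype.linearCombination K x c) ∈ Ideal.span (Set.range x) ^ 2 := by
    simpa [hr] using derivation_iterate_linearCombination_sub_mem hD2 hA r c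
  simpa [iterate_map_sub] using add_mem (derivation_iterate_mem hD2 r hc) h_linear

end LinearPart

section Eigenspace

variable {K R : Type*} [CommRing K] [CommRing R] [Algebra K R] {D : Derivation K R R}

lemma mul_mem_iSup_eigenspace {f g : R} (hf : f ∈ ⨆ μ, Module.End.eigenspace (D : R →ₗ[K] R) μ)
    (hg : g ∈ ⨆ μ, Module.End.eigenspace (D : R →ₗ[K] R) μ) :
    f * g ∈ ⨆ μ, Module.End.eigenspace (D : R →ₗ[K] R) μ := by
  have eigenspace_mul_le (μ ν : K) :
      Module.End.eigenspace (D : R →ₗ[K] R) μ * Module.End.eigenspace (D : R →ₗ[K] R) ν ≤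
        Module.End.eigenspace (D : R →ₗ[K] R) (μ + ν) := by
    refine Submodule.mul_le.2 fun f hf g hg ↦ ?_
    simp only [Module.End.mem_eigenspace_iff, Derivation.coeFn_coe] at hf hg ⊢
    rw [Derivation.leibniz, hf, hg]
    simp only [smul_eq_mul, Algebra.smul_def, map_add]
    ring
  have hfg := Submodule.mul_mem_mul hf hg
  simp only [Submodule.iSup_mul, Submodule.mul_iSup] at hfg
  exact (iSup_le fun μ ↦ iSup_le fun ν ↦ (eigenspace_mul_le _ _).trans (le_iSup _ _)) hfg

lemma adjoin_le_iSup_eigenspace {s : Set R} (hs : ∀ x ∈ s, ∃ μ : K, D x = μ • x) :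
    Subalgebra.toSubmodule (Algebra.adjoin K s) ≤
      ⨆ μ, Module.End.eigenspace (D : R →ₗ[K] R) μ := by
  intro a ha
  induction ha using Algebra.adjoin_induction with
  | mem x hx =>
    obtain ⟨μ, hμ⟩ := hs x hx
    exact Submodule.mem_iSup_of_mem μ (Module.End.mem_eigenspace_iff.2 hμ)
  | algebraMap c => exact Submodule.mem_iSup_of_mem 0 (Module.End.mem_eigenspace_iff.2 (by simp))
  | add _ _ _ _ hf hg => exact add_mem hf hg
  | mul _ _ _ _ hf hg => exact mul_mem_iSup_eigenspace hf hg

end Eigenspace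

section Invariance

variable {K R : Type*} [Field K] [CommRing R] [Algebra K R] {s : Set R} {DS DN : Derivation K R R}
  {I : Ideal R}

lemma derivation_mem_sup_span_pow (hK : Function.Surjective (algebraMap K (R ⧸ Ideal.span s)))
    (hS : ∀ x ∈ s, ∃ μ : K, DS x = μ • x) (hN : ∀ f ∈ Ideal.span s, DN f ∈ Ideal.span s)
    (hN_nil : ∃ r, ∀ f ∈ Ideal.span s, DN^[r] f ∈ Ideal.span s ^ 2) (hSN : ⁅DS, DN⁆ = 0)
    (hI : ∀ f ∈ I, (DS + DN) f ∈ I) (k : ℕ) {f : R} (hf : f ∈ I) : DS f ∈ I ⊔ Ideal.span s ^ k := by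
  let S : Module.End K R := DS
  let N : Module.End K R := DN
  let W : Submodule K R := (I ⊔ Ideal.span s ^ k).restrictScalars K
  have hcomm : Commute S N := by
    rw [commute_iff_lie_eq, ← Derivation.commutator_coe_linear_map, hSN]
    rfl
  have hS_pow := derivation_mem_pow (derivation_mem_span fun x hx ↦ by
    obtain ⟨μ, hμ⟩ := hS x hx
    exact hμ ▸ Submodule.smul_of_tower_mem _ μ (Ideal.subset_span hx)) k
  have hN_pow := derivation_mem_pow hN k
  have hW : W ∈ (S + N).invtSubmodule := by
    intro f hf
    obtain ⟨g, hg, u, hu, rfl⟩ := Submodule.mem_sup.1 hf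
    refine Submodule.mem_sup.2 ⟨_, hI g hg, _, add_mem (hS_pow u hu) (hN_pow u hu), ?_⟩
    exact (map_add (DS + DN) g u).symm
  have hN_iterate (g : R) : ∃ t : ℕ, (N ^ t) g ∈ W := by
    obtain ⟨r, hr⟩ := hN_nil
    obtain ⟨t, ht⟩ :=
      exists_derivation_iterate_mem_pow (derivation_mem_of_surjective_algebraMap hK hN) hr k
    refine ⟨t, Ideal.mem_sup_right (Ideal.pow_le_pow_right k.le_succ ?_)⟩
    rw [Module.End.pow_apply]
    exact ht g
  obtain ⟨a, ha, hfa⟩ := exists_mem_adjoin_sub_mem_span_pow hK k f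
  have haW : a ∈ W := by
    simpa using W.sub_mem (Ideal.mem_sup_left hf) (Ideal.mem_sup_right hfa)
  have hSa : DS a ∈ I ⊔ Ideal.span s ^ k :=
    apply_mem_of_mem_invtSubmodule_add hcomm hW hN_iterate haW (adjoin_le_iSup_eigenspace hS ha)
  simpa using add_mem hSa (Ideal.mem_sup_right (hS_pow _ hfa))

theorem invariant_ideal_iff_semisimple_general [IsHausdorff (Ideal.span s) (R ⧸ I)]
    (hK : Function.Surjective (algebraMap K (R ⧸ Ideal.span s)))
    (hS : ∀ x ∈ s, ∃ μ : K, DS x = μ • x) (hN : ∀ f ∈ Ideal.span s, DN f ∈ Ideal.span s)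
    (hN_nil : ∃ r, ∀ f ∈ Ideal.span s, DN^[r] f ∈ Ideal.span s ^ 2) (hSN : ⁅DS, DN⁆ = 0) :
    (∀ f ∈ I, (DS + DN) f ∈ I) ↔ (∀ f ∈ I, DS f ∈ I) ∧ (∀ f ∈ I, DN f ∈ I) := by
  refine ⟨fun hI ↦ ?_, fun ⟨hSI, hNI⟩ f hf ↦ add_mem (hSI f hf) (hNI f hf)⟩
  have hSI : ∀ f ∈ I, DS f ∈ I := fun f hf ↦
    mem_of_forall_mem_sup_pow fun k ↦ derivation_mem_sup_span_pow hK hS hN hN_nil hSN hI k hf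
  exact ⟨hSI, fun f hf ↦ by simpa using sub_mem (hI f hf) (hSI f hf)⟩

end Invariance

section PowerSeries

variable {σ K : Type*}

lemma mem_span_X_image_of_coeff_eq_zero [CommRing K] (s : Finset σ) {f : MvPowerSeries σ K}
    (hf : ∀ d : σ →₀ ℕ, (∀ i ∈ s, d i = 0) → coeff d f = 0) :
    f ∈ Ideal.span (X '' (s : Set σ)) := by
  classical
  induction s using Finset.induction_on generalizing f with
  | empty => simp [MvPowerSeries.ext fun d ↦ (hf d (by simp)).trans (coeff_zero d).symm]
  | insert i s _ ih =>
    let f₀ : MvPowerSeries σ K := fun d ↦ if d i = 0 then coeff d f else 0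
    have hf₀ (d : σ →₀ ℕ) : coeff d f₀ = if d i = 0 then coeff d f else 0 := rfl
    have hf₀_mem : f₀ ∈ Ideal.span (X '' (s : Set σ)) := ih fun d hd ↦ by
      rw [hf₀]
      split_ifs with hdi
      · exact hf d (Finset.forall_mem_insert _ _ _ |>.2 ⟨hdi, hd⟩)
      · rfl
    have hX_dvd : X i ∣ f - f₀ := X_dvd_iff.2 fun d hd ↦ by simp [hf₀, hd]
    rw [← sub_add_cancel f f₀]
    refine add_mem (Ideal.mem_of_dvd _ hX_dvd (Ideal.subset_span ⟨i, by simp, rfl⟩)) ?_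
    exact Ideal.span_mono (Set.image_mono (by simp)) hf₀_mem

lemma span_range_X_eq_ker_constantCoeff [CommRing K] [Finite σ] :
    Ideal.span (Set.range (X : σ → MvPowerSeries σ K)) = RingHom.ker constantCoeff := by
  have := Fintype.ofFinite σ
  refine le_antisymm (Ideal.span_le.2 ?_) fun f hf ↦ ?_
  · rintro _ ⟨i, rfl⟩
    exact constantCoeff_X i
  · simpa using mem_span_X_image_of_coeff_eq_zero Finset.univ fun d hd ↦ by
      rwa [show d = 0 by ext i; simpa using hd i]

lemma surjective_algebraMap_quotient_span_range_X [CommRing K] [Finite σ] :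
    Function.Surjective
      (algebraMap K (MvPowerSeries σ K ⧸ Ideal.span (Set.range (X : σ → MvPowerSeries σ K)))) := by
  intro f
  obtain ⟨f, rfl⟩ := Ideal.Quotient.mk_surjective f
  refine ⟨constantCoeff f, Ideal.Quotient.eq.2 ?_⟩
  simp [span_range_X_eq_ker_constantCoeff, RingHom.mem_ker, ← c_eq_algebraMap]

lemma span_range_X_eq_maximalIdeal [Field K] [Finite σ] :
    Ideal.span (Set.range (X : σ → MvPowerSeries σ K)) = maximalIdeal (MvPowerSeries σ K) := by
  ext f
  rw [span_range_X_eq_ker_constantCoeff, RingHom.mem_ker, mem_maximalIdeal, mem_nonunits_iff,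
    isUnit_iff_constantCoeff, isUnit_iff_ne_zero, not_not]

lemma isHausdorff_span_range_X [Field K] [Finite σ] (M : Type*) [AddCommGroup M]
    [Module (MvPowerSeries σ K) M] [Module.Finite (MvPowerSeries σ K) M] :
    IsHausdorff (Ideal.span (Set.range (X : σ → MvPowerSeries σ K))) M := by
  rw [span_range_X_eq_maximalIdeal]
  infer_instance

lemma coeff_single_eq_zero_of_mem_sq [CommRing K] [Finite σ] {f : MvPowerSeries σ K}
    (hf : f ∈ Ideal.span (Set.range (X : σ → MvPowerSeries σ K)) ^ 2) (i : σ) :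
    coeff (Finsupp.single i 1) f = 0 := by
  have hdf := derivation_mem_pow_of_mem_pow_succ (pderiv K i) _ 1 f hf
  rw [pow_one, span_range_X_eq_ker_constantCoeff, RingHom.mem_ker,
    ← coeff_zero_eq_constantCoeff_apply, coeff_pderiv] at hdf
  simpa using hdf

lemma sub_linearCombination_X_mem_sq [CommRing K] [Fintype σ] {f : MvPowerSeries σ K}
    (hf : constantCoeff f = 0) :
    f - Fintype.linearCombination K (X : σ → MvPowerSeries σ K)
        (fun i ↦ coeff (Finsupp.single i 1) f) ∈
      Ideal.span (Set.range (X : σ → MvPowerSeries σ K)) ^ 2 := by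
  classical
  rw [← RingHom.mem_ker, ← span_range_X_eq_ker_constantCoeff] at hf
  obtain ⟨c, hc⟩ := exists_sub_linearCombination_mem_sq (x := (X : σ → MvPowerSeries σ K))
    surjective_algebraMap_quotient_span_range_X hf
  have hcoeff (i : σ) : coeff (Finsupp.single i 1) f = c i := by
    have hcoeff_sub := coeff_single_eq_zero_of_mem_sq hc i
    rw [map_sub, sub_eq_zero] at hcoeff_sub
    simp [hcoeff_sub, Fintype.linearCombination_apply, coeff_index_single_X]
  rwa [funext hcoeff]

/-- The derivation `∑ aᵢ ∂ᵢ` of `K[[X]]` given by a formal vector field with coefficients `a`;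
it realizes `applyPS a` as a bundled `Derivation`, over any coefficient ring. -/
def vectorFieldDerivation (K : Type*) [CommRing K] [Fintype σ] (a : σ → MvPowerSeries σ K) :
    Derivation K (MvPowerSeries σ K) (MvPowerSeries σ K) :=
  ∑ i, a i • pderiv K i

lemma vectorFieldDerivation_apply [CommRing K] [Fintype σ] (a : σ → MvPowerSeries σ K)
    (f : MvPowerSeries σ K) : vectorFieldDerivation K a f = ∑ i, a i * pderiv K i f := by
  rw [vectorFieldDerivation, ← Derivation.coeFnAddMonoidHom_apply, map_sum, Finset.sum_apply]
  rfl

lemma vectorFieldDerivation_X [CommRing K] [Fintype σ] (a : σ → MvPowerSeries σ K) (j : σ) :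
    vectorFieldDerivation K a (X j) = a j := by
  classical
  simp [vectorFieldDerivation_apply, pderiv_X, Pi.single_apply]

lemma vectorFieldDerivation_add [CommRing K] [Fintype σ] (a b : σ → MvPowerSeries σ K) :
    vectorFieldDerivation K (a + b) = vectorFieldDerivation K a + vectorFieldDerivation K b := by
  simp [vectorFieldDerivation, add_smul, Finset.sum_add_distrib]

end PowerSeries

section FormalVectorField

variable {n : ℕ} {δ η : Fin n → FPS n}

lemma applyPS_eq_vectorFieldDerivation (δ : Fin n → FPS n) (f : FPS n) :
    applyPS δ f = vectorFieldDerivation ℂ δ f := by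
  have fpd_eq_pderiv (i : Fin n) : fpd i f = pderiv ℂ i f := by
    ext d
    rw [coeff_pderiv, mul_comm]
    rfl
  simp only [vectorFieldDerivation_apply, applyPS, fpd_eq_pderiv]

lemma VanishAt0.vectorFieldDerivation_mem (hδ : VanishAt0 δ) :
    ∀ f ∈ Ideal.span (Set.range (X : Fin n → FPS n)),
      vectorFieldDerivation ℂ δ f ∈ Ideal.span (Set.range (X : Fin n → FPS n)) :=
  derivation_mem_span <| Set.forall_mem_range.2 fun i ↦ by
    rw [vectorFieldDerivation_X, span_range_X_eq_ker_constantCoeff]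
    exact hδ i

lemma VanishAt0.exists_iterate_mem_sq (hδ : VanishAt0 δ) (hnil : IsNilpotent (linPartPS δ)) :
    ∃ r, ∀ f ∈ Ideal.span (Set.range (X : Fin n → FPS n)),
      (vectorFieldDerivation ℂ δ)^[r] f ∈ Ideal.span (Set.range (X : Fin n → FPS n)) ^ 2 := by
  refine exists_derivation_iterate_mem_sq (x := (X : Fin n → FPS n))
    surjective_algebraMap_quotient_span_range_X hδ.vectorFieldDerivation_mem (fun j ↦ ?_) hnil
  rw [vectorFieldDerivation_X]
  exact sub_linearCombination_X_mem_sq (hδ j)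

lemma CommutePS.lie_eq_zero (h : CommutePS δ η) :
    ⁅vectorFieldDerivation ℂ δ, vectorFieldDerivation ℂ η⁆ = 0 := by
  have := isHausdorff_span_range_X (σ := Fin n) (K := ℂ) (FPS n)
  refine derivation_ext_of_eqOn (s := Set.range (X : Fin n → FPS n))
    surjective_algebraMap_quotient_span_range_X (Set.forall_mem_range.2 fun j ↦ ?_)
  simpa [Derivation.commutator_apply, vectorFieldDerivation_X, sub_eq_zero,
    applyPS_eq_vectorFieldDerivation] using h j

lemma vectorFieldDerivation_eulerPS_X (w : Fin n → ℂ) (i : Fin n) :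
    vectorFieldDerivation ℂ (eulerPS w) (X i) = w i • X i := by
  rw [vectorFieldDerivation_X, eulerPS, smul_eq_C_mul]

end FormalVectorField

/-- Theorem 3.1 (c): for `δ = δ_S + δ_N` in Poincaré–Dulac normal form, an ideal
`I ⊆ Ô_n` is `δ`-invariant iff it is both `δ_S`-invariant and `δ_N`-invariant. -/
theorem invariant_ideal_iff_semisimple (n : ℕ) (w : Fin n → ℂ) (δN : Fin n → FPS n)
    (hδN0 : VanishAt0 δN) (hnil : IsNilpotent (linPartPS δN))
    (hcomm : CommutePS (eulerPS w) δN) (I : Ideal (FPS n)) :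
    (∀ g ∈ I, applyPS (eulerPS w + δN) g ∈ I) ↔
      ((∀ g ∈ I, applyPS (eulerPS w) g ∈ I) ∧ (∀ g ∈ I, applyPS δN g ∈ I)) := by
  have := isHausdorff_span_range_X (σ := Fin n) (K := ℂ) (FPS n ⧸ I)
  simp only [applyPS_eq_vectorFieldDerivation, vectorFieldDerivation_add]
  exact invariant_ideal_iff_semisimple_general (s := Set.range (X : Fin n → FPS n))
    surjective_algebraMap_quotient_span_range_X
    (Set.forall_mem_range.2 fun i ↦ ⟨w i, vectorFieldDerivation_eulerPS_X w i⟩)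
    hδN0.vectorFieldDerivation_mem (hδN0.exists_iterate_mem_sq hnil) hcomm.lie_eq_zero

end
end
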